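/- arXiv:1911.04807 — 2 statements merged into one kernel-verified Lean document; each statement's English description precedes it below -/
import Mathlib

section
/- Let 1 < p < ∞ and p* = p/(p−1). Assume (X, d, μ) is complete, μ is Borel-regular and doubling, and X supports a weak 1-Poincaré inequality. Let G ⊂ X be a domain with compact closure and E, F ⊂ G disjoint continua each containing at least two points. If mod_{p*} Γ*(E, F; G) = ∞, then mod_p Γ(E, F; G) = 0. -/
open MeasureTheory Metric Set ENNReal NNReal Filter Topology

noncomputable section

variable {X : Type*}

/-- A measure is Borel-regular: every set is contained in a Borel set of the same measure. -/
def BorelRegular [MeasurableSpace X] (μ : Measure X) : Prop :=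
  ∀ s : Set X, ∃ t : Set X, MeasurableSet t ∧ s ⊆ t ∧ μ t = μ s

/-- μ is doubling with constant `Cμ`: `0 < μ(2B) ≤ Cμ μ(B) < ∞` for all balls. -/
def IsDoublingWith [PseudoMetricSpace X] [MeasurableSpace X] (μ : Measure X) (Cμ : ℝ) : Prop :=
  ∀ (x : X) (r : ℝ), 0 < r →
    0 < μ (ball x (2 * r)) ∧ μ (ball x (2 * r)) ≤ ENNReal.ofReal Cμ * μ (ball x r) ∧
      μ (ball x r) < ⊤

/-- `ρ` is an upper gradient of `u` on the set `V`: for every `L ≥ 0` and every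
1-Lipschitz curve `γ : [0, L] → V`, `|u(γ L) − u(γ 0)| ≤ ∫₀^L ρ(γ t) dt`. -/
def IsUpperGradientOn [PseudoMetricSpace X] (u : X → ℝ) (ρ : X → ℝ≥0∞) (V : Set X) : Prop :=
  ∀ L : ℝ, 0 ≤ L → ∀ γ : ℝ → X, LipschitzOnWith 1 γ (Icc 0 L) → MapsTo γ (Icc 0 L) V →
    ENNReal.ofReal |u (γ L) - u (γ 0)| ≤ ∫⁻ t in Icc 0 L, ρ (γ t)

/-- `X` supports a weak `p`-Poincaré inequality with constants `CP`, `lP`. -/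
def WeakPoincare [PseudoMetricSpace X] [MeasurableSpace X] (μ : Measure X)
    (p CP lP : ℝ) : Prop :=
  ∀ u : X → ℝ, LocallyIntegrable u μ →
    ∀ ρ : X → ℝ≥0∞, Measurable ρ → IsUpperGradientOn u ρ univ →
    ∀ (x : X) (r : ℝ), 0 < r →
      ENNReal.ofReal (⨍ y in ball x r, |u y - ⨍ z in ball x r, u z ∂μ| ∂μ) ≤
        ENNReal.ofReal (CP * diam (ball x r)) *
          (⨍⁻ y in ball x (lP * r), ρ y ^ p ∂μ) ^ (1 / p)

/-- `X` is Ahlfors `Q`-regular with constants `0 < a ≤ A`. -/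
def AhlforsRegular [PseudoMetricSpace X] [MeasurableSpace X] (μ : Measure X)
    (Q a A : ℝ) : Prop :=
  0 < a ∧ a ≤ A ∧ ∀ (x : X) (r : ℝ), 0 < r → ENNReal.ofReal r < EMetric.diam (univ : Set X) →
    ENNReal.ofReal (a * r ^ Q) ≤ μ (ball x r) ∧ μ (ball x r) ≤ ENNReal.ofReal (A * r ^ Q)

/-- `ρ` is admissible for a family `M` of Borel measures: `∫ ρ dν ≥ 1` for all `ν ∈ M`. -/
def Admissible [MeasurableSpace X] (M : Set (Measure X)) (ρ : X → ℝ≥0∞) : Prop :=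
  Measurable ρ ∧ ∀ ν ∈ M, 1 ≤ ∫⁻ x, ρ x ∂ν

/-- The `q`-modulus of a family of Borel measures. -/
def modulus [MeasurableSpace X] (μ : Measure X) (q : ℝ) (M : Set (Measure X)) : ℝ≥0∞ :=
  ⨅ (ρ : X → ℝ≥0∞) (_ : Admissible M ρ), ∫⁻ x, ρ x ^ q ∂μ

/-- `ρ` is `q`-weakly admissible for `M`. -/
def WeaklyAdmissible [MeasurableSpace X] (μ : Measure X) (q : ℝ) (M : Set (Measure X))
    (ρ : X → ℝ≥0∞) : Prop :=
  ∃ N ⊆ M, modulus μ q N = 0 ∧ Admissible (M \ N) ρ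

/-- The family `Γ(E, F; G)` of measures `H¹` restricted to images of injective rectifiable
curves joining `E` and `F` in `G`. -/
def pathFamily [MetricSpace X] [MeasurableSpace X] [BorelSpace X] (E F G : Set X) :
    Set (Measure X) :=
  {ν | ∃ γ : ℝ → X, ContinuousOn γ (Icc 0 1) ∧ InjOn γ (Icc 0 1) ∧
    eVariationOn γ (Icc 0 1) ≠ ⊤ ∧ MapsTo γ (Icc 0 1) G ∧ γ 0 ∈ E ∧ γ 1 ∈ F ∧
    ν = (μH[1]).restrict (γ '' Icc 0 1)}

/-- `S` separates `E` from `F` in `G`: they lie in different connected components of `G \ S`. -/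
def SeparatesIn [TopologicalSpace X] (S E F G : Set X) : Prop :=
  ∃ x ∈ G \ S, ∃ y ∈ G \ S,
    E ⊆ connectedComponentIn (G \ S) x ∧ F ⊆ connectedComponentIn (G \ S) y ∧
    connectedComponentIn (G \ S) x ≠ connectedComponentIn (G \ S) y

/-- The family `Γ*(E, F; G)` of measures `H^d` restricted to `S ∩ G`, where `S` ranges over
compact subsets of the closure of `G`, of finite `H^d`-measure in `G`, separating `E` and `F`. -/
def surfaceFamilyH [MetricSpace X] [MeasurableSpace X] [BorelSpace X] (d : ℝ)
    (E F G : Set X) : Set (Measure X) :=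
  {ν | ∃ S : Set X, IsCompact S ∧ S ⊆ closure G ∧ μH[d] (S ∩ G) ≠ ⊤ ∧
    SeparatesIn S E F G ∧ ν = (μH[d]).restrict (S ∩ G)}

/-- The codimension-1 spherical Hausdorff measure associated to `μ`. -/
def codimOneHausdorff [PseudoMetricSpace X] [MeasurableSpace X] (μ : Measure X)
    (A : Set X) : ℝ≥0∞ :=
  ⨆ (δ : ℝ) (_ : 0 < δ),
    ⨅ (c : ℕ → X) (r : ℕ → ℝ) (_ : A ⊆ ⋃ i, ball (c i) (r i))
      (_ : ∀ i, 0 < r i ∧ r i ≤ δ), ∑' i, μ (ball (c i) (r i)) / ENNReal.ofReal (r i)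

/-- The integral `∫_A g d𝓗` of `g` over `A` against the codimension-1 spherical Hausdorff
measure, defined by the layer-cake formula. -/
def codimIntegral [PseudoMetricSpace X] [MeasurableSpace X] (μ : Measure X) (A : Set X)
    (g : X → ℝ≥0∞) : ℝ≥0∞ :=
  ∫⁻ s in Ioi (0 : ℝ), codimOneHausdorff μ (A ∩ {x | ENNReal.ofReal s < g x})

/-- The collection of "surfaces" of `Γ*(E, F; G)`: compact subsets of the closure of `G` of
finite codimension-1 measure in `G` separating `E` and `F` in `G`. -/
def surfaceSets [PseudoMetricSpace X] [MeasurableSpace X] (μ : Measure X) (E F G : Set X) :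
    Set (Set X) :=
  {S | IsCompact S ∧ S ⊆ closure G ∧ codimOneHausdorff μ (S ∩ G) ≠ ⊤ ∧ SeparatesIn S E F G}

/-- The `q`-modulus of a family `𝒮` of surfaces, each equipped with the codimension-1
spherical Hausdorff measure restricted to `S ∩ G`. -/
def surfModulus [PseudoMetricSpace X] [MeasurableSpace X] (μ : Measure X) (q : ℝ)
    (𝒮 : Set (Set X)) (G : Set X) : ℝ≥0∞ :=
  ⨅ (ρ : X → ℝ≥0∞)
    (_ : Measurable ρ ∧ ∀ S ∈ 𝒮, 1 ≤ codimIntegral μ (S ∩ G) ρ),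
    ∫⁻ x, ρ x ^ q ∂μ

/-- The upper Lebesgue integral of `f` over `s ⊆ ℝ`. -/
def upperIntegralOn (s : Set ℝ) (f : ℝ → ℝ≥0∞) : ℝ≥0∞ :=
  ⨅ (ψ : ℝ → ℝ≥0∞) (_ : Measurable ψ ∧ ∀ t, f t ≤ ψ t), ∫⁻ t in s, ψ t

/-- The restricted Hardy–Littlewood maximal function `M_R w`. -/
def restrMaximal [PseudoMetricSpace X] [MeasurableSpace X] (μ : Measure X) (R : ℝ)
    (w : X → ℝ≥0∞) (x : X) : ℝ≥0∞ :=
  ⨆ (r : ℝ) (_ : 0 < r ∧ r ≤ R), ⨍⁻ y in ball x r, w y ∂μ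

/-- `x` is a Lebesgue point of `v`. -/
def LebesguePoint [PseudoMetricSpace X] [MeasurableSpace X] (μ : Measure X) (v : X → ℝ)
    (x : X) : Prop :=
  Tendsto (fun r : ℝ => ⨍ y in ball x r, |v y - v x| ∂μ) (𝓝[>] 0) (𝓝 0)

/-- `u` is locally Lipschitz on `G`. -/
def IsLocallyLipschitzOn [PseudoMetricSpace X] (u : X → ℝ) (G : Set X) : Prop :=
  ∀ x ∈ G, ∃ (K : ℝ≥0) (t : Set X), t ∈ 𝓝[G] x ∧ LipschitzOnWith K u t

/-- `X` is a geodesic metric space. -/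
def IsGeodesicSpace (X : Type*) [MetricSpace X] : Prop :=
  ∀ x y : X, ∃ γ : ℝ → X, γ 0 = x ∧ γ (dist x y) = y ∧
    ∀ s ∈ Icc (0 : ℝ) (dist x y), ∀ t ∈ Icc (0 : ℝ) (dist x y), dist (γ s) (γ t) = |s - t|

/-- `G` is a domain (open connected set) with compact closure. -/
def IsDomainWithCompactClosure [TopologicalSpace X] (G : Set X) : Prop :=
  IsOpen G ∧ IsConnected G ∧ IsCompact (closure G)

/-- `E` is a nondegenerate continuum: compact, connected, with at least two points. -/
def IsNondegContinuum [TopologicalSpace X] (E : Set X) : Prop :=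
  IsCompact E ∧ IsConnected E ∧ E.Nontrivial

/-- The distance between two sets. -/
def setDist [PseudoMetricSpace X] (E F : Set X) : ℝ :=
  sInf ((fun p : X × X => dist p.1 p.2) '' (E ×ˢ F))

/-- The `s`-dimensional Hausdorff content. -/
def hContent {Y : Type*} [EMetricSpace Y] (s : ℝ) (E : Set Y) : ℝ≥0∞ :=
  ⨅ (U : ℕ → Set Y) (_ : E ⊆ ⋃ i, U i), ∑' i, EMetric.diam (U i) ^ s

end


/-- There are arbitrarily small balls with small `μ(B)/r`. -/
def SmallBalls {X : Type*} [MetricSpace X] [MeasurableSpace X] (μ : Measure X) : Prop :=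
  ∀ δ : ℝ, 0 < δ → ∀ ε : ℝ≥0∞, ε ≠ 0 → ∃ (c : X) (r : ℝ), 0 < r ∧ r ≤ δ ∧
    μ (ball c r) / ENNReal.ofReal r ≤ ε

/-- `𝓗_δ` premeasure -/
noncomputable def codimPre {X : Type*} [MetricSpace X] [MeasurableSpace X] (μ : Measure X) (δ : ℝ)
    (A : Set X) : ℝ≥0∞ :=
    ⨅ (c : ℕ → X) (r : ℕ → ℝ) (_ : A ⊆ ⋃ i, ball (c i) (r i))
      (_ : ∀ i, 0 < r i ∧ r i ≤ δ), ∑' i, μ (ball (c i) (r i)) / ENNReal.ofReal (r i)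

section
variable {X : Type*} [MetricSpace X] [MeasurableSpace X] {μ : Measure X}

theorem codim_eq (A : Set X) : codimOneHausdorff μ A = ⨆ (δ : ℝ) (_ : 0 < δ), codimPre μ δ A := rfl

theorem codimPre_le {δ : ℝ} {A : Set X} {c : ℕ → X} {r : ℕ → ℝ} (h : A ⊆ ⋃ i, ball (c i) (r i))
    (h' : ∀ i, 0 < r i ∧ r i ≤ δ) :
    codimPre μ δ A ≤ ∑' i, μ (ball (c i) (r i)) / ENNReal.ofReal (r i) :=
  iInf₂_le_of_le c r (iInf₂_le h h')

theorem codimPre_exists {δ : ℝ} {A : Set X} {K : ℝ≥0∞} (h : codimPre μ δ A < K) :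
    ∃ (c : ℕ → X) (r : ℕ → ℝ), A ⊆ ⋃ i, ball (c i) (r i) ∧ (∀ i, 0 < r i ∧ r i ≤ δ) ∧
      ∑' i, μ (ball (c i) (r i)) / ENNReal.ofReal (r i) < K := by
  simp only [codimPre, iInf_lt_iff] at h
  obtain ⟨c, r, h1, h2, h3⟩ := h
  exact ⟨c, r, h1, h2, h3⟩

theorem codimPre_le_codim {δ : ℝ} (hδ : 0 < δ) (A : Set X) :
    codimPre μ δ A ≤ codimOneHausdorff μ A := by
  rw [codim_eq]; exact le_iSup₂_of_le δ hδ le_rfl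

theorem codimPre_anti {δ δ' : ℝ} (h : δ ≤ δ') (A : Set X) :
    codimPre μ δ' A ≤ codimPre μ δ A := by
  refine le_iInf₂ fun c r => le_iInf₂ fun h1 h2 => codimPre_le h1 fun i => ⟨(h2 i).1, (h2 i).2.trans h⟩

theorem codimPre_mono {δ : ℝ} {A B : Set X} (h : A ⊆ B) :
    codimPre μ δ A ≤ codimPre μ δ B := by
  refine le_iInf₂ fun c r => le_iInf₂ fun h1 h2 => codimPre_le (h.trans h1) h2

theorem smallBalls_of_finite {A : Set X} (hA : codimOneHausdorff μ A ≠ ⊤) : SmallBalls μ := by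
  intro δ hδ ε hε
  have h1 : codimPre μ δ A < ⊤ := (codimPre_le_codim hδ A).trans_lt hA.lt_top
  obtain ⟨c, r, -, h2, h3⟩ := codimPre_exists h1
  have := ENNReal.tendsto_atTop_zero_of_tsum_ne_top h3.ne
  obtain ⟨i, hi⟩ := (this.eventually (ge_mem_nhds (pos_iff_ne_zero.2 hε))).exists
  exact ⟨c i, r i, (h2 i).1, (h2 i).2, hi⟩

theorem codimPre_empty (hS : SmallBalls μ) {δ : ℝ} (hδ : 0 < δ) : codimPre μ δ ∅ = 0 := by
  refine le_antisymm (ENNReal.le_of_forall_pos_le_add fun ε hε _ => ?_) bot_le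
  obtain ⟨ε', h1, h2⟩ := ENNReal.exists_pos_sum_of_countable (ε := (ε : ℝ≥0∞)) (by simpa using hε.ne') ℕ
  have := fun i => hS δ hδ (ε' i) (by simpa using (h1 i).ne')
  choose c r hr hrδ hle using this
  refine (codimPre_le (c := c) (r := r) (by simp) fun i => ⟨hr i, hrδ i⟩).trans ?_
  rw [zero_add]
  exact (ENNReal.tsum_le_tsum hle).trans h2.le

theorem codimPre_iUnion {δ : ℝ} (A : ℕ → Set X) :
    codimPre μ δ (⋃ n, A n) ≤ ∑' n, codimPre μ δ (A n) := by
  refine ENNReal.le_of_forall_pos_le_add fun ε hε hfin => ?_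
  obtain ⟨ε', h1, h2⟩ := ENNReal.exists_pos_sum_of_countable (ε := (ε : ℝ≥0∞)) (by simpa using hε.ne') ℕ
  have hf : ∀ n, codimPre μ δ (A n) < codimPre μ δ (A n) + ε' n := fun n =>
    ENNReal.lt_add_right (ENNReal.ne_top_of_tsum_ne_top hfin.ne n) (by simpa using (h1 n).ne')
  have := fun n => codimPre_exists (hf n)
  choose c r hc hr hs using this
  have key := codimPre_le (μ := μ) (δ := δ) (A := ⋃ n, A n)
    (c := fun k => c (Nat.unpair k).1 (Nat.unpair k).2)
    (r := fun k => r (Nat.unpair k).1 (Nat.unpair k).2) ?_ (fun i => hr _ _)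
  · refine key.trans ?_
    have e : ∑' k : ℕ, μ (ball (c (Nat.unpair k).1 (Nat.unpair k).2) (r (Nat.unpair k).1 (Nat.unpair k).2)) /
        ENNReal.ofReal (r (Nat.unpair k).1 (Nat.unpair k).2) =
        ∑' n, ∑' i, μ (ball (c n i) (r n i)) / ENNReal.ofReal (r n i) := by
      rw [← ENNReal.tsum_prod]
      exact Nat.pairEquiv.symm.tsum_eq (fun q : ℕ × ℕ => μ (ball (c q.1 q.2) (r q.1 q.2)) / ENNReal.ofReal (r q.1 q.2))
    rw [e]
    calc _ ≤ ∑' n, (codimPre μ δ (A n) + ε' n) := ENNReal.tsum_le_tsum fun n => (hs n).le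
      _ = _ := ENNReal.tsum_add
      _ ≤ _ := by gcongr
  · refine iUnion_subset fun n x hx => ?_
    obtain ⟨i, hi⟩ := mem_iUnion.1 (hc n hx)
    exact mem_iUnion.2 ⟨Nat.pair n i, by simpa using hi⟩

/-- the codimension one Hausdorff outer measure -/
noncomputable def codimOuter (hS : SmallBalls μ) : OuterMeasure X where
  measureOf := codimOneHausdorff μ
  empty := by
    rw [codim_eq]
    simp only [ENNReal.iSup_eq_zero]
    exact fun δ hδ => codimPre_empty hS hδ
  mono := fun {A B} h => by
    rw [codim_eq, codim_eq]
    exact iSup₂_mono fun δ _ => codimPre_mono h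
  iUnion_nat := fun A _ => by
    rw [codim_eq]
    exact iSup₂_le fun δ hδ => (codimPre_iUnion A).trans
      (ENNReal.tsum_le_tsum fun n => codimPre_le_codim hδ _)

theorem codimPre_pad (hS : SmallBalls μ) {δ : ℝ} (hδ : 0 < δ) (I : Set ℕ) {A : Set X}
    {c : ℕ → X} {r : ℕ → ℝ} (h : A ⊆ ⋃ i ∈ I, ball (c i) (r i))
    (h' : ∀ i, 0 < r i ∧ r i ≤ δ) :
    codimPre μ δ A ≤ ∑' i, I.indicator (fun i => μ (ball (c i) (r i)) / ENNReal.ofReal (r i)) i := by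
  classical
  refine ENNReal.le_of_forall_pos_le_add fun ε hε _ => ?_
  obtain ⟨ε', h1, h2⟩ := ENNReal.exists_pos_sum_of_countable (ε := (ε : ℝ≥0∞)) (by simpa using hε.ne') ℕ
  have := fun i => hS δ hδ (ε' i) (by simpa using (h1 i).ne')
  choose c' r' hr hrδ hle using this
  refine (codimPre_le (c := fun i => if i ∈ I then c i else c' i)
    (r := fun i => if i ∈ I then r i else r' i) ?_ fun i => ?_).trans ?_
  · intro x hx
    obtain ⟨i, hi, hx⟩ := mem_iUnion₂.1 (h hx)
    exact mem_iUnion.2 ⟨i, by simpa [hi] using hx⟩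
  · split_ifs
    · exact h' i
    · exact ⟨hr i, hrδ i⟩
  · calc _ ≤ ∑' i, (I.indicator (fun i => μ (ball (c i) (r i)) / ENNReal.ofReal (r i)) i + ε' i) := by
          refine ENNReal.tsum_le_tsum fun i => ?_
          by_cases hi : i ∈ I
          · simp [hi]
          · simpa [hi] using hle i
      _ = _ := ENNReal.tsum_add
      _ ≤ _ := by gcongr

theorem codimOuter_isMetric (hS : SmallBalls μ) : (codimOuter hS).IsMetric := by
  intro s t hst
  refine le_antisymm (measure_union_le s t) ?_
  obtain ⟨d, hd0, hd⟩ := hst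
  obtain ⟨d', hd'0, hd'⟩ : ∃ d' : ℝ, 0 < d' ∧ ENNReal.ofReal d' ≤ d := by
    by_cases h : d = ⊤
    · exact ⟨1, one_pos, by simp [h]⟩
    · exact ⟨d.toReal, ENNReal.toReal_pos hd0 h, by rw [ENNReal.ofReal_toReal h]⟩
  have key : ∀ δ : ℝ, 0 < δ → δ ≤ d' / 2 → codimPre μ δ s + codimPre μ δ t ≤ codimPre μ δ (s ∪ t) := by
    intro δ hδ hδd
    refine le_iInf₂ fun c r => le_iInf₂ fun h1 h2 => ?_
    set I : Set ℕ := {i | (s ∩ ball (c i) (r i)).Nonempty}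
    have hs : s ⊆ ⋃ i ∈ I, ball (c i) (r i) := fun x hx => by
      obtain ⟨i, hi⟩ := mem_iUnion.1 (h1 (Or.inl hx))
      exact mem_iUnion₂.2 ⟨i, ⟨x, hx, hi⟩, hi⟩
    have ht : t ⊆ ⋃ i ∈ Iᶜ, ball (c i) (r i) := fun y hy => by
      obtain ⟨i, hi⟩ := mem_iUnion.1 (h1 (Or.inr hy))
      refine mem_iUnion₂.2 ⟨i, ?_, hi⟩
      rintro ⟨x, hx, hxi⟩
      have h3 := hd'.trans (hd x hx y hy)
      rw [edist_dist] at h3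
      have h4 : d' ≤ dist x y := (ENNReal.ofReal_le_ofReal_iff dist_nonneg).1 h3
      have h5 := dist_triangle_right x y (c i)
      rw [mem_ball] at hi hxi
      linarith [(h2 i).2]
    refine (add_le_add (codimPre_pad hS hδ I hs h2) (codimPre_pad hS hδ Iᶜ ht h2)).trans ?_
    rw [← ENNReal.tsum_add]
    refine ENNReal.tsum_le_tsum fun i => ?_
    by_cases hi : i ∈ I <;> simp [hi]
  have e : ∀ A : Set X, codimOuter hS A = ⨆ (δ : ℝ) (_ : 0 < δ), codimPre μ δ A := fun A => rfl
  have e2 : ∀ A : Set X, codimOuter hS A = ⨆ n : ℕ, codimPre μ (d' / 2 / ((n : ℝ) + 1)) A := by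
    intro A
    rw [e]
    refine le_antisymm (iSup₂_le fun δ hδ => ?_) (iSup_le fun n => ?_)
    · obtain ⟨n, hn⟩ := exists_nat_gt (d' / 2 / δ)
      refine le_iSup_of_le n (codimPre_anti ?_ A)
      rw [div_lt_iff₀ hδ] at hn
      rw [div_le_iff₀ (by positivity)]
      nlinarith
    · exact le_iSup₂_of_le (d' / 2 / ((n : ℝ) + 1)) (by positivity) le_rfl
  have mono : ∀ A : Set X, Monotone fun n : ℕ => codimPre μ (d' / 2 / ((n : ℝ) + 1)) A := by
    intro A m n hmn
    refine codimPre_anti ?_ A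
    have : (m : ℝ) ≤ n := by exact_mod_cast hmn
    gcongr
  rw [e2 s, e2 t, e2 (s ∪ t), ENNReal.iSup_add_iSup_of_monotone (mono s) (mono t)]
  refine iSup_mono fun n => key _ (by positivity) ?_
  exact div_le_self (by positivity) (by linarith [n.cast_nonneg (α := ℝ)])

/-- the codimension one Hausdorff measure -/
noncomputable def codimMeas [BorelSpace X] (hS : SmallBalls μ) : Measure X :=
  (codimOuter hS).toMeasure (le_trans (le_of_eq (BorelSpace.measurable_eq (α := X)))
    (codimOuter_isMetric hS).borel_le_caratheodory)

theorem codimMeas_apply [BorelSpace X] (hS : SmallBalls μ) {A : Set X} (hA : MeasurableSet A) :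
    codimMeas hS A = codimOneHausdorff μ A :=
  toMeasure_apply _ _ hA

theorem codimIntegral_eq [BorelSpace X] (hS : SmallBalls μ) {A : Set X} (hA : MeasurableSet A)
    (hfin : codimOneHausdorff μ A ≠ ⊤) {g : X → ℝ≥0∞} (hg : Measurable g) :
    codimIntegral μ A g = ∫⁻ x in A, g x ∂(codimMeas hS) := by
  have hF : IsFiniteMeasure ((codimMeas hS).restrict A) :=
    ⟨by rw [Measure.restrict_apply_univ, codimMeas_apply hS hA]; exact hfin.lt_top⟩
  have h1 : ∀ x, g x = ∫⁻ s in Ioi (0 : ℝ), {q : X × ℝ | ENNReal.ofReal q.2 < g q.1}.indicator 1 (x, s) := by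
    intro x
    have hm : MeasurableSet {s : ℝ | ENNReal.ofReal s < g x} :=
      measurableSet_lt ENNReal.measurable_ofReal measurable_const
    have e1 : (fun s : ℝ => {q : X × ℝ | ENNReal.ofReal q.2 < g q.1}.indicator (1 : X × ℝ → ℝ≥0∞) (x, s))
        = {s : ℝ | ENNReal.ofReal s < g x}.indicator 1 := by
      ext s; simp [indicator]
    rw [e1, lintegral_indicator_one hm, Measure.restrict_apply hm]
    by_cases h : g x = ⊤
    · have : {s : ℝ | ENNReal.ofReal s < g x} ∩ Ioi 0 = Ioi 0 := by
        ext s; simp [h]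
      rw [this, h]; simp
    · have : {s : ℝ | ENNReal.ofReal s < g x} ∩ Ioi 0 = Ioo 0 (g x).toReal := by
        ext s
        simp only [mem_inter_iff, mem_ofPred_eq, mem_Ioi, mem_Ioo]
        constructor
        · rintro ⟨h1, h2⟩
          exact ⟨h2, (ENNReal.ofReal_lt_iff_lt_toReal h2.le h).1 h1⟩
        · rintro ⟨h2, h1⟩
          exact ⟨(ENNReal.ofReal_lt_iff_lt_toReal h2.le h).2 h1, h2⟩
      rw [this, Real.volume_Ioo, sub_zero, ENNReal.ofReal_toReal h]
  have hm : MeasurableSet {q : X × ℝ | ENNReal.ofReal q.2 < g q.1} :=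
    measurableSet_lt (ENNReal.measurable_ofReal.comp measurable_snd) (hg.comp measurable_fst)
  have h2 : ∫⁻ x in A, g x ∂(codimMeas hS) = ∫⁻ x in A, (∫⁻ s in Ioi (0 : ℝ),
      {q : X × ℝ | ENNReal.ofReal q.2 < g q.1}.indicator 1 (x, s)) ∂(codimMeas hS) :=
    lintegral_congr h1
  rw [h2, lintegral_lintegral_swap (f := fun x s =>
    {q : X × ℝ | ENNReal.ofReal q.2 < g q.1}.indicator (1 : X × ℝ → ℝ≥0∞) (x, s)) ((measurable_one.indicator hm).aemeasurable)]
  unfold codimIntegral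
  refine lintegral_congr fun s => ?_
  have hm' : MeasurableSet {x | ENNReal.ofReal s < g x} := measurableSet_lt measurable_const hg
  have e1 : (fun x : X => {q : X × ℝ | ENNReal.ofReal q.2 < g q.1}.indicator (1 : X × ℝ → ℝ≥0∞) (x, s))
        = {x | ENNReal.ofReal s < g x}.indicator 1 := by
      ext s; simp [indicator]
  rw [e1, lintegral_indicator_one hm', Measure.restrict_apply hm', inter_comm, codimMeas_apply]
  exact hm'.inter hA
end


theorem rpow_iSup_le_tsum {p : ℝ} (hp : 0 < p) (y : ℕ → ℝ≥0∞) : (⨆ k, y k) ^ p ≤ ∑' k, y k ^ p := by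
  have : (⨆ k, y k) ≤ (∑' k, y k ^ p) ^ (p⁻¹) := by
    refine iSup_le fun k => ?_
    rw [ENNReal.le_rpow_inv_iff hp]
    exact ENNReal.le_tsum k
  exact (ENNReal.le_rpow_inv_iff hp).1 this

theorem tsum_rpow_le {p : ℝ} (hp : 0 < p) (d : ℕ → ℝ≥0∞) :
    (∑' k, d k) ^ p ≤ ∑' k, (2 ^ (k + 1) * d k) ^ p := by
  refine le_trans (ENNReal.rpow_le_rpow ?_ hp.le) (rpow_iSup_le_tsum hp _)
  calc ∑' k, d k = ∑' k : ℕ, (2⁻¹ : ℝ≥0∞) ^ (k + 1) * (2 ^ (k + 1) * d k) := by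
        refine tsum_congr fun k => ?_
        rw [← mul_assoc, ← mul_pow, ENNReal.inv_mul_cancel (by simp) (by simp), one_pow, one_mul]
    _ ≤ ∑' k : ℕ, (2⁻¹ : ℝ≥0∞) ^ (k + 1) * ⨆ j, (2 ^ (j + 1) * d j) := by
        refine ENNReal.tsum_le_tsum fun k => ?_
        gcongr
        exact le_iSup (fun j => 2 ^ (j + 1) * d j) k
    _ = ⨆ j, (2 ^ (j + 1) * d j) := by
        rw [ENNReal.tsum_mul_right, ENNReal.tsum_geometric_add_one, ENNReal.one_sub_inv_two,
          ENNReal.mul_inv_cancel (by simp) (by simp), one_mul]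

section
variable {X : Type*} [MeasurableSpace X] {μ : Measure X}

theorem lintegral_tsum_rpow_lt_top {p : ℝ} (hp : 0 < p) (d : ℕ → X → ℝ≥0∞) (hd : ∀ k, Measurable (d k))
    (h : ∀ k : ℕ, ((2 : ℝ≥0∞) ^ (k + 1)) ^ p * ∫⁻ x, d k x ^ p ∂μ ≤ 2⁻¹ ^ k) :
    ∫⁻ x, (∑' k, d k x) ^ p ∂μ < ⊤ := by
  calc ∫⁻ x, (∑' k, d k x) ^ p ∂μ ≤ ∫⁻ x, ∑' k : ℕ, ((2 : ℝ≥0∞) ^ (k + 1)) ^ p * d k x ^ p ∂μ := by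
        refine lintegral_mono fun x => (tsum_rpow_le hp _).trans (le_of_eq ?_)
        exact tsum_congr fun k => ENNReal.mul_rpow_of_nonneg _ _ hp.le
    _ = ∑' k : ℕ, ((2 : ℝ≥0∞) ^ (k + 1)) ^ p * ∫⁻ x, d k x ^ p ∂μ := by
        rw [lintegral_tsum fun k => (((hd k).pow_const p).const_mul _).aemeasurable]
        exact tsum_congr fun k => lintegral_const_mul _ ((hd k).pow_const p)
    _ ≤ ∑' k : ℕ, 2⁻¹ ^ k := ENNReal.tsum_le_tsum h
    _ < ⊤ := by rw [ENNReal.tsum_geometric]; norm_num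

theorem modulus_iUnion_zero {p : ℝ} (hp : 0 < p) (M : ℕ → Set (Measure X))
    (h : ∀ n, modulus μ p (M n) = 0) : modulus μ p (⋃ n, M n) = 0 := by
  refine le_antisymm (ENNReal.le_of_forall_pos_le_add fun ε hε _ => ?_) bot_le
  obtain ⟨ε', h1, h2⟩ := ENNReal.exists_pos_sum_of_countable (ε := (ε : ℝ≥0∞)) (by simpa using hε.ne') ℕ
  have : ∀ n, ∃ ρ, Admissible (M n) ρ ∧ ∫⁻ x, ρ x ^ p ∂μ < ε' n := by
    intro n
    have : modulus μ p (M n) < ε' n := by rw [h n]; simpa using h1 n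
    simp only [modulus, iInf_lt_iff] at this
    obtain ⟨ρ, h3, h4⟩ := this
    exact ⟨ρ, h3, h4⟩
  choose ρ hρ hlt using this
  refine iInf₂_le_of_le (fun x => ⨆ n, ρ n x) ⟨Measurable.iSup fun n => (hρ n).1, ?_⟩ ?_
  · intro ν hν
    obtain ⟨n, hn⟩ := mem_iUnion.1 hν
    exact ((hρ n).2 ν hn).trans (lintegral_mono fun x => le_iSup (fun n => ρ n x) n)
  · calc _ ≤ ∫⁻ x, ∑' n, ρ n x ^ p ∂μ := lintegral_mono fun x => rpow_iSup_le_tsum hp _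
      _ = ∑' n, ∫⁻ x, ρ n x ^ p ∂μ := lintegral_tsum fun n => ((hρ n).1.pow_const p).aemeasurable
      _ ≤ ∑' n, (ε' n : ℝ≥0∞) := ENNReal.tsum_le_tsum fun n => (hlt n).le
      _ ≤ _ := by rw [zero_add]; exact h2.le

theorem modulus_mono {p : ℝ} {M N : Set (Measure X)} (h : M ⊆ N) : modulus μ p M ≤ modulus μ p N :=
  le_iInf₂ fun ρ hρ => iInf₂_le ρ ⟨hρ.1, fun ν hν => hρ.2 ν (h hν)⟩
end

theorem real_tangent {p x r : ℝ} (hp : 1 < p) (hx : 0 ≤ x) (hr : 0 ≤ r) :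
    x ^ p + p * x ^ (p - 1) * r ≤ r ^ p + p * x ^ (p - 1) * x := by
  rcases hx.eq_or_lt with rfl | hx
  · rw [Real.zero_rpow (by linarith), Real.zero_rpow (by linarith)]
    have := Real.rpow_nonneg hr p
    simpa
  · have h := one_add_mul_self_le_rpow_one_add (s := r / x - 1) (by have := div_nonneg hr hx.le; linarith) hp.le
    rw [add_sub_cancel, Real.div_rpow hr hx.le, le_div_iff₀ (by positivity)] at h
    have e : x ^ p = x ^ (p - 1) * x := by
      conv_rhs => rw [← Real.rpow_add_one hx.ne']
      simp
    rw [e] at h ⊢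
    have : (1 + p * (r / x - 1)) * (x ^ (p - 1) * x) = x ^ (p - 1) * x + p * x ^ (p-1) * r - p * x ^ (p-1) * x := by
      field_simp
      ring
    linarith

theorem real_conv {p ε : ℝ} (hp : 1 < p) (hε : 0 < ε) : ∃ C : ℝ, 0 < C ∧ ∀ a b : ℝ, 0 ≤ a → 0 ≤ b →
    |a - b| ^ p + C * ((a + b) / 2) ^ p ≤ (ε + C / 2) * (a ^ p + b ^ p) := by
  have hp0 : 0 < p := by linarith
  set D : ℝ → ℝ := fun s => (1 + s ^ p) / 2 - ((1 + s) / 2) ^ p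
  have hD : Continuous D := by
    have h1 := Real.continuous_rpow_const hp0.le
    exact ((continuous_const.add h1).div_const 2).sub (h1.comp ((continuous_const.add continuous_id).div_const 2))
  have hDpos : ∀ s, 0 ≤ s → s < 1 → 0 < D s := by
    intro s hs hs1
    obtain ⟨_, hsc⟩ := strictConvexOn_rpow hp
    have := hsc (show (1 : ℝ) ∈ Ici (0 : ℝ) by simp) (show s ∈ Ici (0 : ℝ) from hs) hs1.ne'
      (show (0 : ℝ) < 1 / 2 by norm_num) (show (0 : ℝ) < 1 / 2 by norm_num) (by norm_num)
    simp only [smul_eq_mul, Real.one_rpow] at this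
    have e : (1 / 2 * 1 + 1 / 2 * s : ℝ) = (1 + s) / 2 := by ring
    rw [e] at this
    simp only [D]; linarith
  have hDnn : ∀ s, 0 ≤ s → s ≤ 1 → 0 ≤ D s := by
    intro s hs hs1
    rcases hs1.eq_or_lt with rfl | h
    · simp [D]
    · exact (hDpos s hs h).le
  obtain ⟨d, hd0, hd⟩ : ∃ d : ℝ, 0 < d ∧ ∀ s, 0 ≤ s → s ≤ 1 → ε < (1 - s) ^ p → d ≤ D s := by
    set K : Set ℝ := Icc 0 1 ∩ {s | ε ≤ (1 - s) ^ p}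
    have hK : IsCompact K := by
      refine isCompact_Icc.inter_right (isClosed_le continuous_const ?_)
      exact (Real.continuous_rpow_const hp0.le).comp (continuous_const.sub continuous_id)
    rcases K.eq_empty_or_nonempty with h | h
    · refine ⟨1, one_pos, fun s h0 h1 h2 => ?_⟩
      have : s ∈ K := ⟨⟨h0, h1⟩, h2.le⟩
      simp [h] at this
    · obtain ⟨s0, hs0, hmin⟩ := hK.exists_isMinOn h hD.continuousOn
      refine ⟨D s0, hDpos s0 hs0.1.1 (lt_of_le_of_ne hs0.1.2 ?_), fun s h0 h1 h2 => hmin ⟨⟨h0, h1⟩, h2.le⟩⟩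
      rintro rfl
      have := hs0.2
      simp [hp0.ne'] at this
      linarith
  refine ⟨1 / d, by positivity, ?_⟩
  have key : ∀ s, 0 ≤ s → s ≤ 1 → (1 - s) ^ p ≤ ε * (1 + s ^ p) + 1 / d * D s := by
    intro s h0 h1
    have hsp := Real.rpow_nonneg h0 p
    by_cases h : (1 - s) ^ p ≤ ε
    · have := hDnn s h0 h1
      have : 0 ≤ 1 / d * D s := by positivity
      nlinarith
    · have h2 := hd s h0 h1 (not_le.1 h)
      have h3 : (1 - s) ^ p ≤ 1 := Real.rpow_le_one (by linarith) (by linarith) hp0.le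
      have h4 : 1 ≤ 1 / d * D s := by rw [one_div, ← div_eq_inv_mul, le_div_iff₀ hd0]; linarith
      nlinarith
  have main : ∀ a b : ℝ, 0 ≤ b → b ≤ a → 
      (a - b) ^ p + 1 / d * ((a + b) / 2) ^ p ≤ (ε + 1 / d / 2) * (a ^ p + b ^ p) := by
    intro a b hb hab
    rcases (hb.trans hab).eq_or_lt with rfl | ha
    · have : b = 0 := le_antisymm hab hb
      subst this
      simp [Real.zero_rpow hp0.ne']
    · have h := key (b / a) (by positivity) (by rwa [div_le_one ha])
      have e1 : a - b = a * (1 - b / a) := by field_simp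
      have e2 : (a + b) / 2 = a * ((1 + b / a) / 2) := by field_simp
      have e3 : b ^ p = a ^ p * (b / a) ^ p := by
        rw [← Real.mul_rpow ha.le (by positivity)]; congr 1; field_simp
      have hba : b / a ≤ 1 := by rwa [div_le_one ha]
      rw [e1, e2, Real.mul_rpow ha.le (by linarith), Real.mul_rpow ha.le (by positivity), e3]
      have hap : 0 ≤ a ^ p := by positivity
      have := mul_le_mul_of_nonneg_left h hap
      simp only [D] at this
      nlinarith
  intro a b ha hb
  rcases le_total b a with h | h
  · rw [abs_of_nonneg (by linarith)]; exact main a b hb h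
  · rw [abs_of_nonpos (by linarith), neg_sub, add_comm a b, add_comm (a ^ p)]; exact main b a ha h

theorem ennreal_tangent {p t : ℝ} (hp : 1 < p) (ht : 0 < t) (ht1 : t < 1) (r s : ℝ≥0∞) :
    (ENNReal.ofReal (1 - t) * r + ENNReal.ofReal t * s) ^ p +
      ENNReal.ofReal (p * t) * ((ENNReal.ofReal (1 - t) * r + ENNReal.ofReal t * s) ^ (p - 1) * r) ≤
    r ^ p + ENNReal.ofReal (p * t) *
      ((ENNReal.ofReal (1 - t) * r + ENNReal.ofReal t * s) ^ (p - 1) * s) := by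
  have hp0 : 0 < p := by linarith
  have hp1 : 0 < p - 1 := by linarith
  have hpt : ENNReal.ofReal (p * t) ≠ 0 := by
    rw [Ne, ENNReal.ofReal_eq_zero, not_le]; positivity
  have ht' : ENNReal.ofReal t ≠ 0 := by rw [Ne, ENNReal.ofReal_eq_zero, not_le]; positivity
  by_cases hr : r = ⊤
  · simp [hr, ENNReal.top_rpow_of_pos hp0]
  by_cases hs : s = ⊤
  · simp only [hs, ENNReal.mul_top ht', add_top, ENNReal.top_rpow_of_pos hp1, ENNReal.top_mul_top,
      ENNReal.mul_top hpt, le_top]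
  lift r to ℝ≥0 using hr
  lift s to ℝ≥0 using hs
  have hr : 0 ≤ (r : ℝ) := r.2
  have hs : 0 ≤ (s : ℝ) := s.2
  rw [← ENNReal.ofReal_coe_nnreal (p := r), ← ENNReal.ofReal_coe_nnreal (p := s)]
  have h1t : 0 ≤ 1 - t := by linarith
  generalize ((r : ℝ≥0) : ℝ) = a at hr ⊢
  generalize ((s : ℝ≥0) : ℝ) = b at hs ⊢
  have hx : 0 ≤ (1 - t) * a + t * b := by positivity
  rw [← ENNReal.ofReal_mul h1t, ← ENNReal.ofReal_mul ht.le, ← ENNReal.ofReal_add (by positivity) (by positivity),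
    ENNReal.ofReal_rpow_of_nonneg hx hp0.le, ENNReal.ofReal_rpow_of_nonneg hx hp1.le,
    ENNReal.ofReal_rpow_of_nonneg hr hp0.le, ← ENNReal.ofReal_mul (by positivity),
    ← ENNReal.ofReal_mul (by positivity), ← ENNReal.ofReal_mul (by positivity),
    ← ENNReal.ofReal_mul (by positivity), ← ENNReal.ofReal_add (by positivity) (by positivity),
    ← ENNReal.ofReal_add (by positivity) (by positivity)]
  refine ENNReal.ofReal_le_ofReal ?_
  have := real_tangent hp hx hr
  nlinarith

theorem ennreal_conv {p ε : ℝ} (hp : 1 < p) (hε : 0 < ε) : ∃ C : ℝ, 0 < C ∧ ∀ a b : ℝ≥0∞,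
    (a - b) ^ p + ENNReal.ofReal C * ((a + b) / 2) ^ p ≤ ENNReal.ofReal (ε + C / 2) * (a ^ p + b ^ p) := by
  obtain ⟨C, hC, h⟩ := real_conv hp hε
  refine ⟨C, hC, fun a b => ?_⟩
  have hp0 : 0 < p := by linarith
  have hne : ENNReal.ofReal (ε + C / 2) ≠ 0 := by rw [Ne, ENNReal.ofReal_eq_zero, not_le]; positivity
  by_cases ha : a = ⊤
  · simp [ha, ENNReal.top_rpow_of_pos hp0, ENNReal.mul_top hne]
  by_cases hb : b = ⊤
  · simp [hb, ENNReal.top_rpow_of_pos hp0, ENNReal.mul_top hne]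
  lift a to ℝ≥0 using ha
  lift b to ℝ≥0 using hb
  have h0 := h a b a.2 b.2
  have ha : 0 ≤ (a : ℝ) := a.2
  have hb : 0 ≤ (b : ℝ) := b.2
  rw [← ENNReal.ofReal_coe_nnreal (p := a), ← ENNReal.ofReal_coe_nnreal (p := b)]
  generalize ((a : ℝ≥0) : ℝ) = x at ha h0 ⊢
  generalize ((b : ℝ≥0) : ℝ) = y at hb h0 ⊢
  have e : (ENNReal.ofReal x - ENNReal.ofReal y) ^ p ≤ ENNReal.ofReal (|x - y| ^ p) := by
    rw [← ENNReal.ofReal_sub _ hb, ← ENNReal.ofReal_rpow_of_nonneg (abs_nonneg _) hp0.le]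
    exact ENNReal.rpow_le_rpow (ENNReal.ofReal_le_ofReal (le_abs_self _)) hp0.le
  have e2 : (ENNReal.ofReal x + ENNReal.ofReal y) / 2 = ENNReal.ofReal ((x + y) / 2) := by
    rw [ENNReal.ofReal_div_of_pos two_pos, ENNReal.ofReal_add ha hb]; simp
  rw [e2, ENNReal.ofReal_rpow_of_nonneg (by positivity) hp0.le, ENNReal.ofReal_rpow_of_nonneg ha hp0.le,
    ENNReal.ofReal_rpow_of_nonneg hb hp0.le, ← ENNReal.ofReal_mul hC.le,
    ← ENNReal.ofReal_add (by positivity) (by positivity), ← ENNReal.ofReal_mul (by positivity)]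
  refine (add_le_add_left e _).trans ?_
  rw [← ENNReal.ofReal_add (by positivity) (by positivity)]
  exact ENNReal.ofReal_le_ofReal h0


section
variable {X : Type*} [MeasurableSpace X] {μ : Measure X}

theorem admissible_conv {Mf : Set (Measure X)} {a b : X → ℝ≥0∞} (ha : Admissible Mf a)
    (hb : Admissible Mf b) {s t : ℝ≥0∞} (hst : s + t = 1) :
    Admissible Mf (fun x => s * a x + t * b x) := by
  refine ⟨(ha.1.const_mul s).add (hb.1.const_mul t), fun ν hν => ?_⟩
  rw [lintegral_add_left (ha.1.const_mul s), lintegral_const_mul _ ha.1, lintegral_const_mul _ hb.1]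
  calc (1 : ℝ≥0∞) = s * 1 + t * 1 := by rw [mul_one, mul_one, hst]
    _ ≤ _ := by gcongr; exacts [ha.2 ν hν, hb.2 ν hν]

theorem near_min {Mf : Set (Measure X)} {p : ℝ} (hp : 1 < p) (hfin : modulus μ p Mf ≠ ⊤)
    (τ : ℝ≥0∞) (hτ : τ ≠ 0) : ∃ s : ℝ≥0∞, s ≠ 0 ∧ ∀ a b, Admissible Mf a → Admissible Mf b →
      ∫⁻ x, a x ^ p ∂μ ≤ modulus μ p Mf + s → ∫⁻ x, b x ^ p ∂μ ≤ modulus μ p Mf + s →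
      ∫⁻ x, (a x - b x) ^ p ∂μ ≤ τ := by
  set M := modulus μ p Mf with hM
  obtain ⟨m, hm⟩ : ∃ m : ℝ≥0, M = m := ⟨M.toNNReal, (ENNReal.coe_toNNReal hfin).symm⟩
  obtain ⟨t, ht0, htτ⟩ : ∃ t : ℝ≥0, 0 < t ∧ (t : ℝ≥0∞) ≤ τ := by
    obtain ⟨t, h1, h2⟩ := ENNReal.lt_iff_exists_nnreal_btwn.1 (pos_iff_ne_zero.2 hτ)
    exact ⟨t, by simpa using h1, h2.le⟩
  have ht0' : (0 : ℝ) < t := ht0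
  set ε : ℝ := t / (4 * (m + 1))
  have hε : 0 < ε := by positivity
  obtain ⟨C, hC, h⟩ := ennreal_conv hp hε
  set s : ℝ := t / (4 * (ε + C / 2))
  have hs : 0 < s := by positivity
  refine ⟨ENNReal.ofReal s, by simpa using hs, fun a b ha hb hia hib => htτ.trans' ?_⟩
  have hab : M ≤ ∫⁻ x, ((a x + b x) / 2) ^ p ∂μ := by
    have := admissible_conv ha hb (s := 2⁻¹) (t := 2⁻¹) ENNReal.inv_two_add_inv_two
    refine (iInf₂_le _ this).trans (le_of_eq (lintegral_congr fun x => ?_))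
    show (2⁻¹ * a x + 2⁻¹ * b x) ^ p = _
    rw [← mul_add, mul_comm, ← div_eq_mul_inv]
  have ham := ha.1
  have hbm := hb.1
  have hm1 : Measurable fun x => (a x - b x) ^ p := (ha.1.sub hb.1).pow_const p
  have hm2 : Measurable fun x => ((a x + b x) / 2) ^ p := ((ha.1.add hb.1).div_const 2).pow_const p
  have hm3 : Measurable fun x => a x ^ p + b x ^ p := (ha.1.pow_const p).add (hb.1.pow_const p)
  have h1 : ∫⁻ x, (a x - b x) ^ p ∂μ + ENNReal.ofReal C * M ≤
      ENNReal.ofReal (ε + C / 2) * ((M + ENNReal.ofReal s) + (M + ENNReal.ofReal s)) := by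
    calc _ ≤ ∫⁻ x, (a x - b x) ^ p ∂μ + ENNReal.ofReal C * ∫⁻ x, ((a x + b x) / 2) ^ p ∂μ := by gcongr
      _ = ∫⁻ x, ((a x - b x) ^ p + ENNReal.ofReal C * ((a x + b x) / 2) ^ p) ∂μ := by
          rw [lintegral_add_left hm1, lintegral_const_mul _ hm2]
      _ ≤ ∫⁻ x, ENNReal.ofReal (ε + C / 2) * (a x ^ p + b x ^ p) ∂μ := lintegral_mono fun x => h _ _
      _ = ENNReal.ofReal (ε + C / 2) * (∫⁻ x, a x ^ p ∂μ + ∫⁻ x, b x ^ p ∂μ) := by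
          rw [lintegral_const_mul _ hm3,
            lintegral_add_left (ha.1.pow_const p)]
      _ ≤ _ := by gcongr
  rw [hm] at h1
  have hmr : (m : ℝ≥0∞) = ENNReal.ofReal (m : ℝ) := by simp
  have hm0 : (0 : ℝ) ≤ m := m.2
  rw [hmr, ← ENNReal.ofReal_mul hC.le, ← ENNReal.ofReal_add (by positivity) (by positivity),
    ← ENNReal.ofReal_add (by positivity) (by positivity), ← ENNReal.ofReal_mul (by positivity)] at h1
  have hI : ∫⁻ x, (a x - b x) ^ p ∂μ ≠ ⊤ := by
    intro hI
    rw [hI] at h1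
    simp at h1
  obtain ⟨i, hi⟩ : ∃ i : ℝ≥0, ∫⁻ x, (a x - b x) ^ p ∂μ = i := ⟨_, (ENNReal.coe_toNNReal hI).symm⟩
  have hi0 : (0 : ℝ) ≤ i := i.2
  have hir : (i : ℝ≥0∞) = ENNReal.ofReal (i : ℝ) := by simp
  rw [hi, hir, ← ENNReal.ofReal_add (by positivity) (by positivity),
    ENNReal.ofReal_le_ofReal_iff (by positivity)] at h1
  rw [hi]
  norm_cast
  have e1 : ε * (4 * (m + 1)) = t := by simp only [ε]; field_simp
  have e2 : (ε + C / 2) * s = t / 4 := by simp only [s]; field_simp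
  have : (i : ℝ) ≤ t := by nlinarith
  exact_mod_cast this

theorem exists_dual {Mf : Set (Measure X)} {p : ℝ} (hp : 1 < p) (h0 : modulus μ p Mf ≠ 0)
    (hfin : modulus μ p Mf ≠ ⊤) : ∃ h : X → ℝ≥0∞, Measurable h ∧ ∫⁻ x, h x ^ (p / (p - 1)) ∂μ < ⊤ ∧
      ∃ c : ℝ≥0∞, c ≠ 0 ∧ ∀ σ, Admissible Mf σ → ∫⁻ x, σ x ^ p ∂μ ≠ ⊤ → c ≤ ∫⁻ x, h x * σ x ∂μ := by
  have hp0 : 0 < p := by linarith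
  have hp1 : 0 < p - 1 := by linarith
  set M := modulus μ p Mf with hM
  set τ : ℕ → ℝ≥0∞ := fun k => 2⁻¹ ^ k / ((2 : ℝ≥0∞) ^ (k + 1)) ^ p
  have hne1 : ∀ k : ℕ, ((2 : ℝ≥0∞) ^ (k + 1)) ^ p ≠ ⊤ := fun k =>
    ENNReal.rpow_ne_top_of_nonneg hp0.le (ENNReal.pow_ne_top (by simp))
  have hne2 : ∀ k : ℕ, ((2 : ℝ≥0∞) ^ (k + 1)) ^ p ≠ 0 := fun k => by
    rw [Ne, ENNReal.rpow_eq_zero_iff_of_pos hp0]; simp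
  have hτ : ∀ k, τ k ≠ 0 := fun k => by
    simp only [τ, Ne, ENNReal.div_eq_zero_iff, not_or]
    exact ⟨by simp, hne1 k⟩
  choose s hs0 hs using fun k => near_min (μ := μ) hp hfin (τ k) (hτ k)
  set t : ℕ → ℝ := fun k => 1 / ((k : ℝ) + 2)
  have ht0 : ∀ k, 0 < t k := fun k => by simp only [t]; positivity
  have ht2 : ∀ k, t k ≤ 1 / 2 := fun k => by
    simp only [t]; gcongr; linarith [k.cast_nonneg (α := ℝ)]
  have : ∀ k : ℕ, ∃ ρ, Admissible Mf ρ ∧ ∫⁻ x, ρ x ^ p ∂μ < M + min (min (s k) (s (k - 1))) (ENNReal.ofReal (t k ^ 2)) := by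
    intro k
    have h1 : M < M + min (min (s k) (s (k - 1))) (ENNReal.ofReal (t k ^ 2)) := by
      refine ENNReal.lt_add_right hfin ?_
      refine (lt_min (lt_min ?_ ?_) ?_).ne'
      · exact pos_iff_ne_zero.2 (hs0 k)
      · exact pos_iff_ne_zero.2 (hs0 _)
      · have := ht0 k
        simp only [ENNReal.ofReal_pos]; positivity
    conv_lhs at h1 => rw [hM]
    simp only [modulus, iInf_lt_iff] at h1
    obtain ⟨ρ, h3, h4⟩ := h1
    exact ⟨ρ, h3, h4⟩
  choose ρ hρ hρlt using this
  set d : ℕ → X → ℝ≥0∞ := fun k x => ρ (k + 1) x - ρ k x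
  have hd : ∀ k, Measurable (d k) := fun k => (hρ (k + 1)).1.sub (hρ k).1
  have hdint : ∀ k : ℕ, ((2 : ℝ≥0∞) ^ (k + 1)) ^ p * ∫⁻ x, d k x ^ p ∂μ ≤ 2⁻¹ ^ k := by
    intro k
    have h1 := hs k (ρ (k + 1)) (ρ k) (hρ _) (hρ _)
      ((hρlt (k + 1)).le.trans (by
        gcongr; exact (min_le_left _ _).trans (min_le_right _ _)))
      ((hρlt k).le.trans (by gcongr; exact (min_le_left _ _).trans (min_le_left _ _)))
    rw [mul_comm, ← ENNReal.le_div_iff_mul_le (Or.inl (hne2 k)) (Or.inl (hne1 k))]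
    exact h1
  have hsum := lintegral_tsum_rpow_lt_top (μ := μ) hp0 d hd hdint
  set R : X → ℝ≥0∞ := fun x => ρ 0 x + ∑' k, d k x with hR
  have hRm : Measurable R := (hρ 0).1.add (Measurable.tsum hd)
  have hRle : ∀ n x, ρ n x ≤ R x := by
    intro n x
    have : ρ n x ≤ ρ 0 x + ∑ k ∈ Finset.range n, d k x := by
      induction n with
      | zero => simp
      | succ n ih =>
        rw [Finset.sum_range_succ, ← add_assoc]
        calc ρ (n + 1) x ≤ ρ n x + d n x := le_add_tsub
          _ ≤ _ := by gcongr
    exact this.trans (by simp only [R]; gcongr; exact ENNReal.sum_le_tsum _)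
  have hρ0fin : ∀ n, ∫⁻ x, ρ n x ^ p ∂μ < ⊤ := fun n =>
    (hρlt n).trans_le le_top
  have add_pow : ∀ q : ℝ, 0 < q → ∀ a b : ℝ≥0∞, (a + b) ^ q ≤ 2 ^ q * (a ^ q + b ^ q) := by
    intro q hq a b
    calc (a + b) ^ q ≤ (2 * max a b) ^ q := by
          refine ENNReal.rpow_le_rpow ?_ hq.le
          rw [two_mul]; gcongr; exacts [le_max_left _ _, le_max_right _ _]
      _ = 2 ^ q * (max a b) ^ q := ENNReal.mul_rpow_of_nonneg _ _ hq.le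
      _ ≤ _ := by
          gcongr
          rcases max_choice a b with h | h <;> rw [h]
          · exact le_self_add
          · exact le_add_self
  have hRfin : ∫⁻ x, R x ^ p ∂μ < ⊤ := by
    calc ∫⁻ x, R x ^ p ∂μ ≤ ∫⁻ x, 2 ^ p * (ρ 0 x ^ p + (∑' k, d k x) ^ p) ∂μ :=
          lintegral_mono fun x => add_pow p hp0 _ _
      _ = 2 ^ p * (∫⁻ x, ρ 0 x ^ p ∂μ + ∫⁻ x, (∑' k, d k x) ^ p ∂μ) := by
          rw [lintegral_const_mul' _ _ (ENNReal.rpow_ne_top_of_nonneg hp0.le (by simp)),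
            lintegral_add_left ((hρ 0).1.pow_const p)]
      _ < ⊤ := ENNReal.mul_lt_top (ENNReal.rpow_lt_top_of_nonneg hp0.le (by simp))
          (ENNReal.add_lt_top.2 ⟨hρ0fin 0, hsum⟩)
  refine ⟨fun x => R x ^ (p - 1), hRm.pow_const _, ?_, ?_⟩
  · have : ∀ x, (R x ^ (p - 1)) ^ (p / (p - 1)) = R x ^ p := fun x => by
      rw [← ENNReal.rpow_mul]; congr 1; field_simp
    simpa only [this] using hRfin
  set A : ℝ≥0∞ := 2⁻¹ ^ (p - 1)
  set B : ℝ≥0∞ := 2 ^ (p - 1)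
  have hA0 : A ≠ 0 := by
    simp only [A, Ne, ENNReal.rpow_eq_zero_iff_of_pos hp1]; simp
  have hB : B ≠ ⊤ := ENNReal.rpow_ne_top_of_nonneg hp1.le (by simp)
  have hB0 : B ≠ 0 := by
    simp only [B, Ne, ENNReal.rpow_eq_zero_iff_of_pos hp1]; simp
  refine ⟨A * M / B, ?_, fun σ hσ hσfin => ?_⟩
  · rw [Ne, ENNReal.div_eq_zero_iff, not_or]
    exact ⟨mul_ne_zero hA0 h0, hB⟩
  set H := ∫⁻ x, R x ^ (p - 1) * σ x ∂μ with hH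
  set S := ∫⁻ x, σ x ^ p ∂μ with hS
  -- main inequality
  have main : ∀ n, A * M ≤ ENNReal.ofReal (t n / p) + B * (H + ENNReal.ofReal (t n) ^ (p - 1) * S) := by
    intro n
    set x : X → ℝ≥0∞ := fun y => ENNReal.ofReal (1 - t n) * ρ n y + ENNReal.ofReal (t n) * σ y with hx
    have hxad : Admissible Mf x := admissible_conv (hρ n) hσ (by
      rw [← ENNReal.ofReal_add (by linarith [ht2 n]) (ht0 n).le]; simp)
    have hxm := hxad.1
    have h1 : M ≤ ∫⁻ y, x y ^ p ∂μ := iInf₂_le _ hxad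
    have hpt : ENNReal.ofReal (p * t n) ≠ 0 := by
      rw [Ne, ENNReal.ofReal_eq_zero, not_le]; have := ht0 n; positivity
    have h2 : ∫⁻ y, x y ^ p ∂μ + ENNReal.ofReal (p * t n) * ∫⁻ y, x y ^ (p - 1) * ρ n y ∂μ ≤
        ∫⁻ y, ρ n y ^ p ∂μ + ENNReal.ofReal (p * t n) * ∫⁻ y, x y ^ (p - 1) * σ y ∂μ := by
      have k1 : Measurable fun y => x y ^ (p - 1) * ρ n y := (hxm.pow_const _).mul (hρ n).1
      have k2 : Measurable fun y => x y ^ (p - 1) * σ y := (hxm.pow_const _).mul hσ.1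
      rw [← lintegral_const_mul _ k1, ← lintegral_const_mul _ k2,
        ← lintegral_add_left (hxm.pow_const _), ← lintegral_add_left ((hρ n).1.pow_const _)]
      exact lintegral_mono fun y => ennreal_tangent hp (ht0 n) (by linarith [ht2 n]) _ _
    have h3 : A * M ≤ ∫⁻ y, x y ^ (p - 1) * ρ n y ∂μ := by
      calc A * M ≤ A * ∫⁻ y, ρ n y ^ p ∂μ := by gcongr; exact iInf₂_le _ (hρ n)
        _ = ∫⁻ y, A * ρ n y ^ p ∂μ := (lintegral_const_mul _ ((hρ n).1.pow_const _)).symm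
        _ ≤ _ := by
          refine lintegral_mono fun y => ?_
          have e : ρ n y ^ p = ρ n y ^ (p - 1) * ρ n y := by
            conv_rhs => rw [← ENNReal.rpow_one (ρ n y), ← ENNReal.rpow_mul, one_mul,
              ← ENNReal.rpow_add_of_nonneg _ _ hp1.le zero_le_one]
            simp
          rw [e, ← mul_assoc, ← ENNReal.mul_rpow_of_nonneg _ _ hp1.le]
          gcongr
          refine le_trans ?_ le_self_add
          gcongr
          rw [← ENNReal.ofReal_ofNat 2, ← ENNReal.ofReal_inv_of_pos two_pos]
          refine ENNReal.ofReal_le_ofReal ?_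
          linarith [ht2 n]
    have h4 : ∫⁻ y, x y ^ (p - 1) * σ y ∂μ ≤ B * (H + ENNReal.ofReal (t n) ^ (p - 1) * S) := by
      have k1 : Measurable fun y => R y ^ (p - 1) * σ y := (hRm.pow_const _).mul hσ.1
      rw [hH, hS, ← lintegral_const_mul _ (hσ.1.pow_const _), ← lintegral_add_left k1,
        ← lintegral_const_mul' _ _ hB]
      refine lintegral_mono fun y => ?_
      have e : σ y ^ p = σ y ^ (p - 1) * σ y := by
        conv_rhs => rw [← ENNReal.rpow_one (σ y), ← ENNReal.rpow_mul, one_mul,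
              ← ENNReal.rpow_add_of_nonneg _ _ hp1.le zero_le_one]
        simp
      have : x y ^ (p - 1) ≤ B * (R y ^ (p - 1) + (ENNReal.ofReal (t n) * σ y) ^ (p - 1)) := by
        refine le_trans (ENNReal.rpow_le_rpow ?_ hp1.le) (add_pow _ hp1 _ _)
        simp only [hx]
        gcongr
        calc _ ≤ 1 * ρ n y := by
              gcongr
              rw [ENNReal.ofReal_le_one]; linarith [ht0 n]
          _ ≤ _ := by rw [one_mul]; exact hRle n y
      calc x y ^ (p - 1) * σ y ≤ B * (R y ^ (p - 1) + (ENNReal.ofReal (t n) * σ y) ^ (p - 1)) * σ y := by gcongr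
        _ = _ := by rw [e, ENNReal.mul_rpow_of_nonneg _ _ hp1.le]; ring
    have h5 : ∫⁻ y, ρ n y ^ p ∂μ ≤ M + ENNReal.ofReal (t n ^ 2) :=
      (hρlt n).le.trans (by gcongr; exact min_le_right _ _)
    have h6 : M + ENNReal.ofReal (p * t n) * (A * M) ≤ M + (ENNReal.ofReal (t n ^ 2) +
        ENNReal.ofReal (p * t n) * (B * (H + ENNReal.ofReal (t n) ^ (p - 1) * S))) := by
      rw [← add_assoc]
      calc _ ≤ _ := add_le_add h1 (mul_le_mul_right h3 _)
        _ ≤ _ := h2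
        _ ≤ _ := add_le_add h5 (mul_le_mul_right h4 _)
    have h7 := (ENNReal.add_le_add_iff_left hfin).1 h6
    have e : ENNReal.ofReal (t n ^ 2) = ENNReal.ofReal (p * t n) * ENNReal.ofReal (t n / p) := by
      have := ht0 n
      rw [← ENNReal.ofReal_mul (by positivity)]; congr 1; field_simp
    rw [e, ← mul_add] at h7
    exact (ENNReal.mul_le_mul_iff_right hpt (by simp)).1 h7
  have htl : Tendsto t atTop (𝓝 0) := by
    have := tendsto_one_div_add_atTop_nhds_zero_nat (𝕜 := ℝ)
    have h2 := (tendsto_add_atTop_iff_nat 1).2 this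
    refine h2.congr fun n => ?_
    simp only [t]; push_cast; ring
  have hl : Tendsto (fun n => ENNReal.ofReal (t n / p) + B * (H + ENNReal.ofReal (t n) ^ (p - 1) * S)) atTop
      (𝓝 (ENNReal.ofReal (0 / p) + B * (H + ENNReal.ofReal 0 ^ (p - 1) * S))) := by
    refine (ENNReal.tendsto_ofReal (htl.div_const p)).add
      (ENNReal.Tendsto.const_mul (tendsto_const_nhds.add ?_) (Or.inr hB))
    refine ENNReal.Tendsto.mul_const ?_ (Or.inr hσfin)
    exact (ENNReal.continuous_rpow_const.tendsto _).comp (ENNReal.tendsto_ofReal htl)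
  have := ge_of_tendsto' hl main
  simp only [zero_div, ENNReal.ofReal_zero, ENNReal.zero_rpow_of_pos hp1, zero_mul, add_zero, zero_add] at this
  rw [ENNReal.div_le_iff_le_mul (Or.inl hB0) (Or.inl hB), mul_comm H]
  exact this
end


section
variable {X : Type*} [MetricSpace X] [MeasurableSpace X] {μ : Measure X} {Cμ : ℝ}

theorem dbl_pos (hD : IsDoublingWith μ Cμ) (x : X) {r : ℝ} (hr : 0 < r) : 0 < μ (ball x r) := by
  have := (hD x (r / 2) (by linarith)).1
  rwa [mul_div_cancel₀ _ (two_ne_zero)] at this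

theorem dbl_lt_top (hD : IsDoublingWith μ Cμ) (x : X) (r : ℝ) : μ (ball x r) < ⊤ := by
  rcases le_or_gt r 0 with h | h
  · rw [ball_eq_empty.2 h]; simp
  · exact (hD x r h).2.2

theorem dbl_iter (hD : IsDoublingWith μ Cμ) (x : X) {r : ℝ} (hr : 0 < r) (n : ℕ) :
    μ (ball x (2 ^ n * r)) ≤ ENNReal.ofReal Cμ ^ n * μ (ball x r) := by
  induction n with
  | zero => simp
  | succ n ih =>
    have h := (hD x (2 ^ n * r) (by positivity)).2.1
    rw [show (2 : ℝ) ^ (n + 1) * r = 2 * (2 ^ n * r) by ring]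
    refine h.trans ?_
    rw [_root_.pow_succ', mul_assoc]
    gcongr

/-- For every `A` there is a constant with `μ (ball y s) ≤ C μ (ball x r)` whenever
`ball y s ⊆ ball x (A r)`. -/
theorem dbl_const (hD : IsDoublingWith μ Cμ) (A : ℝ) : ∃ C : ℝ, 0 < C ∧ ∀ (x : X) (r : ℝ), 0 < r →
    μ (ball x (A * r)) ≤ ENNReal.ofReal C * μ (ball x r) := by
  obtain ⟨n, hn⟩ := pow_unbounded_of_one_lt A (one_lt_two)
  refine ⟨max Cμ 1 ^ n, by positivity, fun x r hr => ?_⟩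
  calc μ (ball x (A * r)) ≤ μ (ball x (2 ^ n * r)) := by
        gcongr
    _ ≤ _ := dbl_iter hD x hr n
    _ ≤ _ := by
      rw [ENNReal.ofReal_pow (by positivity)]
      gcongr
      exact le_max_left _ _

theorem dbl_sigmaFinite (hD : IsDoublingWith μ Cμ) : SigmaFinite μ := by
  rcases isEmpty_or_nonempty X with h | ⟨⟨x⟩⟩
  · have : μ = 0 := Measure.eq_zero_of_isEmpty μ
    rw [this]; infer_instance
  · exact ⟨⟨{ set := fun n => ball x n, set_mem := fun _ => trivial,
              finite := fun n => dbl_lt_top hD x n, spanning := iUnion_ball_nat x }⟩⟩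

theorem dbl_locFin (hD : IsDoublingWith μ Cμ) : IsLocallyFiniteMeasure μ :=
  ⟨fun x => ⟨ball x 1, ball_mem_nhds x one_pos, dbl_lt_top hD x 1⟩⟩

theorem dbl_secondCountable [BorelSpace X] (hD : IsDoublingWith μ Cμ) : SecondCountableTopology X := by
  have := dbl_sigmaFinite hD
  refine Metric.secondCountable_of_almost_dense_set fun ε hε => ?_
  obtain ⟨s, hs⟩ := zorn_subset {s : Set X | s.Pairwise fun x y => ε ≤ dist x y} (by
    intro c hc hch
    refine ⟨⋃₀ c, ?_, fun s hs => subset_sUnion_of_mem hs⟩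
    exact (pairwise_sUnion hch.directedOn).2 hc)
  refine ⟨s, ?_, fun x => ?_⟩
  · have h1 := Measure.countable_meas_pos_of_disjoint_iUnion (μ := μ)
      (As := fun i : s => ball (i : X) (ε / 2)) (fun i => measurableSet_ball) (by
        intro i j hij
        refine ball_disjoint_ball ?_
        have := hs.1 i.2 j.2 (fun h => hij (Subtype.ext h))
        linarith)
    have h2 : {i : s | 0 < μ (ball (i : X) (ε / 2))} = univ := by
      ext i; simpa using dbl_pos hD _ (half_pos hε)
    rw [h2, countable_univ_iff] at h1
    exact h1
  · by_contra! hx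
    have h3 : insert x s ∈ {s : Set X | s.Pairwise fun x y => ε ≤ dist x y} := by
      refine (pairwise_insert.2 ⟨hs.1, fun y hy _ => ⟨(hx y hy).le, ?_⟩⟩)
      rw [dist_comm]; exact (hx y hy).le
    have := hs.2 h3 (subset_insert x s) (mem_insert x s)
    have := hx x this
    simp at this; linarith

end


section
variable {X : Type*} [MetricSpace X] [MeasurableSpace X] [BorelSpace X] {μ : Measure X} {Cμ CP lP : ℝ}

theorem bdd_integrableOn (hD : IsDoublingWith μ Cμ) {u : X → ℝ} (hu : Measurable u) {M : ℝ}
    (hM : ∀ x, |u x| ≤ M) (x : X) (r : ℝ) : IntegrableOn u (ball x r) μ := by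
  refine Measure.integrableOn_of_bounded (M := M) (dbl_lt_top hD x r).ne hu.aestronglyMeasurable ?_
  exact Eventually.of_forall hM

theorem poincare_local (hD : IsDoublingWith μ Cμ) (hPI : WeakPoincare μ 1 CP lP)
    {u : X → ℝ} (hu : Measurable u) {M : ℝ} (hM : ∀ x, |u x| ≤ M) {ρ : X → ℝ≥0∞} (hρ : Measurable ρ)
    (x : X) {R : ℝ} (hR : 0 < R) (hug : IsUpperGradientOn u ρ (closedBall x (lP * R))) :
    ENNReal.ofReal (⨍ y in ball x R, |u y - ⨍ z in ball x R, u z ∂μ| ∂μ) ≤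
        ENNReal.ofReal (CP * diam (ball x R)) * ⨍⁻ y in ball x (lP * R), ρ y ∂μ := by
  classical
  have := dbl_locFin hD
  set K := closedBall x (lP * R)
  set ρ' : X → ℝ≥0∞ := fun y => if y ∈ K then ρ y else ⊤
  have hρ' : Measurable ρ' := Measurable.ite isClosed_closedBall.measurableSet hρ measurable_const
  have hli : LocallyIntegrable u μ := by
    intro z
    exact ⟨ball z 1, ball_mem_nhds z one_pos, bdd_integrableOn hD hu hM z 1⟩
  have hug' : IsUpperGradientOn u ρ' univ := by
    intro L hL γ hγ _
    by_cases hK : MapsTo γ (Icc 0 L) K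
    · refine (hug L hL γ hγ hK).trans (le_of_eq ?_)
      refine setLIntegral_congr_fun measurableSet_Icc fun t ht => ?_
      simp only [ρ', hK ht, if_true]
    · rcases hL.eq_or_lt with rfl | hL
      · simp
      simp only [MapsTo, not_forall] at hK
      obtain ⟨t0, ht0, hout⟩ := hK
      have hc := hγ.continuousOn t0 ht0
      have hev : ∀ᶠ t in 𝓝[Icc 0 L] t0, γ t ∈ Kᶜ :=
        hc (isClosed_closedBall.isOpen_compl.mem_nhds hout)
      obtain ⟨ε, hε, hev0⟩ := Metric.mem_nhdsWithin_iff.1 hev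
      have hev : ∀ t, dist t t0 < ε → t ∈ Icc 0 L → γ t ∉ K := fun t h1 h2 => hev0 ⟨h1, h2⟩
      set I := Ioo (max 0 (t0 - ε)) (min L (t0 + ε))
      have hI : I ⊆ Icc 0 L := fun t ht =>
        ⟨(le_max_left _ _).trans ht.1.le, ht.2.le.trans (min_le_left _ _)⟩
      have hlt : max 0 (t0 - ε) < min L (t0 + ε) := by
        refine max_lt (lt_min hL ?_) (lt_min ?_ ?_) <;> linarith [ht0.1, ht0.2]
      have : ∫⁻ t in Icc 0 L, ρ' (γ t) = ⊤ := by
        rw [eq_top_iff]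
        calc ⊤ = ∫⁻ t in I, (⊤ : ℝ≥0∞) := by
              rw [setLIntegral_const, Real.volume_Ioo, ENNReal.top_mul]
              rw [Ne, ENNReal.ofReal_eq_zero, not_le, sub_pos]; exact hlt
          _ = ∫⁻ t in I, ρ' (γ t) := by
              refine setLIntegral_congr_fun measurableSet_Ioo fun t ht => ?_
              have h1 : γ t ∉ K := by
                refine hev t ?_ (hI ht)
                rw [Real.dist_eq, abs_lt]
                have h2 := (le_max_right _ _).trans_lt ht.1
                have h3 := ht.2.trans_le (min_le_right _ _)
                constructor <;> linarith
              simp [ρ', h1]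
          _ ≤ _ := lintegral_mono_set hI
      rw [this]; exact le_top
  have := hPI u hli ρ' hρ' hug' x R hR
  simp only [ENNReal.rpow_one, div_one] at this
  refine this.trans (mul_le_mul_right (le_of_eq ?_) _)
  rw [setLAverage_eq, setLAverage_eq]
  congr 1
  refine setLIntegral_congr_fun measurableSet_ball fun t ht => ?_
  have : t ∈ K := ball_subset_closedBall ht
  simp [ρ', this]

theorem ball_subset_component (hD : IsDoublingWith μ Cμ) (hlP : 1 ≤ lP) (hPI : WeakPoincare μ 1 CP lP)
    (x : X) {R : ℝ} (hR : 0 < R) (hcpt : IsCompact (closedBall x (lP * R))) :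
    ball x R ⊆ connectedComponentIn (closedBall x (lP * R)) x := by
  classical
  have hxK : x ∈ closedBall x (lP * R) := mem_closedBall_self (by positivity)
  have hBK : ball x R ⊆ closedBall x (lP * R) := ball_subset_closedBall.trans
    (closedBall_subset_closedBall (by nlinarith))
  intro y hy
  rw [connectedComponentIn_eq_image hxK]
  by_contra hcon
  have : CompactSpace (closedBall x (lP * R)) := isCompact_iff_compactSpace.1 hcpt
  have h1 : (⟨y, hBK hy⟩ : closedBall x (lP * R)) ∉ connectedComponent ⟨x, hxK⟩ := fun h => hcon ⟨_, h, rfl⟩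
  rw [connectedComponent_eq_iInter_isClopen, mem_iInter] at h1
  simp only [not_forall] at h1
  obtain ⟨⟨Z, hZ, hxZ⟩, hyZ⟩ := h1
  simp only at hyZ
  set A : Set X := Subtype.val '' Z
  set A' : Set X := Subtype.val '' Zᶜ
  have hA : IsClosed A := (hcpt.isClosed.isClosedEmbedding_subtypeVal).isClosedMap _ hZ.1
  have hA' : IsClosed A' := (hcpt.isClosed.isClosedEmbedding_subtypeVal).isClosedMap _ hZ.2.isClosed_compl
  have hdisj : A ∩ A' = ∅ := by
    rw [← disjoint_iff_inter_eq_empty]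
    exact disjoint_image_of_injective Subtype.val_injective disjoint_compl_right
  have hun : closedBall x (lP * R) ⊆ A ∪ A' := fun z hz => by
    by_cases h : (⟨z, hz⟩ : closedBall x (lP * R)) ∈ Z
    · exact Or.inl ⟨_, h, rfl⟩
    · exact Or.inr ⟨_, h, rfl⟩
  set u : X → ℝ := A.indicator 1
  have hu : Measurable u := measurable_one.indicator hA.measurableSet
  have hub : ∀ z, |u z| ≤ 1 := fun z => by
    simp only [u, indicator]; split_ifs <;> simp
  have hug : IsUpperGradientOn u 0 (closedBall x (lP * R)) := by
    intro L hL γ hγ hm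
    have hpre : IsPreconnected (γ '' Icc 0 L) := isPreconnected_Icc.image _ hγ.continuousOn
    have h0 : γ 0 ∈ γ '' Icc 0 L := ⟨0, by simpa, rfl⟩
    have hL' : γ L ∈ γ '' Icc 0 L := ⟨L, by simpa, rfl⟩
    have := isPreconnected_iff_subset_of_disjoint_closed.1 hpre A A' hA hA'
      ((image_subset_iff.2 hm).trans hun) (by rw [hdisj, inter_empty])
    have : u (γ L) = u (γ 0) := by
      rcases this with h | h
      · simp [u, h h0, h hL']
      · have k : ∀ z ∈ A', z ∉ A := fun z hz hz' => by
          have : z ∈ A ∩ A' := ⟨hz', hz⟩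
          simp [hdisj] at this
        simp [u, k _ (h h0), k _ (h hL')]
    simp [this]
  have hP := poincare_local hD hPI hu hub measurable_zero x hR hug
  set m := ⨍ z in ball x R, u z ∂μ
  simp only [Pi.zero_apply, setLAverage_eq, lintegral_zero, ENNReal.zero_div, mul_zero, nonpos_iff_eq_zero,
    ENNReal.ofReal_eq_zero] at hP
  have hBfin := dbl_lt_top hD x R
  have hBpos := dbl_pos hD x hR
  rw [setAverage_eq, smul_eq_mul] at hP
  have hreal : 0 < μ.real (ball x R) := ENNReal.toReal_pos hBpos.ne' hBfin.ne
  have hint0 : ∫ y in ball x R, |u y - m| ∂μ = 0 := by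
    refine le_antisymm ?_ (integral_nonneg fun _ => abs_nonneg _)
    by_contra hh
    push Not at hh
    have : 0 < (μ.real (ball x R))⁻¹ * ∫ y in ball x R, |u y - m| ∂μ := by positivity
    linarith
  have hfinm : IsFiniteMeasure (μ.restrict (ball x R)) := ⟨by simpa using hBfin⟩
  have hIa : Integrable (fun y => |u y - m|) (μ.restrict (ball x R)) :=
    ((bdd_integrableOn hD hu hub x R).sub (integrable_const m)).abs
  rw [integral_eq_zero_iff_of_nonneg (fun _ => abs_nonneg _) hIa] at hint0
  have key : ∀ (z : X) (c : ℝ) (D : Set X), z ∈ D → IsOpen D → D ⊆ ball x R → (∀ w ∈ D, u w = c) → c = m := by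
    intro z c D hz hDo hDB hc
    have : ∃ w ∈ D, |u w - m| = 0 := by
      by_contra! hne
      obtain ⟨ε, hε, hεD⟩ := Metric.isOpen_iff.1 hDo z hz
      have h0 : μ.restrict (ball x R) (ball z ε) = 0 :=
        measure_mono_null (fun w hw => hne w (hεD hw)) (ae_iff.1 hint0)
      rw [Measure.restrict_apply measurableSet_ball, inter_eq_left.2 (hεD.trans hDB)] at h0
      exact (dbl_pos hD z hε).ne' h0
    obtain ⟨w, hw, h⟩ := this
    rw [abs_eq_zero, hc w hw] at h
    linarith
  have hk1 := key x 1 (ball x R \ A') ⟨mem_ball_self hR, fun h => by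
      obtain ⟨w, hw, h⟩ := h
      have : w = ⟨x, hxK⟩ := Subtype.ext h
      exact hw (this ▸ hxZ)⟩ (isOpen_ball.sdiff hA') sdiff_subset (fun w hw => by
      have : w ∈ A := (hun (hBK hw.1)).resolve_right hw.2
      simp [u, this])
  have hk0 := key y 0 (ball x R \ A) ⟨hy, fun h => by
      obtain ⟨w, hw, h⟩ := h
      have : w = ⟨y, hBK hy⟩ := Subtype.ext h
      exact hyZ (this ▸ hw)⟩ (isOpen_ball.sdiff hA) sdiff_subset (fun w hw => by
      simp [u, hw.2])
  linarith

theorem component_open (hD : IsDoublingWith μ Cμ) (hlP : 1 ≤ lP) (hPI : WeakPoincare μ 1 CP lP)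
    {G W : Set X} (hG : IsCompact (closure G)) (hWG : W ⊆ G) (hW : IsOpen W) (y : X) :
    IsOpen (connectedComponentIn W y) := by
  rw [Metric.isOpen_iff]
  intro z hz
  have hzW := connectedComponentIn_subset _ _ hz
  obtain ⟨ε, hε, hεW⟩ := Metric.isOpen_iff.1 hW z hzW
  have hlP0 : 0 < lP := by linarith
  have hR : 0 < ε / (2 * lP) := by positivity
  have hsub : closedBall z (lP * (ε / (2 * lP))) ⊆ W := by
    refine (closedBall_subset_ball ?_).trans hεW
    have : lP * (ε / (2 * lP)) = ε / 2 := by field_simp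
    rw [this]; linarith
  refine ⟨_, hR, (ball_subset_component hD hlP hPI z hR ?_).trans ?_⟩
  · exact hG.of_isClosed_subset isClosed_closedBall ((hsub.trans hWG).trans subset_closure)
  · rw [connectedComponentIn_eq hz]
    exact connectedComponentIn_mono z hsub

end


section
variable {X : Type*} [MetricSpace X] [MeasurableSpace X] [BorelSpace X] {μ : Measure X} {Cμ CP lP : ℝ}

theorem sub_mean (hD : IsDoublingWith μ Cμ) {u : X → ℝ} (hu : Measurable u) {M : ℝ}
    (hM : ∀ x, |u x| ≤ M) {x z : X} {δ R C m : ℝ} (hδ : 0 < δ) (hR : 0 < R)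
    (hsub : ball z δ ⊆ ball x R)
    (hC : μ (ball x R) ≤ ENNReal.ofReal C * μ (ball z δ)) (hC0 : 0 ≤ C) :
    |(⨍ y in ball z δ, u y ∂μ) - m| ≤ C * ⨍ y in ball x R, |u y - m| ∂μ := by
  have hf : ∀ (a : X) (r : ℝ), IsFiniteMeasure (μ.restrict (ball a r)) :=
    fun a r => ⟨by simpa using dbl_lt_top hD a r⟩
  have := hf z δ
  have := hf x R
  have hz : 0 < μ.real (ball z δ) := ENNReal.toReal_pos (dbl_pos hD z hδ).ne' (dbl_lt_top hD z δ).ne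
  have hx : 0 < μ.real (ball x R) := ENNReal.toReal_pos (dbl_pos hD x hR).ne' (dbl_lt_top hD x R).ne
  have hCr : μ.real (ball x R) ≤ C * μ.real (ball z δ) := by
    have := ENNReal.toReal_mono (ENNReal.mul_ne_top ENNReal.ofReal_ne_top (dbl_lt_top hD z δ).ne) hC
    rwa [ENNReal.toReal_mul, ENNReal.toReal_ofReal hC0] at this
  have hi : IntegrableOn (fun y => |u y - m|) (ball x R) μ :=
    ((bdd_integrableOn hD hu hM x R).sub (integrable_const m)).abs
  have e : (⨍ y in ball z δ, u y ∂μ) - m = (μ.real (ball z δ))⁻¹ * ∫ y in ball z δ, (u y - m) ∂μ := by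
    rw [setAverage_eq, smul_eq_mul, integral_sub (bdd_integrableOn hD hu hM z δ) (integrable_const m)]
    simp only [integral_const, smul_eq_mul, measureReal_restrict_apply_univ]
    field_simp
  have h1 : |∫ y in ball z δ, (u y - m) ∂μ| ≤ ∫ y in ball x R, |u y - m| ∂μ :=
    (abs_integral_le_integral_abs).trans
      (setIntegral_mono_set hi (Eventually.of_forall fun _ => abs_nonneg _) (Eventually.of_forall hsub))
  rw [e, abs_mul, abs_of_pos (inv_pos.2 hz), setAverage_eq, smul_eq_mul, ← mul_assoc]
  have hI : 0 ≤ ∫ y in ball x R, |u y - m| ∂μ := integral_nonneg fun _ => abs_nonneg _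
  have h2 : (μ.real (ball z δ))⁻¹ ≤ C * (μ.real (ball x R))⁻¹ := by
    rw [← div_eq_mul_inv, le_div_iff₀ hx, inv_mul_le_iff₀ hz]
    linarith
  calc _ ≤ (μ.real (ball z δ))⁻¹ * ∫ y in ball x R, |u y - m| ∂μ := by gcongr
    _ ≤ _ := by gcongr

theorem mean_diff (hD : IsDoublingWith μ Cμ) (hCP : 1 ≤ CP) (hlP : 1 ≤ lP) (hPI : WeakPoincare μ 1 CP lP) :
    ∃ C : ℝ, 0 < C ∧ ∀ (u : X → ℝ), Measurable u → ∀ M : ℝ, (∀ x, |u x| ≤ M) →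
      ∀ ρ : X → ℝ≥0∞, Measurable ρ → ∀ (x x' : X) (δ : ℝ), 0 < δ → dist x x' ≤ δ →
      IsUpperGradientOn u ρ (closedBall x (lP * (2 * δ))) →
      ENNReal.ofReal |(⨍ y in ball x δ, u y ∂μ) - ⨍ y in ball x' δ, u y ∂μ| ≤
        ENNReal.ofReal (C * δ) * ((∫⁻ y in ball x (lP * (2 * δ)), ρ y ∂μ) / μ (ball x δ)) := by
  obtain ⟨C3, hC3, h3⟩ := dbl_const hD 3
  refine ⟨2 * C3 * (4 * CP), by positivity, ?_⟩
  intro u hu M hM ρ hρ x x' δ hδ hxx hug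
  have hP := poincare_local hD hPI hu hM hρ x (R := 2 * δ) (by positivity) hug
  set m := ⨍ z in ball x (2 * δ), u z ∂μ
  set O := ⨍ y in ball x (2 * δ), |u y - m| ∂μ
  have hsub : ∀ z, dist x z ≤ δ → ball z δ ⊆ ball x (2 * δ) ∧
      μ (ball x (2 * δ)) ≤ ENNReal.ofReal C3 * μ (ball z δ) := fun z hz =>
    ⟨ball_subset_ball' (by rw [dist_comm] at hz; linarith),
      (measure_mono (ball_subset_ball' (by linarith))).trans (h3 z δ hδ)⟩
  have k1 := sub_mean hD hu hM (m := m) hδ (by positivity) (hsub x (by simpa using hδ.le)).1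
    (hsub x (by simpa using hδ.le)).2 hC3.le
  have k2 := sub_mean hD hu hM (m := m) hδ (by positivity) (hsub x' hxx).1 (hsub x' hxx).2 hC3.le
  have k3 : |(⨍ y in ball x δ, u y ∂μ) - ⨍ y in ball x' δ, u y ∂μ| ≤ 2 * C3 * O := by
    have := abs_sub_le (⨍ y in ball x δ, u y ∂μ) m (⨍ y in ball x' δ, u y ∂μ)
    rw [abs_sub_comm m] at this
    linarith
  have hdiam : diam (ball x (2 * δ)) ≤ 4 * δ := by
    have := diam_ball (x := x) (r := 2 * δ) (by positivity)
    linarith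
  have hmu : μ (ball x δ) ≤ μ (ball x (lP * (2 * δ))) :=
    measure_mono (ball_subset_ball (by nlinarith))
  calc _ ≤ ENNReal.ofReal (2 * C3 * O) := ENNReal.ofReal_le_ofReal k3
    _ = ENNReal.ofReal (2 * C3) * ENNReal.ofReal O := ENNReal.ofReal_mul (by positivity)
    _ ≤ ENNReal.ofReal (2 * C3) * (ENNReal.ofReal (CP * (4 * δ)) *
        ((∫⁻ y in ball x (lP * (2 * δ)), ρ y ∂μ) / μ (ball x δ))) := by
      gcongr
      refine hP.trans ?_
      rw [setLAverage_eq]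
      gcongr
    _ = _ := by
      rw [← mul_assoc, ← ENNReal.ofReal_mul (by positivity)]; congr 2; ring

/-- a bump function -/
noncomputable def bump (c : X) (r : ℝ) (z : X) : ℝ := min 1 (max 0 (2 - dist z c / r))

theorem bump_curve {c : X} {r : ℝ} (hr : 0 < r) {L : ℝ} {γ : ℝ → X} (hγ : LipschitzOnWith 1 γ (Icc 0 L))
    {a b : ℝ} (ha : a ∈ Icc 0 L) (hb : b ∈ Icc 0 L) :
    ENNReal.ofReal (bump c r (γ a) - bump c r (γ b)) ≤
      ∫⁻ t in Icc 0 L, (ball c (2 * r)).indicator (fun _ => ENNReal.ofReal r⁻¹) (γ t) := by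
  set f : ℝ → ℝ := fun t => bump c r (γ t)
  have hf : LipschitzOnWith (Real.toNNReal r⁻¹) f (Icc 0 L) := by
    refine LipschitzOnWith.of_dist_le_mul fun s hs t ht => ?_
    rw [Real.coe_toNNReal _ (by positivity), Real.dist_eq]
    have h1 := hγ.dist_le_mul s hs t ht
    rw [NNReal.coe_one, one_mul] at h1
    have h2 : |max 0 (2 - dist (γ s) c / r) - max 0 (2 - dist (γ t) c / r)| ≤ r⁻¹ * dist s t := by
      refine (abs_max_sub_max_le_max _ _ _ _).trans ?_
      rw [sub_self, abs_zero, max_eq_right (abs_nonneg _)]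
      rw [show 2 - dist (γ s) c / r - (2 - dist (γ t) c / r) = r⁻¹ * (dist (γ t) c - dist (γ s) c) by ring,
        abs_mul, abs_of_pos (inv_pos.2 hr)]
      gcongr
      refine (abs_dist_sub_le _ _ _).trans ?_
      rw [dist_comm]; exact h1
    refine le_trans ?_ h2
    refine (abs_min_sub_min_le_max _ _ _ _).trans ?_
    rw [sub_self, abs_zero, max_eq_right (abs_nonneg _)]
  obtain ⟨V, hVo, hV⟩ := continuousOn_iff'.1 hγ.continuousOn (ball c (2 * r)) isOpen_ball
  set B := γ ⁻¹' ball c (2 * r) ∩ Icc 0 L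
  have hBm : MeasurableSet B := by rw [hV]; exact hVo.measurableSet.inter measurableSet_Icc
  have hintg : ∫⁻ t in Icc 0 L, (ball c (2 * r)).indicator (fun _ => ENNReal.ofReal r⁻¹) (γ t)
      ≥ ENNReal.ofReal r⁻¹ * volume B := by
    rw [← setLIntegral_const]
    calc ∫⁻ t in B, ENNReal.ofReal r⁻¹ ≤ ∫⁻ t in B, (ball c (2 * r)).indicator (fun _ => ENNReal.ofReal r⁻¹) (γ t) := by
          refine setLIntegral_mono' hBm fun t ht => ?_
          have ht1 : γ t ∈ ball c (2 * r) := ht.1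
          rw [indicator_of_mem ht1]
      _ ≤ _ := lintegral_mono_set inter_subset_right
  refine le_trans ?_ hintg
  have hfnn : ∀ t, 0 ≤ f t := fun t => le_min zero_le_one (le_max_left _ _)
  have himg : Ioc (f b) (f a) ⊆ f '' B := by
    intro v hv
    have h1 := intermediate_value_uIcc (hf.continuousOn.mono (ordConnected_Icc.uIcc_subset hb ha))
    obtain ⟨t, ht, rfl⟩ := h1 (Icc_subset_uIcc (Ioc_subset_Icc_self hv))
    refine ⟨t, ⟨?_, ordConnected_Icc.uIcc_subset hb ha ht⟩, rfl⟩
    have h0 : 0 < f t := (hfnn b).trans_lt hv.1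
    have h2 : 0 < max 0 (2 - dist (γ t) c / r) := h0.trans_le (min_le_right _ _)
    rw [lt_max_iff] at h2
    have h3 := h2.resolve_left (lt_irrefl _)
    have : dist (γ t) c / r < 2 := by linarith
    rw [div_lt_iff₀ hr] at this
    exact this
  have h4 := (hf.mono (inter_subset_right : B ⊆ _)).hausdorffMeasure_image_le (d := 1) zero_le_one
  rw [hausdorffMeasure_real, ENNReal.rpow_one] at h4
  calc _ = volume (Ioc (f b) (f a)) := by rw [Real.volume_Ioc]
    _ ≤ _ := measure_mono himg
    _ ≤ _ := h4

theorem frontier_hit {U : Set X} {γ : ℝ → X} {L : ℝ} (hγ : ContinuousOn γ (Icc 0 L)) {a b : ℝ}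
    (ha : a ∈ Icc 0 L) (hb : b ∈ Icc 0 L) (h1 : γ a ∈ U) (h2 : γ b ∉ U) :
    ∃ t ∈ Icc 0 L, γ t ∈ frontier U := by
  have hpre : IsPreconnected (γ '' Icc 0 L) := isPreconnected_Icc.image _ hγ
  by_contra! hcon
  have hfr : ∀ z ∈ γ '' Icc 0 L, z ∉ frontier U := by
    rintro _ ⟨t, ht, rfl⟩; exact hcon t ht
  have hs : γ '' Icc 0 L ⊆ interior U ∪ (closure U)ᶜ := by
    intro z hz
    by_contra hh
    simp only [mem_union, mem_compl_iff, not_or, not_not] at hh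
    exact hfr z hz ⟨hh.2, hh.1⟩
  have := isPreconnected_iff_subset_of_disjoint.1 hpre (interior U) (closure U)ᶜ isOpen_interior
    isClosed_closure.isOpen_compl hs (by
      ext z
      simp only [mem_inter_iff, mem_compl_iff, mem_empty_iff_false, iff_false, not_and, not_not]
      exact fun _ h => subset_closure (interior_subset h))
  rcases this with h | h
  · exact h2 (interior_subset (h ⟨b, hb, rfl⟩))
  · exact h ⟨a, ha, rfl⟩ (subset_closure h1)
end


section
variable {X : Type*} [MetricSpace X] [MeasurableSpace X] [BorelSpace X] {μ : Measure X} {Cμ CP lP : ℝ}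

theorem jump_bound (hD : IsDoublingWith μ Cμ) (hCP : 1 ≤ CP) (hlP : 1 ≤ lP) (hPI : WeakPoincare μ 1 CP lP) :
    ∃ C : ℝ, 0 < C ∧ ∀ (U T : Set X), IsOpen U → codimOneHausdorff μ T ≠ ⊤ →
      ∀ (x x' : X) (δ : ℝ), 0 < δ → dist x x' ≤ δ →
      frontier U ∩ closedBall x (lP * (2 * δ)) ⊆ T →
      ENNReal.ofReal |(⨍ y in ball x δ, U.indicator 1 y ∂μ) - ⨍ y in ball x' δ, U.indicator (1 : X → ℝ) y ∂μ| ≤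
        ENNReal.ofReal (C * δ) * (codimOneHausdorff μ T / μ (ball x δ)) := by
  classical
  obtain ⟨C1, hC1, hmd⟩ := mean_diff hD hCP hlP hPI
  obtain ⟨C2, hC2, hdb⟩ := dbl_const hD 2
  refine ⟨C1 * C2, by positivity, fun U T hU hT x x' δ hδ hxx hfr => ?_⟩
  set H := codimOneHausdorff μ T
  have hx0 := (dbl_pos hD x hδ).ne'
  have hx0' := (dbl_pos hD x' hδ).ne'
  have main : ∀ ε : ℝ, 0 < ε →
      ENNReal.ofReal |(⨍ y in ball x δ, U.indicator 1 y ∂μ) - ⨍ y in ball x' δ, U.indicator (1 : X → ℝ) y ∂μ| ≤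
        ENNReal.ofReal (C1 * C2 * δ) * ((H + ENNReal.ofReal ε) / μ (ball x δ)) +
        ENNReal.ofReal ε * (ENNReal.ofReal C2 * (H + ENNReal.ofReal ε) / μ (ball x δ) +
          ENNReal.ofReal C2 * (H + ENNReal.ofReal ε) / μ (ball x' δ)) := by
    intro ε hε
    obtain ⟨c, r, hcov, hr, hsum⟩ := codimPre_exists (μ := μ) (δ := ε) (A := T) (K := H + ENNReal.ofReal ε)
      ((codimPre_le_codim hε T).trans_lt (ENNReal.lt_add_right hT (by simpa using hε)))
    set ψ : X → ℝ := fun z => ⨆ j, bump (c j) (r j) z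
    have hb1 : ∀ j z, bump (c j) (r j) z ≤ 1 := fun j z => min_le_left _ _
    have hb0 : ∀ j z, 0 ≤ bump (c j) (r j) z := fun j z => le_min zero_le_one (le_max_left _ _)
    have hbdd : ∀ z, BddAbove (range fun j => bump (c j) (r j) z) := fun z =>
      ⟨1, by rintro _ ⟨j, rfl⟩; exact hb1 j z⟩
    have hle : ∀ j z, bump (c j) (r j) z ≤ ψ z := fun j z => le_ciSup (hbdd z) j
    have hψ1 : ∀ z, ψ z ≤ 1 := fun z => ciSup_le fun j => hb1 j z
    have hψ0 : ∀ z, 0 ≤ ψ z := fun z => (hb0 0 z).trans (hle 0 z)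
    have hψm : Measurable ψ := Measurable.iSup fun j => by
      unfold bump
      fun_prop
    set w : X → ℝ := fun z => if z ∈ U then 1 else ψ z
    have hw : Measurable w := Measurable.ite hU.measurableSet measurable_const hψm
    have hwψ : ∀ z, ψ z ≤ w z := fun z => by
      simp only [w]; split_ifs; exacts [hψ1 z, le_rfl]
    have hw1 : ∀ z, w z ≤ 1 := fun z => by
      simp only [w]; split_ifs; exacts [le_rfl, hψ1 z]
    have hw0 : ∀ z, 0 ≤ w z := fun z => (hψ0 z).trans (hwψ z)
    have hwb : ∀ z, |w z| ≤ 1 := fun z => abs_le.2 ⟨by linarith [hw0 z], hw1 z⟩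
    set g : ℕ → X → ℝ≥0∞ := fun j => (ball (c j) (2 * r j)).indicator (fun _ => ENNReal.ofReal (r j)⁻¹)
    have hgm : ∀ j, Measurable (g j) := fun j => measurable_const.indicator measurableSet_ball
    set h : X → ℝ≥0∞ := fun z => ∑' j, g j z
    have hhm : Measurable h := Measurable.tsum hgm
    have hug : IsUpperGradientOn w h (closedBall x (lP * (2 * δ))) := by
      intro L hL γ hγ hm
      set I := ∫⁻ t in Icc 0 L, h (γ t)
      rcases eq_or_ne I ⊤ with hI | hI
      · rw [hI]; exact le_top
      have hbump : ∀ j, ∀ a ∈ Icc 0 L, ∀ b ∈ Icc 0 L,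
          bump (c j) (r j) (γ a) ≤ ψ (γ b) + I.toReal := by
        intro j a ha b hb
        have h1 := bump_curve (c := c j) (hr j).1 hγ ha hb
        have h2 : ENNReal.ofReal (bump (c j) (r j) (γ a) - bump (c j) (r j) (γ b)) ≤ I :=
          h1.trans (lintegral_mono fun t => ENNReal.le_tsum (f := fun j => g j (γ t)) j)
        have h3 := (ENNReal.ofReal_le_iff_le_toReal hI).1 h2
        linarith [hle j (γ b)]
      have hside : ∀ a ∈ Icc 0 L, ∀ b ∈ Icc 0 L, w (γ a) ≤ w (γ b) + I.toReal := by
        intro a ha b hb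
        by_cases hbU : γ b ∈ U
        · have : w (γ b) = 1 := by simp [w, hbU]
          rw [this]
          linarith [hw1 (γ a), ENNReal.toReal_nonneg (a := I)]
        · by_cases haU : γ a ∈ U
          · obtain ⟨t, ht, htf⟩ := frontier_hit hγ.continuousOn ha hb haU hbU
            obtain ⟨j, hj⟩ := mem_iUnion.1 (hcov (hfr ⟨htf, hm ht⟩))
            have h1 := hbump j t ht b hb
            have h2 : bump (c j) (r j) (γ t) = 1 := by
              unfold bump
              have h3 : dist (γ t) (c j) / r j < 1 := by
                rw [div_lt_one (hr j).1]; exact hj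
              rw [min_eq_left]
              exact le_max_of_le_right (by linarith)
            have h4 := hw1 (γ a)
            have h5 := hwψ (γ b)
            linarith
          · have h1 : w (γ a) = ψ (γ a) := by simp [w, haU]
            rw [h1]
            refine ciSup_le fun j => ?_
            linarith [hbump j a ha b hb, hwψ (γ b)]
      rw [ENNReal.ofReal_le_iff_le_toReal hI, abs_le]
      have h0 : (0 : ℝ) ∈ Icc 0 L := by simpa
      have hL' : L ∈ Icc 0 L := by simpa
      constructor <;> linarith [hside 0 h0 L hL', hside L hL' 0 h0]
    have hmd' := hmd w hw 1 hwb h hhm x x' δ hδ hxx hug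
    have hball : ∀ j, μ (ball (c j) (2 * r j)) ≤ ENNReal.ofReal C2 * μ (ball (c j) (r j)) := fun j =>
      hdb _ _ (hr j).1
    have hintg : ∫⁻ y in ball x (lP * (2 * δ)), h y ∂μ ≤ ENNReal.ofReal C2 * (H + ENNReal.ofReal ε) := by
      calc ∫⁻ y in ball x (lP * (2 * δ)), h y ∂μ ≤ ∫⁻ y, h y ∂μ := setLIntegral_le_lintegral _ _
        _ = ∑' j, ∫⁻ y, g j y ∂μ := lintegral_tsum fun j => (hgm j).aemeasurable
        _ ≤ ∑' j, ENNReal.ofReal C2 * (μ (ball (c j) (r j)) / ENNReal.ofReal (r j)) := by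
          refine ENNReal.tsum_le_tsum fun j => ?_
          simp only [g]
          rw [lintegral_indicator_const measurableSet_ball, ENNReal.ofReal_inv_of_pos (hr j).1, mul_comm,
            ← div_eq_mul_inv, ← mul_div_assoc]
          gcongr
          exact hball j
        _ ≤ _ := by rw [ENNReal.tsum_mul_left]; gcongr
    set D := ⋃ j, ball (c j) (2 * r j)
    have hDm : μ D ≤ ENNReal.ofReal ε * (ENNReal.ofReal C2 * (H + ENNReal.ofReal ε)) := by
      calc μ D ≤ ∑' j, μ (ball (c j) (2 * r j)) := measure_iUnion_le _
        _ ≤ ∑' j, ENNReal.ofReal ε * (ENNReal.ofReal C2 * (μ (ball (c j) (r j)) / ENNReal.ofReal (r j))) := by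
          refine ENNReal.tsum_le_tsum fun j => (hball j).trans ?_
          rw [mul_left_comm]
          gcongr
          rw [← mul_div_assoc, mul_comm, mul_div_assoc]
          have h1 : (1 : ℝ≥0∞) ≤ ENNReal.ofReal ε / ENNReal.ofReal (r j) := by
            rw [ENNReal.le_div_iff_mul_le (Or.inl (by simpa using (hr j).1)) (Or.inl (by simp)), one_mul]
            exact ENNReal.ofReal_le_ofReal (hr j).2
          calc μ (ball (c j) (r j)) = μ (ball (c j) (r j)) * 1 := (mul_one _).symm
            _ ≤ _ := by gcongr
        _ ≤ _ := by rw [ENNReal.tsum_mul_left, ENNReal.tsum_mul_left]; gcongr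
    have hDmeas : MeasurableSet D := (isOpen_iUnion fun j => isOpen_ball).measurableSet
    have hum : Measurable (U.indicator (1 : X → ℝ)) := measurable_one.indicator hU.measurableSet
    have hub : ∀ z, |U.indicator (1 : X → ℝ) z| ≤ 1 := fun z => by
      simp only [indicator]; split_ifs <;> simp
    have hdiff : ∀ z, |w z - U.indicator (1 : X → ℝ) z| ≤ D.indicator 1 z := by
      intro z
      by_cases hz : z ∈ U
      · simp only [w, hz, if_true, indicator_of_mem, Pi.one_apply, sub_self, abs_zero]
        exact indicator_nonneg (fun _ _ => zero_le_one) _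
      · simp only [w, hz, if_false, not_false_eq_true, indicator_of_notMem, sub_zero, abs_of_nonneg (hψ0 z)]
        by_cases hzD : z ∈ D
        · simpa [hzD] using hψ1 z
        · rw [indicator_of_notMem hzD]
          refine ciSup_le fun j => ?_
          have : z ∉ ball (c j) (2 * r j) := fun hh => hzD (mem_iUnion.2 ⟨j, hh⟩)
          rw [mem_ball, not_lt, ← le_div_iff₀ (hr j).1] at this
          unfold bump
          refine (min_le_right _ _).trans (max_le le_rfl (by linarith))
    have hav : ∀ z, ENNReal.ofReal |(⨍ y in ball z δ, w y ∂μ) - ⨍ y in ball z δ, U.indicator (1 : X → ℝ) y ∂μ| ≤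
        ENNReal.ofReal ε * (ENNReal.ofReal C2 * (H + ENNReal.ofReal ε) / μ (ball z δ)) := by
      intro z
      have hz0 : 0 < μ.real (ball z δ) := ENNReal.toReal_pos (dbl_pos hD z hδ).ne' (dbl_lt_top hD z δ).ne
      have hfm : IsFiniteMeasure (μ.restrict (ball z δ)) := ⟨by simpa using dbl_lt_top hD z δ⟩
      have hDint : IntegrableOn (D.indicator (1 : X → ℝ)) (ball z δ) μ :=
        (integrable_const (1 : ℝ)).indicator hDmeas
      have i1 := bdd_integrableOn hD hw hwb z δ
      have i2 := bdd_integrableOn hD hum hub z δ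
      have h1 : |∫ y in ball z δ, (w y - U.indicator (1 : X → ℝ) y) ∂μ| ≤ μ.real (D ∩ ball z δ) := by
        refine (abs_integral_le_integral_abs).trans ?_
        refine (integral_mono (i1.sub i2).abs hDint hdiff).trans (le_of_eq ?_)
        rw [integral_indicator_one hDmeas, measureReal_restrict_apply hDmeas]
      rw [setAverage_eq, setAverage_eq, smul_eq_mul, smul_eq_mul, ← mul_sub, ← integral_sub i1 i2, abs_mul,
        abs_of_pos (inv_pos.2 hz0), ENNReal.ofReal_mul (inv_pos.2 hz0).le, ENNReal.ofReal_inv_of_pos hz0,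
        Measure.real, ENNReal.ofReal_toReal (dbl_lt_top hD z δ).ne, ← mul_div_assoc, div_eq_mul_inv, mul_comm]
      gcongr
      refine le_trans ?_ hDm
      calc _ ≤ ENNReal.ofReal (μ.real (D ∩ ball z δ)) := ENNReal.ofReal_le_ofReal h1
        _ ≤ μ (D ∩ ball z δ) := ENNReal.ofReal_toReal_le
        _ ≤ _ := measure_mono inter_subset_left
    have htri : |(⨍ y in ball x δ, U.indicator (1 : X → ℝ) y ∂μ) - ⨍ y in ball x' δ, U.indicator (1 : X → ℝ) y ∂μ| ≤
        |(⨍ y in ball x δ, w y ∂μ) - ⨍ y in ball x' δ, w y ∂μ| +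
        (|(⨍ y in ball x δ, w y ∂μ) - ⨍ y in ball x δ, U.indicator (1 : X → ℝ) y ∂μ| +
         |(⨍ y in ball x' δ, w y ∂μ) - ⨍ y in ball x' δ, U.indicator (1 : X → ℝ) y ∂μ|) := by
      generalize (⨍ y in ball x δ, U.indicator (1 : X → ℝ) y ∂μ) = p1
      generalize (⨍ y in ball x' δ, U.indicator (1 : X → ℝ) y ∂μ) = p2
      generalize (⨍ y in ball x δ, w y ∂μ) = p3
      generalize (⨍ y in ball x' δ, w y ∂μ) = p4
      have := abs_add_three (p3 - p4) (p1 - p3) (p4 - p2)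
      rw [abs_sub_comm p1 p3] at this
      rw [show p1 - p2 = p3 - p4 + (p1 - p3) + (p4 - p2) by ring]
      linarith
    refine (ENNReal.ofReal_le_ofReal htri).trans ?_
    rw [ENNReal.ofReal_add (abs_nonneg _) (by positivity), ENNReal.ofReal_add (abs_nonneg _) (abs_nonneg _), mul_add]
    refine add_le_add (hmd'.trans ?_) (add_le_add (hav x) (hav x'))
    calc _ ≤ ENNReal.ofReal (C1 * δ) * (ENNReal.ofReal C2 * (H + ENNReal.ofReal ε) / μ (ball x δ)) := by gcongr
      _ = _ := by
        rw [mul_div_assoc, ← mul_assoc, ← ENNReal.ofReal_mul (by positivity)]; congr 2; ring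
  have hl : Tendsto (fun ε : ℝ => ENNReal.ofReal (C1 * C2 * δ) * ((H + ENNReal.ofReal ε) / μ (ball x δ)) +
        ENNReal.ofReal ε * (ENNReal.ofReal C2 * (H + ENNReal.ofReal ε) / μ (ball x δ) +
          ENNReal.ofReal C2 * (H + ENNReal.ofReal ε) / μ (ball x' δ))) (𝓝[>] 0)
      (𝓝 (ENNReal.ofReal (C1 * C2 * δ) * ((H + ENNReal.ofReal 0) / μ (ball x δ)) +
        ENNReal.ofReal 0 * (ENNReal.ofReal C2 * (H + ENNReal.ofReal 0) / μ (ball x δ) +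
          ENNReal.ofReal C2 * (H + ENNReal.ofReal 0) / μ (ball x' δ)))) := by
    have t0 : Tendsto (fun ε : ℝ => ENNReal.ofReal ε) (𝓝[>] 0) (𝓝 (ENNReal.ofReal 0)) :=
      (ENNReal.continuous_ofReal.tendsto 0).mono_left nhdsWithin_le_nhds
    have t1 : Tendsto (fun ε : ℝ => H + ENNReal.ofReal ε) (𝓝[>] 0) (𝓝 (H + ENNReal.ofReal 0)) :=
      tendsto_const_nhds.add t0
    have hHt : H + ENNReal.ofReal 0 ≠ ⊤ := by simpa using hT
    have t2 : ∀ m : ℝ≥0∞, m ≠ 0 → Tendsto (fun ε : ℝ => (H + ENNReal.ofReal ε) / m) (𝓝[>] 0)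
        (𝓝 ((H + ENNReal.ofReal 0) / m)) := fun m hm =>
      ENNReal.Tendsto.div_const t1 (Or.inr hm)
    have t3 : ∀ m : ℝ≥0∞, m ≠ 0 → Tendsto (fun ε : ℝ => ENNReal.ofReal C2 * (H + ENNReal.ofReal ε) / m) (𝓝[>] 0)
        (𝓝 (ENNReal.ofReal C2 * (H + ENNReal.ofReal 0) / m)) := fun m hm =>
      ENNReal.Tendsto.div_const (ENNReal.Tendsto.const_mul t1 (Or.inr (by simp))) (Or.inr hm)
    refine (ENNReal.Tendsto.const_mul (t2 _ hx0) (Or.inr (by simp))).add ?_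
    refine ENNReal.Tendsto.mul t0 (Or.inr ?_) ((t3 _ hx0).add (t3 _ hx0')) (Or.inr (by simp))
    refine ENNReal.add_ne_top.2 ⟨ENNReal.div_ne_top (ENNReal.mul_ne_top (by simp) hHt) hx0,
      ENNReal.div_ne_top (ENNReal.mul_ne_top (by simp) hHt) hx0'⟩
  have := ge_of_tendsto hl (eventually_mem_nhdsWithin.mono fun ε hε => main ε hε)
  simpa using this
end


section
variable {X : Type*} [MetricSpace X] [MeasurableSpace X] [BorelSpace X] {μ : Measure X} {Cμ CP lP : ℝ}

theorem path_sum {K : Set X} {v : X → ℝ} {σ : X → ℝ≥0∞} {δ : ℝ} (hδ : 0 < δ)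
    {γ : ℝ → X} (hγ : ContinuousOn γ (Icc 0 1)) (hinj : InjOn γ (Icc 0 1)) (hK : MapsTo γ (Icc 0 1) K)
    (H1 : ∀ x ∈ K, ∀ x' ∈ K, ∀ z ∈ K, dist x x' ≤ δ → dist x z ≤ δ →
      ENNReal.ofReal (v x - v x') ≤ ENNReal.ofReal δ * σ z)
    (H2 : ∀ z ∈ K, dist z (γ 1) ≤ δ → v z ≤ 0) :
    ENNReal.ofReal (v (γ 0)) ≤ ∫⁻ z in γ '' Icc 0 1, σ z ∂μH[1] := by
  obtain ⟨τ, hτ, huc⟩ : ∃ τ > 0, ∀ s ∈ Icc (0 : ℝ) 1, ∀ t ∈ Icc (0 : ℝ) 1, dist s t < τ → dist (γ s) (γ t) < δ := by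
    have := isCompact_Icc.uniformContinuousOn_of_continuous hγ
    obtain ⟨τ, h1, h2⟩ := Metric.uniformContinuousOn_iff.1 this δ hδ
    exact ⟨τ, h1, h2⟩
  have key : ∀ n : ℕ, ∀ a ∈ Icc (0 : ℝ) 1, 1 - a < n * τ →
      ENNReal.ofReal (v (γ a)) ≤ ∫⁻ z in γ '' Icc a 1, σ z ∂μH[1] := by
    intro n
    induction n with
    | zero =>
      intro a ha h
      simp at h; linarith [ha.2]
    | succ n ih =>
      intro a ha h
      have hsub : Icc a 1 ⊆ Icc 0 1 := Icc_subset_Icc_left ha.1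
      have hfc : ContinuousOn (fun t => dist (γ a) (γ t)) (Icc a 1) :=
        (continuous_const.dist continuous_id).comp_continuousOn (hγ.mono hsub)
      by_cases hne : ∀ t ∈ Icc a 1, dist (γ a) (γ t) < δ
      · have := H2 (γ a) (hK ha) (hne 1 ⟨ha.2, le_rfl⟩).le
        rw [ENNReal.ofReal_of_nonpos this]; exact zero_le
      push Not at hne
      set Q := Icc a 1 ∩ (fun t => dist (γ a) (γ t)) ⁻¹' Ici δ
      have hQ : IsCompact Q := isCompact_Icc.of_isClosed_subset
        (hfc.preimage_isClosed_of_isClosed isClosed_Icc isClosed_Ici) inter_subset_left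
      obtain ⟨t0, ht0, ht0'⟩ := hne
      obtain ⟨c, hcQ, hcl⟩ := hQ.exists_isLeast ⟨t0, ht0, ht0'⟩
      have hc01 : c ∈ Icc (0 : ℝ) 1 := hsub hcQ.1
      have hcδ : δ ≤ dist (γ a) (γ c) := hcQ.2
      have hlt : ∀ t ∈ Ico a c, dist (γ a) (γ t) < δ := by
        intro t ht
        by_contra! hh
        have : t ∈ Q := ⟨⟨ht.1, ht.2.le.trans hcQ.1.2⟩, hh⟩
        exact absurd (hcl this) (not_le.2 ht.2)
      have himg : Icc 0 (dist (γ a) (γ c)) ⊆ (fun t => dist (γ a) (γ t)) '' Icc a c := by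
        have := intermediate_value_Icc hcQ.1.1 (hfc.mono (Icc_subset_Icc_right hcQ.1.2))
        simpa using this
      have hceq : dist (γ a) (γ c) = δ := by
        obtain ⟨t, ht, hte⟩ := himg ⟨hδ.le, hcδ⟩
        simp only at hte
        have : c ≤ t := hcl ⟨⟨ht.1, ht.2.trans hcQ.1.2⟩, hte.ge⟩
        have : t = c := le_antisymm ht.2 this
        rw [← this]; exact hte
      have hcτ : τ ≤ c - a := by
        by_contra! hh
        have := huc a ha c hc01 (by
          rw [Real.dist_eq, abs_sub_comm, abs_of_nonneg (by linarith [hcQ.1.1])]; exact hh)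
        linarith
      have hih := ih c hc01 (by push_cast at h; linarith)
      have hm1 : MeasurableSet (γ '' Icc c 1) :=
        (isCompact_Icc.image_of_continuousOn (hγ.mono (Icc_subset_Icc_left hc01.1))).measurableSet
      have hm2 : MeasurableSet (γ '' Icc a 1) :=
        (isCompact_Icc.image_of_continuousOn (hγ.mono hsub)).measurableSet
      set A := γ '' Icc a 1 \ γ '' Icc c 1
      have hAm : MeasurableSet A := hm2.diff hm1
      have hA1 : ∀ z ∈ A, z ∈ K ∧ dist (γ a) z ≤ δ := by
        rintro _ ⟨⟨t, ht, rfl⟩, hn⟩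
        refine ⟨hK (hsub ht), (hlt t ⟨ht.1, ?_⟩).le⟩
        by_contra! hh
        exact hn ⟨t, ⟨hh, ht.2⟩, rfl⟩
      have hA2 : γ '' Ico a c ⊆ A := by
        rintro _ ⟨t, ht, rfl⟩
        refine ⟨⟨t, ⟨ht.1, ht.2.le.trans hcQ.1.2⟩, rfl⟩, ?_⟩
        rintro ⟨s, hs, hse⟩
        have : s = t := hinj ⟨hc01.1.trans hs.1, hs.2⟩ ⟨ha.1.trans ht.1, ht.2.le.trans hc01.2⟩ hse
        linarith [ht.2, hs.1]
      have hHA : ENNReal.ofReal δ ≤ μH[1] A := by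
        have hL : LipschitzWith 1 (fun z => dist (γ a) z) := LipschitzWith.dist_right _
        have h1 := (hL.lipschitzOnWith (s := A)).hausdorffMeasure_image_le (d := 1) zero_le_one
        rw [hausdorffMeasure_real, ENNReal.coe_one, ENNReal.one_rpow, one_mul] at h1
        refine le_trans ?_ h1
        calc ENNReal.ofReal δ = volume (Ico 0 δ) := by rw [Real.volume_Ico, sub_zero]
          _ ≤ _ := measure_mono ?_
        intro s hs
        obtain ⟨t, ht, hte⟩ := himg ⟨hs.1, hs.2.le.trans hcδ⟩
        simp only at hte
        refine ⟨γ t, hA2 ⟨t, ⟨ht.1, lt_of_le_of_ne ht.2 ?_⟩, rfl⟩, hte⟩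
        rintro rfl
        have := hs.2
        linarith
      set D := ENNReal.ofReal (v (γ a) - v (γ c))
      have hδ0 : ENNReal.ofReal δ ≠ 0 := by simpa using hδ
      have hDA : D ≤ ∫⁻ z in A, σ z ∂μH[1] := by
        calc D = D / ENNReal.ofReal δ * ENNReal.ofReal δ := (ENNReal.div_mul_cancel hδ0 (by simp)).symm
          _ ≤ D / ENNReal.ofReal δ * μH[1] A := by gcongr
          _ = ∫⁻ z in A, D / ENNReal.ofReal δ ∂μH[1] := (setLIntegral_const _ _).symm
          _ ≤ _ := by
            refine setLIntegral_mono' hAm fun z hz => ?_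
            rw [ENNReal.div_le_iff_le_mul (Or.inl hδ0) (Or.inl (by simp)), mul_comm]
            exact H1 _ (hK ha) _ (hK hc01) z (hA1 z hz).1 hceq.le (hA1 z hz).2
      calc ENNReal.ofReal (v (γ a)) = ENNReal.ofReal ((v (γ a) - v (γ c)) + v (γ c)) := by congr 1; ring
        _ ≤ D + ENNReal.ofReal (v (γ c)) := ENNReal.ofReal_add_le
        _ ≤ ∫⁻ z in A, σ z ∂μH[1] + ∫⁻ z in γ '' Icc c 1, σ z ∂μH[1] := add_le_add hDA hih
        _ = ∫⁻ z in A ∪ γ '' Icc c 1, σ z ∂μH[1] := (lintegral_union hm1 disjoint_sdiff_left).symm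
        _ ≤ _ := by
          refine lintegral_mono_set (union_subset sdiff_subset ?_)
          exact image_mono (Icc_subset_Icc_left hcQ.1.1)
  obtain ⟨n, hn⟩ := exists_nat_gt (1 / τ)
  exact key n 0 (by simp) (by rw [div_lt_iff₀ hτ] at hn; linarith)

theorem keyA (hD : IsDoublingWith μ Cμ) (hCP : 1 ≤ CP) (hlP : 1 ≤ lP) (hPI : WeakPoincare μ 1 CP lP)
    (hS : SmallBalls μ) : ∃ C0 : ℝ, 0 < C0 ∧ ∀ (G E F : Set X), IsDomainWithCompactClosure G →
      IsCompact E → IsCompact F → ∀ S ∈ surfaceSets μ E F G, ∀ (K : Set X) (η : ℝ), 0 < η →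
      (∀ x ∈ K, ball x η ⊆ G) → ∃ δ0 : ℝ, 0 < δ0 ∧ ∀ δ : ℝ, 0 < δ → δ < δ0 → ∀ γ : ℝ → X,
      ContinuousOn γ (Icc 0 1) → InjOn γ (Icc 0 1) → MapsTo γ (Icc 0 1) K → γ 0 ∈ E → γ 1 ∈ F →
      1 ≤ ∫⁻ z in γ '' Icc 0 1, K.indicator (fun z => ENNReal.ofReal C0 *
        ((codimMeas hS).restrict (S ∩ G) (ball z ((2 * lP + 2) * δ)) / μ (ball z δ))) z ∂μH[1] := by
  obtain ⟨C1, hC1, hjump⟩ := jump_bound hD hCP hlP hPI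
  obtain ⟨C2, hC2, hdb⟩ := dbl_const hD 2
  refine ⟨C1 * C2, by positivity, ?_⟩
  rintro G E F ⟨hGo, -, hGc⟩ hE hF S ⟨hSc, -, hSfin, p, hp, q, hq, hEp, hFq, hpq⟩ K η hη hKG
  set W := G \ S
  have hWo : IsOpen W := hGo.sdiff hSc.isClosed
  set U := connectedComponentIn W p
  set V := connectedComponentIn W q
  have hUo : IsOpen U := component_open hD hlP hPI hGc sdiff_subset hWo p
  have hVo : IsOpen V := component_open hD hlP hPI hGc sdiff_subset hWo q
  have hUV : ∀ z ∈ U, z ∉ V := fun z hz hz' =>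
    hpq ((connectedComponentIn_eq hz).trans (connectedComponentIn_eq hz').symm)
  have hfr : frontier U ∩ G ⊆ S := by
    rintro z ⟨hz, hzG⟩
    by_contra hzS
    have hzW : z ∈ W := ⟨hzG, hzS⟩
    have ho := component_open hD hlP hPI hGc sdiff_subset hWo z
    obtain ⟨w, hw1, hw2⟩ := mem_closure_iff.1 hz.1 _ ho (mem_connectedComponentIn hzW)
    have h1 : U = connectedComponentIn W z :=
      (connectedComponentIn_eq hw2).trans (connectedComponentIn_eq hw1).symm
    have h2 : z ∈ U := h1 ▸ mem_connectedComponentIn hzW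
    exact hz.2 (hUo.interior_eq.symm ▸ h2)
  obtain ⟨d1, hd1, hd1U⟩ := hE.exists_thickening_subset_open hUo hEp
  obtain ⟨d2, hd2, hd2V⟩ := hF.exists_thickening_subset_open hVo hFq
  have hl0 : 0 < lP := by linarith
  refine ⟨min d1 (min (d2 / 2) (η / (2 * lP))), by positivity, fun δ hδ hδ0 γ hγ hinj hK h0 h1 => ?_⟩
  simp only [lt_min_iff] at hδ0
  obtain ⟨hδ1, hδ2, hδ3⟩ := hδ0
  rw [lt_div_iff₀ (by positivity)] at hδ3
  have hthick : ∀ (A : Set X) (d : ℝ) (a : X), a ∈ A → ball a d ⊆ thickening d A :=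
    fun A d a ha => ball_subset_thickening ha d
  set v : X → ℝ := fun x => ⨍ y in ball x δ, U.indicator (1 : X → ℝ) y ∂μ
  have hv1 : v (γ 0) = 1 := by
    have hsub : ball (γ 0) δ ⊆ U := (ball_subset_ball hδ1.le).trans ((hthick E d1 _ h0).trans hd1U)
    have hr : μ.real (ball (γ 0) δ) ≠ 0 := (ENNReal.toReal_pos (dbl_pos hD _ hδ).ne' (dbl_lt_top hD _ δ).ne).ne'
    simp only [v]
    rw [setAverage_eq, setIntegral_congr_fun (g := fun _ => (1 : ℝ)) measurableSet_ball
      (fun y hy => by simp [hsub hy])]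
    simp [hr]
  have hv0 : ∀ z ∈ K, dist z (γ 1) ≤ δ → v z ≤ 0 := by
    intro z _ hz
    have hsub : ball z δ ⊆ V := (ball_subset_ball' (by linarith)).trans ((hthick F d2 _ h1).trans hd2V)
    simp only [v]
    rw [setAverage_eq, setIntegral_congr_fun (g := fun _ => (0 : ℝ)) measurableSet_ball
      (fun y hy => indicator_of_notMem (fun h => hUV y h (hsub hy)) _)]
    simp
  have := path_sum (v := v) hδ hγ hinj hK (σ := K.indicator (fun z => ENNReal.ofReal (C1 * C2) *
        ((codimMeas hS).restrict (S ∩ G) (ball z ((2 * lP + 2) * δ)) / μ (ball z δ)))) ?_ hv0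
  · rw [hv1, ENNReal.ofReal_one] at this
    exact this
  intro x hx x' hx' z hz hxx hxz
  have hT : codimOneHausdorff μ (S ∩ G ∩ closedBall x (lP * (2 * δ))) ≤
      (codimMeas hS).restrict (S ∩ G) (ball z ((2 * lP + 2) * δ)) := by
    have hm : MeasurableSet (S ∩ G) := hSc.measurableSet.inter hGo.measurableSet
    rw [← codimMeas_apply hS (hm.inter measurableSet_closedBall), Measure.restrict_apply measurableSet_ball]
    refine measure_mono fun y hy => ⟨?_, hy.1⟩
    have := hy.2
    rw [mem_closedBall] at this
    rw [mem_ball]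
    have := dist_triangle y x z
    nlinarith
  have hTfin : codimOneHausdorff μ (S ∩ G ∩ closedBall x (lP * (2 * δ))) ≠ ⊤ := by
    have hm : MeasurableSet (S ∩ G) := hSc.measurableSet.inter hGo.measurableSet
    rw [← codimMeas_apply hS (hm.inter measurableSet_closedBall)]
    rw [← codimMeas_apply hS hm] at hSfin
    exact ((measure_mono inter_subset_left).trans_lt hSfin.lt_top).ne
  have hj := hjump U _ hUo hTfin x x' δ hδ hxx (by
    rintro y ⟨hy1, hy2⟩
    have : y ∈ G := hKG x hx (closedBall_subset_ball (by linarith) hy2)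
    exact ⟨⟨hfr ⟨hy1, this⟩, this⟩, hy2⟩)
  rw [indicator_of_mem hz]
  have hmu : μ (ball z δ) ≤ ENNReal.ofReal C2 * μ (ball x δ) :=
    (measure_mono (ball_subset_ball' (by rw [dist_comm]; linarith))).trans (hdb x δ hδ)
  have hinv : (μ (ball x δ))⁻¹ ≤ ENNReal.ofReal C2 * (μ (ball z δ))⁻¹ := by
    rw [← div_eq_mul_inv, ENNReal.le_div_iff_mul_le (Or.inl (dbl_pos hD z hδ).ne') (Or.inl (dbl_lt_top hD z δ).ne)]
    calc _ ≤ (μ (ball x δ))⁻¹ * (ENNReal.ofReal C2 * μ (ball x δ)) := by gcongr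
      _ = _ := by rw [mul_left_comm, ENNReal.inv_mul_cancel (dbl_pos hD x hδ).ne' (dbl_lt_top hD x δ).ne, mul_one]
  calc ENNReal.ofReal (v x - v x') ≤ ENNReal.ofReal |v x - v x'| := ENNReal.ofReal_le_ofReal (le_abs_self _)
    _ ≤ _ := hj
    _ ≤ ENNReal.ofReal (C1 * δ) * ((codimMeas hS).restrict (S ∩ G) (ball z ((2 * lP + 2) * δ)) *
        (ENNReal.ofReal C2 * (μ (ball z δ))⁻¹)) := by
      rw [div_eq_mul_inv]
      gcongr
    _ = _ := by
      rw [ENNReal.ofReal_mul hC1.le, ENNReal.ofReal_mul hC1.le, div_eq_mul_inv]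
      ring
end


section
variable {X : Type*} [MetricSpace X] [MeasurableSpace X] [BorelSpace X] {μ : Measure X} {Cμ CP lP : ℝ}

theorem schur {m : Measure X} [SFinite m] {κ : X → X → ℝ≥0∞} (hκ : Measurable (Function.uncurry κ))
    {C : ℝ≥0∞} (h1 : ∀ y, ∫⁻ x, κ x y ∂m ≤ C) (h2 : ∀ x, ∫⁻ y, κ x y ∂m ≤ C)
    {q : ℝ} (hq : 1 < q) {f : X → ℝ≥0∞} (hf : Measurable f) :
    ∫⁻ y, (∫⁻ x, κ x y * f x ∂m) ^ q ∂m ≤ C ^ q * ∫⁻ x, f x ^ q ∂m := by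
  have hq0 : 0 < q := by linarith
  have hc : (q / (q - 1)).HolderConjugate q := (Real.HolderConjugate.conjExponent hq).symm
  have hq'0 : 0 < q / (q - 1) := hc.pos
  have hky : ∀ y, Measurable fun x => κ x y := fun y => hκ.comp (measurable_id.prodMk measurable_const)
  have hkx : ∀ x, Measurable fun y => κ x y := fun x => hκ.comp (measurable_const.prodMk measurable_id)
  have hsum : 1 / (q / (q - 1)) + 1 / q = 1 := by
    have : q - 1 ≠ 0 := by linarith
    field_simp
    ring
  have step : ∀ y, (∫⁻ x, κ x y * f x ∂m) ^ q ≤ C ^ (q - 1) * ∫⁻ x, κ x y * f x ^ q ∂m := by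
    intro y
    have hH := ENNReal.lintegral_mul_le_Lp_mul_Lq m hc
      (f := fun x => κ x y ^ (1 / (q / (q - 1)))) (g := fun x => κ x y ^ (1 / q) * f x)
      ((hky y).pow_const _).aemeasurable (((hky y).pow_const _).mul hf).aemeasurable
    have e1 : ∀ x, κ x y ^ (1 / (q / (q - 1))) * (κ x y ^ (1 / q) * f x) = κ x y * f x := by
      intro x
      rw [← mul_assoc, ← ENNReal.rpow_add_of_nonneg _ _ (by positivity) (by positivity), hsum, ENNReal.rpow_one]
    have e2 : ∀ x, (κ x y ^ (1 / (q / (q - 1)))) ^ (q / (q - 1)) = κ x y := by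
      intro x
      rw [← ENNReal.rpow_mul, one_div_mul_cancel hq'0.ne', ENNReal.rpow_one]
    have e3 : ∀ x, (κ x y ^ (1 / q) * f x) ^ q = κ x y * f x ^ q := by
      intro x
      rw [ENNReal.mul_rpow_of_nonneg _ _ hq0.le, ← ENNReal.rpow_mul, one_div_mul_cancel hq0.ne', ENNReal.rpow_one]
    simp only [Pi.mul_apply, e1, e2, e3] at hH
    calc (∫⁻ x, κ x y * f x ∂m) ^ q ≤ _ := ENNReal.rpow_le_rpow hH hq0.le
      _ = (∫⁻ x, κ x y ∂m) ^ (q - 1) * ∫⁻ x, κ x y * f x ^ q ∂m := by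
        rw [ENNReal.mul_rpow_of_nonneg _ _ hq0.le, ← ENNReal.rpow_mul, ← ENNReal.rpow_mul,
          one_div_mul_cancel hq0.ne', ENNReal.rpow_one]
        congr 2
        field_simp
      _ ≤ _ := by
        gcongr
        exact h1 y
  calc _ ≤ ∫⁻ y, C ^ (q - 1) * ∫⁻ x, κ x y * f x ^ q ∂m ∂m := lintegral_mono step
    _ = C ^ (q - 1) * ∫⁻ y, ∫⁻ x, κ x y * f x ^ q ∂m ∂m := by
      rw [lintegral_const_mul]
      have : Measurable (Function.uncurry fun x y => κ x y * f x ^ q) :=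
        hκ.mul ((hf.comp measurable_fst).pow_const q)
      exact this.lintegral_prod_left'
    _ = C ^ (q - 1) * ∫⁻ x, ∫⁻ y, κ x y * f x ^ q ∂m ∂m := by
      congr 1
      rw [lintegral_lintegral_swap]
      have : Measurable (fun z : X × X => κ z.2 z.1 * f z.2 ^ q) :=
        (hκ.comp measurable_swap).mul ((hf.comp measurable_snd).pow_const q)
      exact this.aemeasurable
    _ ≤ C ^ (q - 1) * ∫⁻ x, C * f x ^ q ∂m := by
      gcongr with x
      rw [lintegral_mul_const _ (hkx x)]
      gcongr
      exact h2 x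
    _ = _ := by
      have : Measurable fun x => f x ^ q := hf.pow_const q
      rw [lintegral_const_mul _ this, ← mul_assoc]
      congr 1
      conv_lhs => rw [← ENNReal.rpow_one C, ← ENNReal.rpow_mul, one_mul,
          ← ENNReal.rpow_add_of_nonneg _ _ (by linarith) zero_le_one, sub_add_cancel]

theorem meas_ball_measurable [SecondCountableTopology X] (ν : Measure X) [SFinite ν] (r : ℝ) :
    Measurable fun x => ν (ball x r) := by
  have hs : MeasurableSet {z : X × X | dist z.2 z.1 < r} :=
    (isOpen_lt (continuous_snd.dist continuous_fst) continuous_const).measurableSet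
  exact measurable_measure_prodMk_left (ν := ν) hs

/-- The averaging kernel. -/
noncomputable def kap (μ : Measure X) (Λ δ : ℝ) (x y : X) : ℝ≥0∞ :=
  (ball x (Λ * δ)).indicator (fun _ => (μ (ball x δ))⁻¹) y

theorem kap_measurable [SecondCountableTopology X] [SFinite μ] (Λ δ : ℝ) :
    Measurable (Function.uncurry (kap μ Λ δ)) := by
  have hs : MeasurableSet {z : X × X | dist z.2 z.1 < Λ * δ} :=
    (isOpen_lt (continuous_snd.dist continuous_fst) continuous_const).measurableSet
  have : Function.uncurry (kap μ Λ δ) =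
      {z : X × X | dist z.2 z.1 < Λ * δ}.indicator (fun z => (μ (ball z.1 δ))⁻¹) := by
    ext ⟨x, y⟩
    rfl
  rw [this]
  exact (((meas_ball_measurable μ δ).comp measurable_fst).inv).indicator hs

theorem kap_bound (hD : IsDoublingWith μ Cμ) {Λ : ℝ} (hΛ : 0 < Λ) : ∃ C : ℝ≥0∞, C ≠ ⊤ ∧ C ≠ 0 ∧ ∀ δ, 0 < δ →
    (∀ y, ∫⁻ x, kap μ Λ δ x y ∂μ ≤ C) ∧ ∀ x, ∫⁻ y, kap μ Λ δ x y ∂μ ≤ C := by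
  obtain ⟨C, hC, h⟩ := dbl_const hD (2 * Λ)
  refine ⟨ENNReal.ofReal C, by simp, by simpa using hC, fun δ hδ => ⟨fun y => ?_, fun x => ?_⟩⟩
  · have hb : ∀ x, kap μ Λ δ x y ≤ (ball y (Λ * δ)).indicator
        (fun _ => ENNReal.ofReal C * (μ (ball y (Λ * δ)))⁻¹) x := by
      intro x
      by_cases hx : y ∈ ball x (Λ * δ)
      · rw [kap, indicator_of_mem hx, indicator_of_mem (mem_ball_comm.1 hx)]
        have h3 : μ (ball y (Λ * δ)) ≤ ENNReal.ofReal C * μ (ball x δ) := by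
          refine le_trans (measure_mono ?_) (h x δ hδ)
          refine ball_subset_ball' ?_
          rw [mem_ball] at hx
          linarith
        have h4 := (dbl_pos hD y (mul_pos hΛ hδ)).ne'
        have h5 := (dbl_lt_top hD y (Λ * δ)).ne
        have h6 := (dbl_pos hD x hδ).ne'
        have h7 := (dbl_lt_top hD x δ).ne
        rw [← div_eq_mul_inv, ENNReal.le_div_iff_mul_le (Or.inl h4) (Or.inl h5), mul_comm, ← div_eq_mul_inv,
          ENNReal.div_le_iff h6 h7]
        exact h3
      · rw [kap, indicator_of_notMem hx]
        exact zero_le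
    refine (lintegral_mono hb).trans ?_
    rw [lintegral_indicator measurableSet_ball, setLIntegral_const, mul_assoc]
    refine (mul_le_mul_right (ENNReal.inv_mul_le_one _) _).trans (by simp)
  · have : ∀ y, kap μ Λ δ x y = (ball x (Λ * δ)).indicator (fun _ => (μ (ball x δ))⁻¹) y := fun y => rfl
    simp only [this]
    rw [lintegral_indicator measurableSet_ball, setLIntegral_const, mul_comm, ← div_eq_mul_inv,
      ENNReal.div_le_iff (dbl_pos hD x hδ).ne' (dbl_lt_top hD x δ).ne]
    refine le_trans (measure_mono (ball_subset_ball ?_)) (h x δ hδ)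
    nlinarith [mul_pos hΛ hδ]

theorem add_rpow_le (q : ℝ) (hq : 0 < q) (a b : ℝ≥0∞) : (a + b) ^ q ≤ 2 ^ q * (a ^ q + b ^ q) := by
  calc (a + b) ^ q ≤ (2 * max a b) ^ q := by
        refine ENNReal.rpow_le_rpow ?_ hq.le
        rw [two_mul]
        exact add_le_add (le_max_left _ _) (le_max_right _ _)
    _ = 2 ^ q * (max a b) ^ q := ENNReal.mul_rpow_of_nonneg _ _ hq.le
    _ ≤ _ := by
        gcongr
        rcases le_total a b with h | h
        · rw [max_eq_right h]; exact le_add_self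
        · rw [max_eq_left h]; exact le_self_add

theorem lint_add_rpow_lt {m : Measure X} {q : ℝ} (hq : 0 < q) {a b : X → ℝ≥0∞} (ha : Measurable a)
    (h1 : ∫⁻ x, a x ^ q ∂m < ⊤) (h2 : ∫⁻ x, b x ^ q ∂m < ⊤) : ∫⁻ x, (a x + b x) ^ q ∂m < ⊤ := by
  calc ∫⁻ x, (a x + b x) ^ q ∂m ≤ ∫⁻ x, 2 ^ q * (a x ^ q + b x ^ q) ∂m :=
        lintegral_mono fun x => add_rpow_le q hq _ _
    _ = 2 ^ q * (∫⁻ x, a x ^ q ∂m + ∫⁻ x, b x ^ q ∂m) := by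
        have : Measurable fun x => a x ^ q := ha.pow_const q
        rw [lintegral_const_mul' _ _ (ENNReal.rpow_ne_top_of_nonneg hq.le (by simp)), lintegral_add_left this]
    _ < ⊤ := ENNReal.mul_lt_top (ENNReal.rpow_lt_top_of_nonneg hq.le (by simp)) (ENNReal.add_lt_top.2 ⟨h1, h2⟩)

end


section
variable {X : Type*} [MetricSpace X] [MeasurableSpace X] [BorelSpace X] {μ : Measure X} {Cμ CP lP : ℝ}

theorem exists_approx {m : Measure X} [IsFiniteMeasure m] {q : ℝ} (hq : 1 < q) {h : X → ℝ} (hh : Measurable h)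
    (hfin : ∫⁻ x, ‖h x‖ₑ ^ q ∂m < ⊤) {ε : ℝ≥0∞} (hε : ε ≠ 0) :
    ∃ f : X → ℝ, Continuous f ∧ ∫⁻ x, ‖h x - f x‖ₑ ^ q ∂m ≤ ε := by
  have hq0 : 0 < q := by linarith
  have hq1 : ENNReal.ofReal q ≠ 0 := by simpa using hq0
  have hML : MemLp h (ENNReal.ofReal q) m := by
    refine ⟨hh.aestronglyMeasurable, ?_⟩
    rw [eLpNorm_eq_lintegral_rpow_enorm_toReal hq1 (by simp), ENNReal.toReal_ofReal hq0.le]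
    exact ENNReal.rpow_lt_top_of_nonneg (by positivity) hfin.ne
  obtain ⟨g, hg, -⟩ := hML.exists_boundedContinuous_eLpNorm_sub_le (by simp) (ε := ε ^ (1 / q))
    (by rw [Ne, ENNReal.rpow_eq_zero_iff_of_pos (by positivity)]; exact hε)
  refine ⟨g, g.continuous, ?_⟩
  rw [eLpNorm_eq_lintegral_rpow_enorm_toReal hq1 (by simp), ENNReal.toReal_ofReal hq0.le] at hg
  exact (ENNReal.rpow_le_rpow_iff (by positivity)).1 hg

theorem keyC_real (hD : IsDoublingWith μ Cμ) {G : Set X} (hG : IsDomainWithCompactClosure G)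
    {Λ : ℝ} (hΛ : 0 < Λ) {q : ℝ} (hq : 1 < q) {h : X → ℝ} (hh : Measurable h)
    (hfin : ∫⁻ x in G, ‖h x‖ₑ ^ q ∂μ < ⊤) :
    ∃ g : X → ℝ≥0∞, Measurable g ∧ ∫⁻ x, g x ^ q ∂μ < ⊤ ∧ ∀ δ0, 0 < δ0 → ∃ δ, 0 < δ ∧ δ < δ0 ∧
      ∀ y ∈ G, ∫⁻ x in G, kap μ Λ δ x y * ‖h x‖ₑ ∂μ ≤ g y := by
  have hsc := dbl_secondCountable hD
  have hsf := dbl_sigmaFinite hD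
  have hlf := dbl_locFin hD
  have hGm : MeasurableSet G := hG.1.measurableSet
  have hGfin : μ G < ⊤ := (measure_mono subset_closure).trans_lt hG.2.2.measure_lt_top
  have hfm : IsFiniteMeasure (μ.restrict G) := ⟨by rwa [Measure.restrict_apply_univ]⟩
  have hq0 : 0 < q := by linarith
  obtain ⟨C, hCt, hC0, hC⟩ := kap_bound hD hΛ
  let A : ℕ → ℝ≥0∞ := fun n => ((2 : ℝ≥0∞) ^ (n + 1)) ^ q * (2 ^ q * (2 * C ^ q))
  have hCq0 : C ^ q ≠ 0 := by rw [Ne, ENNReal.rpow_eq_zero_iff_of_pos hq0]; exact hC0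
  have hCqt : C ^ q ≠ ⊤ := ENNReal.rpow_ne_top_of_nonneg hq0.le hCt
  have h2q0 : (2 : ℝ≥0∞) ^ q ≠ 0 := by rw [Ne, ENNReal.rpow_eq_zero_iff_of_pos hq0]; simp
  have h2qt : (2 : ℝ≥0∞) ^ q ≠ ⊤ := ENNReal.rpow_ne_top_of_nonneg hq0.le (by simp)
  have hA0 : ∀ n, A n ≠ 0 := by
    intro n
    have : ((2 : ℝ≥0∞) ^ (n + 1)) ^ q ≠ 0 := by rw [Ne, ENNReal.rpow_eq_zero_iff_of_pos hq0]; simp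
    simp only [A]
    exact mul_ne_zero this (mul_ne_zero h2q0 (mul_ne_zero (by simp) hCq0))
  have hAt : ∀ n, A n ≠ ⊤ := by
    intro n
    have : ((2 : ℝ≥0∞) ^ (n + 1)) ^ q ≠ ⊤ :=
      ENNReal.rpow_ne_top_of_nonneg hq0.le (ENNReal.pow_ne_top (by simp))
    simp only [A]
    exact ENNReal.mul_ne_top this (ENNReal.mul_ne_top h2qt (ENNReal.mul_ne_top (by simp) hCqt))
  have hex : ∀ n : ℕ, ∃ f : X → ℝ, Continuous f ∧ ∫⁻ x in G, ‖h x - f x‖ₑ ^ q ∂μ ≤ 2⁻¹ ^ n / A n := by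
    intro n
    refine exists_approx hq hh hfin ?_
    rw [Ne, ENNReal.div_eq_zero_iff, not_or]
    exact ⟨pow_ne_zero _ (by simp), hAt n⟩
  choose f hfc hf using hex
  have hex2 : ∀ n : ℕ, ∃ δ : ℝ, 0 < δ ∧ δ < 1 / (n + 1) ∧ ∀ x ∈ G, ∀ y ∈ G, dist x y < Λ * δ → ‖f n x‖ ≤ ‖f n y‖ + 1 := by
    intro n
    have := hG.2.2.uniformContinuousOn_of_continuous (hfc n).continuousOn
    obtain ⟨τ, h1, h2⟩ := Metric.uniformContinuousOn_iff.1 this 1 one_pos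
    have hn : (0 : ℝ) < 1 / (n + 1) := by positivity
    refine ⟨min (τ / Λ) (1 / (n + 1) / 2), by positivity, (min_le_right _ _).trans_lt (by linarith), ?_⟩
    intro x hx y hy hxy
    have h3 : dist x y < τ := by
      refine hxy.trans_le ((mul_le_mul_of_nonneg_left (min_le_left _ _) hΛ.le).trans ?_)
      rw [mul_div_cancel₀ _ hΛ.ne']
    have h4 := h2 x (subset_closure hx) y (subset_closure hy) h3
    rw [dist_eq_norm] at h4
    have := norm_le_norm_add_norm_sub' (f n x) (f n y)
    linarith
  choose δ hδ hδn hδf using hex2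
  let w : ℕ → X → ℝ≥0∞ := fun n x => ‖h x - f n x‖ₑ
  have hw : ∀ n, Measurable (w n) := fun n => (hh.sub (hfc n).measurable).enorm
  let T : ℕ → (X → ℝ≥0∞) → X → ℝ≥0∞ := fun n u y => ∫⁻ x in G, kap μ Λ (δ n) x y * u x ∂μ
  have hT : ∀ n u, Measurable u → Measurable (T n u) := by
    intro n u hu
    have : Measurable (Function.uncurry fun x y => kap μ Λ (δ n) x y * u x) :=
      (kap_measurable Λ (δ n)).mul (hu.comp measurable_fst)
    exact this.lintegral_prod_left'
  have hTb : ∀ n u, Measurable u → ∫⁻ y in G, (T n u y) ^ q ∂μ ≤ C ^ q * ∫⁻ x in G, u x ^ q ∂μ := by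
    intro n u hu
    refine schur (kap_measurable Λ (δ n)) (fun y => ?_) (fun x => ?_) hq hu
    · exact (setLIntegral_le_lintegral _ _).trans ((hC _ (hδ n)).1 y)
    · exact (setLIntegral_le_lintegral _ _).trans ((hC _ (hδ n)).2 x)
  let D : ℕ → X → ℝ≥0∞ := fun n y => T n (w n) y + C * w n y
  have hDm : ∀ n, Measurable (D n) := fun n => (hT n _ (hw n)).add ((hw n).const_mul C)
  have hDint : ∀ n, ((2 : ℝ≥0∞) ^ (n + 1)) ^ q * ∫⁻ x in G, D n x ^ q ∂μ ≤ 2⁻¹ ^ n := by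
    intro n
    have h1 : ∫⁻ x in G, D n x ^ q ∂μ ≤ 2 ^ q * (2 * C ^ q) * ∫⁻ x in G, w n x ^ q ∂μ := by
      calc ∫⁻ x in G, D n x ^ q ∂μ ≤ ∫⁻ x in G, 2 ^ q * (T n (w n) x ^ q + C ^ q * w n x ^ q) ∂μ := by
            refine lintegral_mono fun x => (add_rpow_le q hq0 _ _).trans ?_
            rw [ENNReal.mul_rpow_of_nonneg _ _ hq0.le]
        _ = 2 ^ q * (∫⁻ x in G, T n (w n) x ^ q ∂μ + C ^ q * ∫⁻ x in G, w n x ^ q ∂μ) := by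
            have : Measurable fun x => T n (w n) x ^ q := (hT n _ (hw n)).pow_const q
            rw [lintegral_const_mul' _ _ h2qt, lintegral_add_left this, lintegral_const_mul' _ _ hCqt]
        _ ≤ 2 ^ q * (C ^ q * ∫⁻ x in G, w n x ^ q ∂μ + C ^ q * ∫⁻ x in G, w n x ^ q ∂μ) := by
            gcongr
            exact hTb n _ (hw n)
        _ = _ := by ring
    calc _ ≤ ((2 : ℝ≥0∞) ^ (n + 1)) ^ q * (2 ^ q * (2 * C ^ q) * (2⁻¹ ^ n / A n)) := by
          gcongr
          exact h1.trans (by gcongr; exact hf n)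
      _ = A n * (2⁻¹ ^ n / A n) := by simp only [A]; ring
      _ = _ := ENNReal.mul_div_cancel (hA0 n) (hAt n)
  have hsum := lintegral_tsum_rpow_lt_top (μ := μ.restrict G) hq0 D hDm hDint
  let g : X → ℝ≥0∞ := fun y => (C * ‖h y‖ₑ + C) + ∑' n, D n y
  have hgm1 : Measurable fun y => C * ‖h y‖ₑ := hh.enorm.const_mul C
  have hgm2 : Measurable fun y => C * ‖h y‖ₑ + C := hgm1.add_const C
  have hgm : Measurable g := hgm2.add (Measurable.tsum hDm)
  have hgint : ∫⁻ y in G, g y ^ q ∂μ < ⊤ := by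
    refine lint_add_rpow_lt hq0 hgm2 (lint_add_rpow_lt hq0 hgm1 ?_ ?_) hsum
    · simp only [ENNReal.mul_rpow_of_nonneg _ _ hq0.le]
      rw [lintegral_const_mul' _ _ hCqt]
      exact ENNReal.mul_lt_top hCqt.lt_top hfin
    · rw [setLIntegral_const]
      exact ENNReal.mul_lt_top hCqt.lt_top hGfin
  refine ⟨G.indicator g, hgm.indicator hGm, ?_, fun δ0 hδ0 => ?_⟩
  · have : ∀ x, G.indicator g x ^ q = G.indicator (fun x => g x ^ q) x := by
      intro x
      by_cases hx : x ∈ G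
      · simp [hx]
      · simp [hx, hq0]
    simp only [this]
    rwa [lintegral_indicator hGm]
  obtain ⟨n, hn⟩ := exists_nat_one_div_lt hδ0
  refine ⟨δ n, hδ n, (hδn n).trans hn, fun y hy => ?_⟩
  rw [indicator_of_mem hy]
  have hkm : Measurable fun x => kap μ Λ (δ n) x y :=
    (kap_measurable Λ (δ n)).comp (measurable_id.prodMk measurable_const)
  calc ∫⁻ x in G, kap μ Λ (δ n) x y * ‖h x‖ₑ ∂μ
      ≤ ∫⁻ x in G, kap μ Λ (δ n) x y * w n x + kap μ Λ (δ n) x y * (‖f n y‖ₑ + 1) ∂μ := by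
        refine setLIntegral_mono' hGm fun x hx => ?_
        by_cases hxy : y ∈ ball x (Λ * δ n)
        · rw [← mul_add]
          gcongr
          have h1 : ‖h x‖ₑ ≤ w n x + ‖f n x‖ₑ := by
            have := enorm_add_le (h x - f n x) (f n x)
            rwa [sub_add_cancel] at this
          refine h1.trans ?_
          gcongr
          have h2 := hδf n x hx y hy (by rw [dist_comm]; exact hxy)
          rw [← ofReal_norm, ← ofReal_norm, ← ENNReal.ofReal_one, ← ENNReal.ofReal_add (norm_nonneg _) zero_le_one]
          exact ENNReal.ofReal_le_ofReal h2
        · rw [kap, indicator_of_notMem hxy]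
          simp
    _ = T n (w n) y + (∫⁻ x in G, kap μ Λ (δ n) x y ∂μ) * (‖f n y‖ₑ + 1) := by
        have : Measurable fun x => kap μ Λ (δ n) x y * w n x := hkm.mul (hw n)
        rw [lintegral_add_left this, lintegral_mul_const _ hkm]
    _ ≤ T n (w n) y + C * (‖h y‖ₑ + w n y + 1) := by
        gcongr
        · exact (setLIntegral_le_lintegral _ _).trans ((hC _ (hδ n)).1 y)
        · have := enorm_sub_le (a := h y) (b := h y - f n y)
          rwa [_root_.sub_sub_cancel] at this
    _ = (C * ‖h y‖ₑ + C) + D n y := by simp only [D]; ring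
    _ ≤ g y := by
        simp only [g]
        gcongr
        exact ENNReal.le_tsum n

theorem keyC (hD : IsDoublingWith μ Cμ) {G : Set X} (hG : IsDomainWithCompactClosure G)
    {Λ : ℝ} (hΛ : 0 < Λ) {q : ℝ} (hq : 1 < q) {h : X → ℝ≥0∞} (hh : Measurable h)
    (hfin : ∫⁻ x in G, h x ^ q ∂μ < ⊤) :
    ∃ g : X → ℝ≥0∞, Measurable g ∧ ∫⁻ x, g x ^ q ∂μ < ⊤ ∧ ∀ δ0, 0 < δ0 → ∃ δ, 0 < δ ∧ δ < δ0 ∧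
      ∀ y ∈ G, ∫⁻ x in G, kap μ Λ δ x y * h x ∂μ ≤ g y := by
  have hae : ∀ᵐ x ∂(μ.restrict G), h x = ‖(h x).toReal‖ₑ := by
    filter_upwards [ae_lt_top (hh.pow_const q) hfin.ne] with x hx
    have hx1 : h x ≠ ⊤ := by
      rintro h0
      rw [h0, ENNReal.top_rpow_of_pos (by linarith)] at hx
      exact lt_irrefl _ hx
    rw [Real.enorm_eq_ofReal ENNReal.toReal_nonneg, ENNReal.ofReal_toReal hx1]
  have hfin2 : ∫⁻ x in G, ‖(h x).toReal‖ₑ ^ q ∂μ < ⊤ := by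
    refine lt_of_le_of_lt (le_of_eq (lintegral_congr_ae ?_)) hfin
    filter_upwards [hae] with x hx
    rw [← hx]
  obtain ⟨g, h1, h2, h3⟩ := keyC_real hD hG hΛ hq hh.ennreal_toReal hfin2
  refine ⟨g, h1, h2, fun δ0 hδ0 => ?_⟩
  obtain ⟨δ, a, b, c⟩ := h3 δ0 hδ0
  refine ⟨δ, a, b, fun y hy => le_trans (le_of_eq (lintegral_congr_ae ?_)) (c y hy)⟩
  filter_upwards [hae] with x hx
  rw [← hx]

end


section
variable {X : Type*} [MetricSpace X] [MeasurableSpace X] [BorelSpace X] {μ : Measure X} {Cμ CP lP : ℝ}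

/-- paths whose image lies in `K` -/
def pathFamilyIn (E F G K : Set X) : Set (Measure X) :=
  {ν | ∃ γ : ℝ → X, ContinuousOn γ (Icc 0 1) ∧ InjOn γ (Icc 0 1) ∧
    eVariationOn γ (Icc 0 1) ≠ ⊤ ∧ MapsTo γ (Icc 0 1) K ∧ γ 0 ∈ E ∧ γ 1 ∈ F ∧
    ν = (μH[1]).restrict (γ '' Icc 0 1)}

theorem pathIn_zero (hD : IsDoublingWith μ Cμ) (hCP : 1 ≤ CP) (hlP : 1 ≤ lP) (hPI : WeakPoincare μ 1 CP lP)
    {p : ℝ} (hp : 1 < p) {G E F : Set X} (hG : IsDomainWithCompactClosure G)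
    (hE : IsCompact E) (hF : IsCompact F)
    (hmod : surfModulus μ (p / (p - 1)) (surfaceSets μ E F G) G = ⊤)
    {η : ℝ} (hη : 0 < η) : modulus μ p (pathFamilyIn E F G {x | ball x η ⊆ G}) = 0 := by
  have hsc := dbl_secondCountable hD
  have hsf := dbl_sigmaFinite hD
  have hlf := dbl_locFin hD
  have hGm : MeasurableSet G := hG.1.measurableSet
  have hGfin : μ G < ⊤ := (measure_mono subset_closure).trans_lt hG.2.2.measure_lt_top
  have hGpos : 0 < μ G := by
    obtain ⟨x, hx⟩ := hG.2.1.nonempty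
    obtain ⟨ε, he, hs⟩ := Metric.isOpen_iff.1 hG.1 x hx
    exact (dbl_pos hD x he).trans_le (measure_mono hs)
  have hp0 : 0 < p := by linarith
  have hp1 : 0 < p - 1 := by linarith
  have hq : 1 < p / (p - 1) := by rw [lt_div_iff₀ hp1]; linarith
  have hq0 : 0 < p / (p - 1) := by linarith
  obtain ⟨S0, hS0⟩ : (surfaceSets μ E F G).Nonempty := by
    by_contra hne
    rw [not_nonempty_iff_eq_empty] at hne
    have : surfModulus μ (p / (p - 1)) (surfaceSets μ E F G) G ≤ 0 := by
      refine iInf₂_le_of_le (fun _ => 0) ⟨measurable_const, ?_⟩ ?_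
      · rw [hne]; simp
      · simp [ENNReal.zero_rpow_of_pos hq0]
    rw [hmod] at this
    simp at this
  have hS : SmallBalls μ := smallBalls_of_finite hS0.2.2.1
  set K : Set X := {x | ball x η ⊆ G} with hKdef
  have hKG : K ⊆ G := fun x hx => hx (mem_ball_self hη)
  have hKm : MeasurableSet K := by
    have : Kᶜ = ⋃ y ∈ Gᶜ, ball y η := by
      ext x
      simp only [hKdef, mem_compl_iff, mem_ofPred_eq, not_subset, mem_iUnion, mem_ball, exists_prop]
      constructor
      · rintro ⟨y, h1, h2⟩; exact ⟨y, h2, by rwa [dist_comm]⟩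
      · rintro ⟨y, h1, h2⟩; exact ⟨y, by rwa [dist_comm], h1⟩
    have ho : IsOpen Kᶜ := by rw [this]; exact isOpen_biUnion fun y _ => isOpen_ball
    exact ho.measurableSet.of_compl
  obtain ⟨C0, hC0, hA⟩ := keyA hD hCP hlP hPI hS
  let Λ : ℝ := 2 * lP + 2
  have hΛ : 0 < Λ := by simp only [Λ]; linarith
  let σ : Set X → ℝ → X → ℝ≥0∞ := fun S δ => K.indicator (fun z => ENNReal.ofReal C0 *
    ((codimMeas hS).restrict (S ∩ G) (ball z (Λ * δ)) / μ (ball z δ)))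
  have hSm : ∀ S ∈ surfaceSets μ E F G, MeasurableSet (S ∩ G) := fun S h => h.1.measurableSet.inter hGm
  have hSf : ∀ S ∈ surfaceSets μ E F G, IsFiniteMeasure ((codimMeas hS).restrict (S ∩ G)) := by
    intro S h
    refine ⟨?_⟩
    rw [Measure.restrict_apply_univ, codimMeas_apply hS (hSm S h)]
    exact h.2.2.1.lt_top
  have hσm : ∀ S ∈ surfaceSets μ E F G, ∀ δ, Measurable (σ S δ) := by
    intro S h δ
    have := hSf S h
    exact (((meas_ball_measurable ((codimMeas hS).restrict (S ∩ G)) _).div (meas_ball_measurable μ δ)).const_mul _).indicator hKm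
  have hσp : ∀ S ∈ surfaceSets μ E F G, ∀ δ, 0 < δ → ∫⁻ x, σ S δ x ^ p ∂μ < ⊤ := by
    intro S h δ hδ
    have hfinS := hSf S h
    obtain ⟨C, hC, hCb⟩ := dbl_const hD ((diam G + 1) / δ)
    set ν := (codimMeas hS).restrict (S ∩ G)
    have hinv : ∀ z ∈ K, (μ (ball z δ))⁻¹ ≤ ENNReal.ofReal C / μ G := by
      intro z hz
      have h1 : μ G ≤ ENNReal.ofReal C * μ (ball z δ) := by
        refine le_trans (measure_mono ?_) (hCb z δ hδ)
        intro y hy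
        rw [div_mul_cancel₀ _ hδ.ne', mem_ball]
        have := dist_le_diam_of_mem (hG.2.2.isBounded.subset subset_closure) hy (hKG hz)
        linarith
      rw [ENNReal.le_div_iff_mul_le (Or.inl hGpos.ne') (Or.inl hGfin.ne), mul_comm, ← div_eq_mul_inv,
        ENNReal.div_le_iff (dbl_pos hD z hδ).ne' (dbl_lt_top hD z δ).ne]
      exact h1
    let M : ℝ≥0∞ := ENNReal.ofReal C0 * (ν univ * (ENNReal.ofReal C / μ G))
    have hM : M < ⊤ := by
      refine ENNReal.mul_lt_top (by simp) (ENNReal.mul_lt_top (measure_lt_top _ _) ?_)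
      exact ENNReal.div_lt_top (by simp) hGpos.ne'
    have hb : ∀ x, σ S δ x ^ p ≤ K.indicator (fun _ => M ^ p) x := by
      intro x
      by_cases hx : x ∈ K
      · simp only [σ, indicator_of_mem hx, M]
        rw [div_eq_mul_inv]
        gcongr
        · exact subset_univ _
        · exact hinv x hx
      · simp [σ, indicator_of_notMem hx, hp0]
    refine (lintegral_mono hb).trans_lt ?_
    rw [lintegral_indicator hKm, setLIntegral_const]
    exact ENNReal.mul_lt_top (ENNReal.rpow_lt_top_of_nonneg hp0.le hM.ne) ((measure_mono hKG).trans_lt hGfin)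
  have hadm : ∀ S ∈ surfaceSets μ E F G, ∃ δ0 : ℝ, 0 < δ0 ∧ ∀ δ, 0 < δ → δ < δ0 →
      Admissible (pathFamilyIn E F G K) (σ S δ) := by
    intro S h
    obtain ⟨δ0, hδ0, hk⟩ := hA G E F hG hE hF S h K η hη (fun x hx => hx)
    refine ⟨δ0, hδ0, fun δ h1 h2 => ⟨hσm S h δ, ?_⟩⟩
    rintro ν ⟨γ, g1, g2, -, g4, g5, g6, rfl⟩
    exact hk δ h1 h2 γ g1 g2 g4 g5 g6
  by_contra h0
  have hfin : modulus μ p (pathFamilyIn E F G K) ≠ ⊤ := by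
    obtain ⟨δ0, hδ0, h1⟩ := hadm S0 hS0
    have h2 := h1 (δ0 / 2) (by linarith) (by linarith)
    have h3 : modulus μ p (pathFamilyIn E F G K) ≤ ∫⁻ x, σ S0 (δ0 / 2) x ^ p ∂μ := iInf₂_le _ h2
    exact (h3.trans_lt (hσp S0 hS0 _ (by linarith))).ne
  obtain ⟨h, hhm, hhq, c, hc0, hc⟩ := exists_dual hp h0 hfin
  obtain ⟨g, hgm, hgq, hg⟩ := keyC hD hG hΛ hq hhm ((setLIntegral_le_lintegral _ _).trans_lt hhq)
  have main : ∀ S ∈ surfaceSets μ E F G, c ≤ ENNReal.ofReal C0 * codimIntegral μ (S ∩ G) g := by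
    intro S hSS
    have hfinS := hSf S hSS
    obtain ⟨δ0, hδ0, h1⟩ := hadm S hSS
    obtain ⟨δ, hδ, hδl, hgy⟩ := hg δ0 hδ0
    refine (hc _ (h1 δ hδ hδl) (hσp S hSS δ hδ).ne).trans ?_
    rw [codimIntegral_eq hS (hSm S hSS) hSS.2.2.1 hgm]
    set ν := (codimMeas hS).restrict (S ∩ G) with hν
    have hkm := kap_measurable (μ := μ) Λ δ
    have hpt : ∀ x, h x * σ S δ x ≤ G.indicator (fun x => ENNReal.ofReal C0 * ∫⁻ y, kap μ Λ δ x y * h x ∂ν) x := by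
      intro x
      by_cases hx : x ∈ K
      · rw [indicator_of_mem (hKG hx)]
        simp only [σ, indicator_of_mem hx]
        have : Measurable fun y => kap μ Λ δ x y := hkm.comp (measurable_const.prodMk measurable_id)
        rw [lintegral_mul_const _ this]
        have e : ∫⁻ y, kap μ Λ δ x y ∂ν = ν (ball x (Λ * δ)) / μ (ball x δ) := by
          have : ∀ y, kap μ Λ δ x y = (ball x (Λ * δ)).indicator (fun _ => (μ (ball x δ))⁻¹) y := fun y => rfl
          simp only [this]
          rw [lintegral_indicator measurableSet_ball, setLIntegral_const, mul_comm, ← div_eq_mul_inv]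
        rw [e]
        apply le_of_eq
        ring
      · simp only [σ, indicator_of_notMem hx, mul_zero]
        exact zero_le
    calc ∫⁻ x, h x * σ S δ x ∂μ ≤ ∫⁻ x, G.indicator (fun x => ENNReal.ofReal C0 * ∫⁻ y, kap μ Λ δ x y * h x ∂ν) x ∂μ :=
          lintegral_mono hpt
      _ = ENNReal.ofReal C0 * ∫⁻ x in G, ∫⁻ y, kap μ Λ δ x y * h x ∂ν ∂μ := by
          rw [lintegral_indicator hGm, lintegral_const_mul' _ _ (by simp)]
      _ = ENNReal.ofReal C0 * ∫⁻ y, ∫⁻ x in G, kap μ Λ δ x y * h x ∂μ ∂ν := by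
          congr 1
          rw [lintegral_lintegral_swap]
          have : Measurable (Function.uncurry fun x y => kap μ Λ δ x y * h x) := hkm.mul (hhm.comp measurable_fst)
          exact this.aemeasurable
      _ ≤ _ := by
          gcongr ENNReal.ofReal C0 * ?_
          rw [hν]
          exact setLIntegral_mono' (hSm S hSS) fun y hy => hgy y hy.2
  -- contradiction
  let c1 := min c 1
  have hc1 : c1 ≠ 0 := by simp [c1, hc0]
  have hc1t : c1 ≠ ⊤ := ne_top_of_le_ne_top (by simp) (min_le_right c 1)
  let a : ℝ≥0∞ := ENNReal.ofReal C0 / c1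
  have hat : a ≠ ⊤ := (ENNReal.div_lt_top (by simp) hc1).ne
  have hle : surfModulus μ (p / (p - 1)) (surfaceSets μ E F G) G ≤ ∫⁻ x, (a * g x) ^ (p / (p - 1)) ∂μ := by
    refine iInf₂_le (fun x => a * g x) ⟨hgm.const_mul a, fun S hSS => ?_⟩
    rw [codimIntegral_eq hS (hSm S hSS) hSS.2.2.1 (hgm.const_mul a), lintegral_const_mul' _ _ hat,
      ← codimIntegral_eq hS (hSm S hSS) hSS.2.2.1 hgm]
    have h1 : c1 ≤ ENNReal.ofReal C0 * codimIntegral μ (S ∩ G) g := (min_le_left _ _).trans (main S hSS)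
    have h2 : a * codimIntegral μ (S ∩ G) g = (ENNReal.ofReal C0 * codimIntegral μ (S ∩ G) g) / c1 := by
      simp only [a, div_eq_mul_inv]; ring
    rw [h2, ENNReal.le_div_iff_mul_le (Or.inl hc1) (Or.inl hc1t), one_mul]
    exact h1
  rw [hmod] at hle
  simp only [ENNReal.mul_rpow_of_nonneg _ _ hq0.le] at hle
  have hat2 : a ^ (p / (p - 1)) ≠ ⊤ := ENNReal.rpow_ne_top_of_nonneg hq0.le hat
  rw [lintegral_const_mul' _ _ hat2] at hle
  exact absurd (ENNReal.mul_lt_top hat2.lt_top hgq) (not_lt.2 hle)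

theorem path_cover {E F G : Set X} (hG : IsOpen G) :
    pathFamily E F G ⊆ ⋃ n : ℕ, pathFamilyIn E F G {x | ball x (1 / ((n : ℝ) + 1)) ⊆ G} := by
  rintro ν ⟨γ, g1, g2, g3, g4, g5, g6, rfl⟩
  obtain ⟨ε, he, hs⟩ := (isCompact_Icc.image_of_continuousOn g1).exists_thickening_subset_open hG g4.image_subset
  obtain ⟨n, hn⟩ := exists_nat_one_div_lt he
  refine mem_iUnion.2 ⟨n, γ, g1, g2, g3, fun t ht => ?_, g5, g6, rfl⟩
  intro y hy
  refine hs (mem_thickening_iff.2 ⟨γ t, mem_image_of_mem _ ht, ?_⟩)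
  exact lt_trans hy hn

end

/-- If the dual surface modulus is infinite, the path modulus vanishes. -/
theorem path_modulus_zero_of_surface_modulus_infinite {X : Type*} [MetricSpace X]
    [MeasurableSpace X] [BorelSpace X] [CompleteSpace X] (μ : Measure X) (hBR : BorelRegular μ)
    (Cμ : ℝ) (hCμ : 1 < Cμ) (hD : IsDoublingWith μ Cμ)
    (CP lP : ℝ) (hCP : 1 ≤ CP) (hlP : 1 ≤ lP) (hPI : WeakPoincare μ 1 CP lP)
    (p : ℝ) (hp : 1 < p) (G E F : Set X)
    (hG : IsDomainWithCompactClosure G) (hE : IsNondegContinuum E) (hF : IsNondegContinuum F)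
    (hEG : E ⊆ G) (hFG : F ⊆ G) (hEF : Disjoint E F)
    (hmod : surfModulus μ (p / (p - 1)) (surfaceSets μ E F G) G = ⊤) :
    modulus μ p (pathFamily E F G) = 0 := by
  refine le_antisymm ((modulus_mono (path_cover hG.1)).trans (le_of_eq ?_)) bot_le
  exact modulus_iUnion_zero (by linarith) _ fun n =>
    pathIn_zero hD hCP hlP hPI hp hG hE.1 hF.1 hmod (by positivity)
end

section
/- Let (X, d, μ) be a metric measure space with μ Borel-regular, let 1 < p < ∞, and let 𝓜 be a family of Borel measures on X with mod_p 𝓜 < ∞. Then there is a sequence (ρ_i) of admissible functions for 𝓜 converging in L^p(μ) to a Borel function ρ : X → [0, ∞] that is p-weakly admissible for 𝓜, such that ∫_X ρ_i dν → ∫_X ρ dν < ∞ for p-almost every ν ∈ 𝓜, and ∫_X ρ^p dμ = mod_p 𝓜. -/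
open MeasureTheory Metric Set ENNReal NNReal Filter Topology

theorem aux_real (p : ℝ) (hp : 1 < p) (ε : ℝ) (hε : 0 < ε) :
    ∃ C : ℝ, 0 ≤ C ∧ ∀ s t : ℝ, 0 ≤ s → s ≤ t →
      (t - s) ^ p + C * ((s + t) / 2) ^ p ≤ ε * (s ^ p + t ^ p) + C * ((s ^ p + t ^ p) / 2) := by
  have hp0 : 0 < p := by linarith
  have hpn : p ≠ 0 := hp0.ne'
  have key : ∃ C : ℝ, 0 ≤ C ∧ ∀ s : ℝ, 0 ≤ s → s ≤ 1 →
      (1 - s) ^ p + C * ((s + 1) / 2) ^ p ≤ ε * (s ^ p + 1) + C * ((s ^ p + 1) / 2) := by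
    let F : ℝ → ℝ := fun s => (s ^ p + 1) / 2 - ((s + 1) / 2) ^ p
    let G : ℝ → ℝ := fun s => (1 - s) ^ p - ε * (s ^ p + 1)
    have hc1 : Continuous (fun s : ℝ => s ^ p) := Real.continuous_rpow_const hp0.le
    have hF : Continuous F := by
      have : Continuous (fun s : ℝ => ((s + 1) / 2) ^ p) :=
        hc1.comp (by fun_prop : Continuous (fun s : ℝ => (s + 1) / 2))
      exact ((hc1.add continuous_const).div_const 2).sub this
    have hG : Continuous G := by
      have : Continuous (fun s : ℝ => (1 - s) ^ p) :=
        hc1.comp (by fun_prop : Continuous (fun s : ℝ => 1 - s))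
      exact this.sub (continuous_const.mul (hc1.add continuous_const))
    have hsc := strictConvexOn_rpow hp
    have hF1 : ∀ s : ℝ, 0 ≤ s → s ≠ 1 → 0 < F s := by
      intro s hs hs1
      have := hsc.2 (show s ∈ Ici (0:ℝ) from hs) (show (1:ℝ) ∈ Ici (0:ℝ) by simp) hs1
        (by norm_num : (0:ℝ) < 1/2) (by norm_num : (0:ℝ) < 1/2) (by norm_num)
      simp only [smul_eq_mul, Real.one_rpow] at this
      have e : (1/2 : ℝ) * s + 1/2 * 1 = (s + 1) / 2 := by ring
      rw [e] at this
      simp only [F]; linarith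
    have hF0 : ∀ s : ℝ, 0 ≤ s → 0 ≤ F s := by
      intro s hs
      by_cases h : s = 1
      · subst h; simp [F]
      · exact (hF1 s hs h).le
    let K : Set ℝ := Icc 0 1 ∩ {s | 0 ≤ G s}
    have hK : IsCompact K := isCompact_Icc.inter_right (isClosed_le continuous_const hG)
    suffices ∃ C : ℝ, 0 ≤ C ∧ ∀ s : ℝ, 0 ≤ s → s ≤ 1 → G s ≤ C * F s by
      obtain ⟨C, hC, h⟩ := this
      refine ⟨C, hC, fun s h0 h1 => ?_⟩
      have := h s h0 h1
      simp only [F, G] at this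
      linarith
    by_cases hne : K.Nonempty
    · obtain ⟨x, hxK, hx⟩ := hK.exists_isMinOn hne hF.continuousOn
      have hx1 : x ≠ 1 := by
        rintro rfl
        have h2 : 0 ≤ G 1 := hxK.2
        simp only [G, sub_self, Real.zero_rpow hpn, Real.one_rpow] at h2
        linarith
      have hFx := hF1 x hxK.1.1 hx1
      refine ⟨1 / F x, by positivity, fun s h0 h1 => ?_⟩
      by_cases hGs : 0 ≤ G s
      · have h3 : F x ≤ F s := hx (show s ∈ K from ⟨⟨h0, h1⟩, hGs⟩)
        have h4 : G s ≤ 1 := by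
          have : (1 - s) ^ p ≤ 1 := Real.rpow_le_one (by linarith) (by linarith) hp0.le
          have h5 : 0 ≤ s ^ p := Real.rpow_nonneg h0 p
          have : 0 ≤ ε * (s ^ p + 1) := by positivity
          simp only [G]; linarith
        have : 1 ≤ 1 / F x * F s := by
          rw [one_div, inv_mul_eq_div, one_le_div hFx]; exact h3
        linarith
      · have : 0 ≤ 1 / F x * F s := mul_nonneg (by positivity) (hF0 s h0)
        linarith
    · refine ⟨0, le_rfl, fun s h0 h1 => ?_⟩
      by_contra hcon
      exact hne ⟨s, ⟨h0, h1⟩, by simp only [zero_mul, not_le] at hcon; exact hcon.le⟩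
  obtain ⟨C, hC, h⟩ := key
  refine ⟨C, hC, fun s t hs hst => ?_⟩
  rcases (hs.trans hst).eq_or_lt with h0 | h0
  · have : s = 0 := by linarith
    subst this; rw [← h0]; simp [Real.zero_rpow hpn]
  · have h1 := h (s / t) (by positivity) (by rw [div_le_one h0]; exact hst)
    have hu : 0 ≤ s / t := by positivity
    have htp : 0 < t ^ p := Real.rpow_pos_of_pos h0 p
    have hut : s / t ≤ 1 := by rw [div_le_one h0]; exact hst
    have e1 : (t - s) ^ p = (1 - s / t) ^ p * t ^ p := by
      rw [← Real.mul_rpow (by linarith) h0.le]; congr 1; field_simp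
    have e2 : ((s + t) / 2) ^ p = ((s / t + 1) / 2) ^ p * t ^ p := by
      rw [← Real.mul_rpow (by linarith) h0.le]; congr 1; field_simp
    have e3 : s ^ p = (s / t) ^ p * t ^ p := by
      rw [← Real.mul_rpow hu h0.le]; congr 1; field_simp
    rw [e1, e2, e3]
    have := mul_le_mul_of_nonneg_right h1 htp.le
    nlinarith [this]

theorem aux_ennreal (p : ℝ) (hp : 1 < p) (ε : ℝ≥0) (hε : 0 < ε) :
    ∃ C : ℝ≥0, ∀ s t : ℝ≥0∞,
      (max (s - t) (t - s)) ^ p + C * ((s + t) / 2) ^ p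
        ≤ ε * (s ^ p + t ^ p) + C * ((s ^ p + t ^ p) / 2) := by
  have hp0 : 0 < p := by linarith
  obtain ⟨C, hC, h⟩ := aux_real p hp ε hε
  lift C to ℝ≥0 using hC
  refine ⟨C, ?_⟩
  have main : ∀ s t : ℝ≥0∞, s ≤ t → (max (s - t) (t - s)) ^ p + C * ((s + t) / 2) ^ p
        ≤ ε * (s ^ p + t ^ p) + C * ((s ^ p + t ^ p) / 2) := by
    intro s t hst
    by_cases ht : t = ⊤
    · subst ht
      have : (ε : ℝ≥0∞) ≠ 0 := by exact_mod_cast hε.ne'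
      simp [ENNReal.top_rpow_of_pos hp0, ENNReal.mul_top this]
    have hs : s ≠ ⊤ := ne_top_of_le_ne_top ht hst
    rw [tsub_eq_zero_of_le hst, max_eq_right (zero_le)]
    lift t to ℝ≥0 using ht
    lift s to ℝ≥0 using hs
    have hst' : s ≤ t := by exact_mod_cast hst
    have h2 := h s t s.2 (by exact_mod_cast hst')
    have e2 : ((s : ℝ≥0∞) + t) / 2 = ((s + t) / 2 : ℝ≥0) := by
      rw [ENNReal.coe_div (by norm_num)]; simp
    have e3 : ((s : ℝ≥0∞) ^ p + (t : ℝ≥0∞) ^ p) / 2 = ((s ^ p + t ^ p) / 2 : ℝ≥0) := by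
      rw [ENNReal.coe_div (by norm_num), ENNReal.coe_add, ENNReal.coe_rpow_of_nonneg _ hp0.le, ENNReal.coe_rpow_of_nonneg _ hp0.le]; simp
    rw [e2, e3, ← ENNReal.coe_sub, ← ENNReal.coe_rpow_of_nonneg _ hp0.le,
      ← ENNReal.coe_rpow_of_nonneg _ hp0.le, ← ENNReal.coe_rpow_of_nonneg _ hp0.le,
      ← ENNReal.coe_rpow_of_nonneg _ hp0.le]
    norm_cast
    rw [← NNReal.coe_le_coe]
    push_cast [NNReal.coe_sub hst']
    exact h2
  intro s t
  rcases le_total s t with hst | hst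
  · exact main s t hst
  · have := main t s hst
    rwa [max_comm, add_comm s t, add_comm (s ^ p)]

theorem aux_modulus_le {X : Type*} [MeasurableSpace X] {μ : Measure X} {p : ℝ}
    {M : Set (Measure X)} {f : X → ℝ≥0∞} (hf : Admissible M f) :
    modulus μ p M ≤ ∫⁻ x, f x ^ p ∂μ := iInf₂_le f hf

theorem aux_mid {X : Type*} [MeasurableSpace X]
    {M : Set (Measure X)} {f g : X → ℝ≥0∞} (hf : Admissible M f) (hg : Admissible M g) :
    Admissible M (fun x => (f x + g x) / 2) := by
  refine ⟨(hf.1.add hg.1).div_const 2, fun ν hν => ?_⟩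
  simp only [div_eq_mul_inv]
  have hfg : Measurable fun x => f x + g x := hf.1.add hg.1
  rw [lintegral_mul_const _ hfg, lintegral_add_left hf.1]
  calc (1 : ℝ≥0∞) = (1 + 1) * 2⁻¹ := by
        rw [one_add_one_eq_two, ENNReal.mul_inv_cancel (by norm_num) (by norm_num)]
    _ ≤ _ := by gcongr; exacts [hf.2 ν hν, hg.2 ν hν]

theorem aux_cauchy {X : Type*} [MeasurableSpace X] (μ : Measure X) (p : ℝ) (hp : 1 < p)
    (M : Set (Measure X)) (hM : modulus μ p M ≠ ⊤) (e : ℝ≥0) (he : 0 < e) :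
    ∃ η : ℝ≥0, 0 < η ∧ ∀ f g : X → ℝ≥0∞, Admissible M f → Admissible M g →
      ∫⁻ x, f x ^ p ∂μ ≤ modulus μ p M + η → ∫⁻ x, g x ^ p ∂μ ≤ modulus μ p M + η →
      ∫⁻ x, max (f x - g x) (g x - f x) ^ p ∂μ ≤ e := by
  obtain ⟨m, hm⟩ : ∃ m : ℝ≥0, modulus μ p M = m := ⟨_, (ENNReal.coe_toNNReal hM).symm⟩
  let ε : ℝ≥0 := e / (4 * (m + 1))
  have hε : 0 < ε := by positivity
  obtain ⟨C, hC⟩ := aux_ennreal p hp ε hε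
  let η : ℝ≥0 := min 1 (e / (2 * (C + 1)))
  refine ⟨η, by positivity, fun f g hf hg hfi hgi => ?_⟩
  have hmid := aux_modulus_le (μ := μ) (p := p) (aux_mid hf hg)
  rw [hm] at *
  have hfp : Measurable fun x => f x ^ p := hf.1.pow_const p
  have hgp : Measurable fun x => g x ^ p := hg.1.pow_const p
  have hD : Measurable fun x => max (f x - g x) (g x - f x) ^ p :=
    ((hf.1.sub hg.1).max (hg.1.sub hf.1)).pow_const p
  have hfg : Measurable fun x => f x + g x := hf.1.add hg.1
  have hfgp : Measurable fun x => f x ^ p + g x ^ p := hfp.add hgp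
  have hI := lintegral_mono (μ := μ) (fun x => hC (f x) (g x))
  simp only [div_eq_mul_inv] at hI hmid
  rw [lintegral_add_left hD, lintegral_const_mul _ ((hfg.mul_const _).pow_const p),
    lintegral_add_left (hfgp.const_mul _), lintegral_const_mul _ hfgp,
    lintegral_const_mul _ (hfgp.mul_const _), lintegral_mul_const _ hfgp,
    lintegral_add_left hfp] at hI
  have h2 : ∫⁻ x, max (f x - g x) (g x - f x) ^ p ∂μ + C * m ≤
      ε * ((m + η) + (m + η)) + C * (((m + η) + (m + η)) * 2⁻¹) := by
    refine le_trans (add_le_add_right (mul_le_mul_right hmid _) _) (hI.trans ?_)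
    gcongr
  have h3 : (ε * ((m + η) + (m + η)) + C * (((m + η) + (m + η)) * 2⁻¹) : ℝ≥0∞)
      = ((ε * ((m + η) + (m + η)) + C * η : ℝ≥0) : ℝ≥0∞) + C * m := by
    have : ((m + η : ℝ≥0∞) + (m + η)) * 2⁻¹ = m + η := by
      rw [← two_mul, mul_comm, ← mul_assoc, ENNReal.inv_mul_cancel (by norm_num) (by norm_num), one_mul]
    rw [this]; push_cast; ring
  rw [h3] at h2
  have h4 := ENNReal.le_of_add_le_add_right (by finiteness : (C * m : ℝ≥0∞) ≠ ⊤) h2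
  refine h4.trans ?_
  norm_cast
  have h5 : η ≤ 1 := min_le_left _ _
  have h6 : η ≤ e / (2 * (C + 1)) := min_le_right _ _
  calc ε * ((m + η) + (m + η)) + C * η
      ≤ ε * ((m + 1) + (m + 1)) + (C + 1) * (e / (2 * (C + 1))) := by gcongr; simp
    _ = e := by
      simp only [ε]
      field_simp
      norm_num

theorem aux_null {X : Type*} [MeasurableSpace X] (μ : Measure X) (p : ℝ) (hp : 1 < p)
    (N : Set (Measure X)) (g : X → ℝ≥0∞) (hg : Measurable g) (hfin : ∫⁻ x, g x ^ p ∂μ ≠ ⊤)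
    (hN : ∀ ν ∈ N, ∫⁻ x, g x ∂ν = ⊤) : modulus μ p N = 0 := by
  have hp0 : 0 < p := by linarith
  have h : ∀ n : ℕ, modulus μ p N ≤ ((n : ℝ≥0∞)⁻¹) ^ p * ∫⁻ x, g x ^ p ∂μ := by
    intro n
    have hA : Admissible N (fun x => (n : ℝ≥0∞)⁻¹ * g x) := by
      refine ⟨hg.const_mul _, fun ν hν => ?_⟩
      rw [lintegral_const_mul _ hg, hN ν hν, ENNReal.mul_top (by simp)]
      exact le_top
    refine (aux_modulus_le (μ := μ) (p := p) hA).trans (le_of_eq ?_)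
    simp only [ENNReal.mul_rpow_of_nonneg _ _ hp0.le]
    rw [lintegral_const_mul _ (hg.pow_const p)]
  have ht : Tendsto (fun n : ℕ => ((n : ℝ≥0∞)⁻¹) ^ p * ∫⁻ x, g x ^ p ∂μ) atTop (𝓝 0) := by
    have h1 := ((ENNReal.continuous_rpow_const (y := p)).tendsto 0).comp
      ENNReal.tendsto_inv_nat_nhds_zero
    rw [ENNReal.zero_rpow_of_pos hp0] at h1
    simpa using ENNReal.Tendsto.mul_const h1 (Or.inr hfin)
  exact le_antisymm (ge_of_tendsto' ht h) (zero_le)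

theorem aux_tsum_rpow (p : ℝ) (hp : 1 < p) (a : ℕ → ℝ≥0∞) :
    (∑' i, a i) ^ p ≤ ∑' i, (2 ^ (i + 1) * a i) ^ p := by
  have hp0 : 0 < p := by linarith
  set S := ∑' i, (2 ^ (i + 1) * a i) ^ p with hS
  have h1 : ∀ i, a i ≤ S ^ p⁻¹ * (2⁻¹) ^ (i + 1) := by
    intro i
    have h2 : (2 ^ (i + 1) * a i) ^ p ≤ S := ENNReal.le_tsum i
    have h3 : 2 ^ (i + 1) * a i ≤ S ^ p⁻¹ := by
      rw [ENNReal.le_rpow_inv_iff hp0]; exact h2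
    calc a i = (2 ^ (i + 1) * a i) * (2⁻¹) ^ (i + 1) := by
          rw [mul_right_comm, ← mul_pow, ENNReal.mul_inv_cancel (by norm_num) (by norm_num)]; simp
      _ ≤ _ := by gcongr
  have h4 : ∑' i, a i ≤ S ^ p⁻¹ := by
    calc ∑' i, a i ≤ ∑' i : ℕ, S ^ p⁻¹ * (2⁻¹) ^ (i + 1) := ENNReal.tsum_le_tsum h1
      _ = S ^ p⁻¹ := by
        rw [ENNReal.tsum_mul_left, ENNReal.tsum_geometric_add_one, ENNReal.one_sub_inv_two, inv_inv, ENNReal.inv_mul_cancel (by norm_num) (by norm_num), mul_one]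
  rwa [ENNReal.le_rpow_inv_iff hp0] at h4

/-- Existence of modulus minimizers (Lemma 2.2 of Lohvansuu–Rajala, after Fuglede and Mazur). -/
theorem modulus_minimizer_exists {X : Type*} [MetricSpace X] [MeasurableSpace X]
    (μ : Measure X) (hBR : BorelRegular μ) (p : ℝ) (hp : 1 < p)
    (M : Set (Measure X)) (hM : modulus μ p M ≠ ⊤) :
    ∃ (ρs : ℕ → X → ℝ≥0∞) (ρ : X → ℝ≥0∞),
      (∀ i, Admissible M (ρs i)) ∧ Measurable ρ ∧
      Filter.Tendsto (fun i => ∫⁻ x, max (ρs i x - ρ x) (ρ x - ρs i x) ^ p ∂μ)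
        Filter.atTop (𝓝 0) ∧
      WeaklyAdmissible μ p M ρ ∧
      (∃ N ⊆ M, modulus μ p N = 0 ∧ ∀ ν ∈ M \ N,
        (∫⁻ x, ρ x ∂ν) ≠ ⊤ ∧
        Filter.Tendsto (fun i => ∫⁻ x, ρs i x ∂ν) Filter.atTop (𝓝 (∫⁻ x, ρ x ∂ν))) ∧
      (∫⁻ x, ρ x ^ p ∂μ) = modulus μ p M := by
  have hp0 : 0 < p := by linarith
  set m := modulus μ p M with hm
  -- minimizing sequence
  have hex : ∀ n : ℕ, ∃ f : X → ℝ≥0∞, Admissible M f ∧ ∫⁻ x, f x ^ p ∂μ < m + (n : ℝ≥0∞)⁻¹ := by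
    intro n
    have h1 : m < m + (n : ℝ≥0∞)⁻¹ := ENNReal.lt_add_right hM (by simp)
    rw [hm] at h1
    conv_lhs at h1 => rw [modulus]
    simp only [iInf_lt_iff] at h1
    obtain ⟨f, hf, h⟩ := h1
    exact ⟨f, hf, h⟩
  choose f hfA hfI using hex
  let c : ℕ → ℝ≥0 := fun n => ((2 ^ (n + 1)) ^ p)⁻¹ * 2⁻¹ ^ n
  have hc : ∀ n, 0 < c n := fun n => by
    have : (0 : ℝ≥0) < (2 ^ (n + 1)) ^ p := NNReal.rpow_pos (by positivity)
    simp only [c]; positivity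
  obtain ⟨φ, hφ, hφP⟩ := Filter.extraction_forall_of_eventually'
    (P := fun n k => ∀ j ≥ k, ∫⁻ x, max (f k x - f j x) (f j x - f k x) ^ p ∂μ ≤ c n) (by
      intro n
      obtain ⟨η, hη, h⟩ := aux_cauchy μ p hp M hM (c n) (hc n)
      have h1 : ∀ᶠ k : ℕ in atTop, (k : ℝ≥0∞)⁻¹ < η :=
        ENNReal.tendsto_inv_nat_nhds_zero.eventually_lt_const (by exact_mod_cast hη)
      obtain ⟨K, hK⟩ := eventually_atTop.1 h1
      refine ⟨K, fun k hk j hj => ?_⟩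
      refine h _ _ (hfA k) (hfA j) ((hfI k).le.trans ?_) ((hfI j).le.trans ?_)
      · exact add_le_add_right (hK k hk).le _
      · exact add_le_add_right (hK j (hk.trans hj)).le _)
  let g : ℕ → X → ℝ≥0∞ := fun n => f (φ n)
  have hgA : ∀ n, Admissible M (g n) := fun n => hfA _
  have hgm : ∀ n, Measurable (g n) := fun n => (hfA _).1
  have hgI : Tendsto (fun n => ∫⁻ x, g n x ^ p ∂μ) atTop (𝓝 m) := by
    have h1 : Tendsto (fun n => m + ((φ n : ℕ) : ℝ≥0∞)⁻¹) atTop (𝓝 m) := by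
      have := (ENNReal.tendsto_inv_nat_nhds_zero.comp hφ.tendsto_atTop).const_add m
      simpa using this
    exact tendsto_of_tendsto_of_tendsto_of_le_of_le tendsto_const_nhds h1
      (fun n => aux_modulus_le (hgA n)) (fun n => (hfI _).le)
  let d : ℕ → X → ℝ≥0∞ := fun n x => max (g n x - g (n + 1) x) (g (n + 1) x - g n x)
  have hdm : ∀ n, Measurable (d n) := fun n =>
    ((hgm n).sub (hgm (n + 1))).max ((hgm (n + 1)).sub (hgm n))
  have hdI : ∀ n, ∫⁻ x, d n x ^ p ∂μ ≤ c n := fun n =>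
    hφP n (φ (n + 1)) (hφ.monotone (Nat.le_succ n))
  let h : ℕ → X → ℝ≥0∞ := fun k x => ∑' i, d (i + k) x
  have hhm : ∀ k, Measurable (h k) := fun k => Measurable.ennreal_tsum fun i => hdm _
  let b : ℕ → ℝ≥0∞ := fun n => ∫⁻ x, (2 ^ (n + 1) * d n x) ^ p ∂μ
  have hb : ∀ n, b n ≤ 2⁻¹ ^ n := by
    intro n
    simp only [b, ENNReal.mul_rpow_of_nonneg _ _ hp0.le]
    rw [lintegral_const_mul _ ((hdm n).pow_const p)]
    refine (mul_le_mul_right (hdI n) _).trans (le_of_eq ?_)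
    have h0 : (0 : ℝ≥0) < (2 ^ (n + 1)) ^ p := NNReal.rpow_pos (by positivity)
    have e1 : ((2 : ℝ≥0∞) ^ (n + 1)) ^ p = (((2 ^ (n + 1)) ^ p : ℝ≥0) : ℝ≥0∞) := by
      rw [ENNReal.coe_rpow_of_nonneg _ hp0.le]; push_cast; rfl
    have e2 : ((2 : ℝ≥0∞)⁻¹) ^ n = ((2⁻¹ ^ n : ℝ≥0) : ℝ≥0∞) := by
      rw [ENNReal.coe_pow, ENNReal.coe_inv (by norm_num)]; rfl
    rw [e1, e2, ← ENNReal.coe_mul]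
    congr 1
    simp only [c]
    rw [← mul_assoc, mul_inv_cancel₀ h0.ne', one_mul]
  have hbs : ∑' n, b n ≠ ⊤ := by
    refine ne_top_of_le_ne_top ?_ (ENNReal.tsum_le_tsum hb)
    rw [ENNReal.tsum_geometric, ENNReal.one_sub_inv_two, inv_inv]; norm_num
  have hhI : ∀ k, ∫⁻ x, h k x ^ p ∂μ ≤ ∑' i, b (i + k) := by
    intro k
    rw [← lintegral_tsum (fun i => (((hdm (i + k)).const_mul _).pow_const p).aemeasurable)]
    refine lintegral_mono fun x => ?_
    refine (aux_tsum_rpow p hp _).trans (ENNReal.tsum_le_tsum fun i => ?_)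
    gcongr
    · norm_num
    · omega
  have hh0 : Tendsto (fun k => ∫⁻ x, h k x ^ p ∂μ) atTop (𝓝 0) :=
    tendsto_of_tendsto_of_tendsto_of_le_of_le tendsto_const_nhds
      (ENNReal.tendsto_sum_nat_add b hbs) (fun _ => zero_le) hhI
  -- telescoping
  have tel1 : ∀ k n x, g k x ≤ g (k + n) x + h k x := by
    intro k n x
    have : g k x ≤ g (k + n) x + ∑ i ∈ Finset.range n, d (i + k) x := by
      induction n with
      | zero => simp
      | succ n ih =>
        rw [Finset.sum_range_succ]
        have h1 : g (k + n) x ≤ g (k + (n + 1)) x + d (n + k) x := by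
          rw [← tsub_le_iff_left, add_comm n k]; exact le_max_left _ _
        calc g k x ≤ _ := ih
          _ ≤ (g (k + (n + 1)) x + d (n + k) x) + _ := add_le_add_left h1 _
          _ = _ := by ring
    exact this.trans (add_le_add_right (ENNReal.sum_le_tsum _) _)
  have tel2 : ∀ k n x, g (k + n) x ≤ g k x + h k x := by
    intro k n x
    have : g (k + n) x ≤ g k x + ∑ i ∈ Finset.range n, d (i + k) x := by
      induction n with
      | zero => simp
      | succ n ih =>
        rw [Finset.sum_range_succ]
        have h1 : g (k + (n + 1)) x ≤ g (k + n) x + d (n + k) x := by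
          rw [← tsub_le_iff_left, add_comm n k]; exact le_max_right _ _
        calc _ ≤ _ := h1
          _ ≤ (g k x + ∑ i ∈ Finset.range n, d (i + k) x) + d (n + k) x := add_le_add_left ih _
          _ = _ := by ring
    exact this.trans (add_le_add_right (ENNReal.sum_le_tsum _) _)
  let ρ : X → ℝ≥0∞ := fun x => liminf (fun n => g n x) atTop
  have hρm : Measurable ρ := Measurable.liminf hgm
  have hρ1 : ∀ k x, g k x ≤ ρ x + h k x := by
    intro k x
    rw [← tsub_le_iff_right]
    refine le_liminf_of_le (by isBoundedDefault) ?_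
    filter_upwards [eventually_ge_atTop k] with j hj
    rw [tsub_le_iff_right]
    obtain ⟨n, rfl⟩ := Nat.exists_eq_add_of_le hj
    exact tel1 k n x
  have hρ2 : ∀ k x, ρ x ≤ g k x + h k x := by
    intro k x
    refine (liminf_le_limsup (by isBoundedDefault) (by isBoundedDefault)).trans ?_
    refine limsup_le_of_le (by isBoundedDefault) ?_
    filter_upwards [eventually_ge_atTop k] with j hj
    obtain ⟨n, rfl⟩ := Nat.exists_eq_add_of_le hj
    exact tel2 k n x
  -- the integral of the limit
  have hρI : ∫⁻ x, ρ x ^ p ∂μ = m := by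
    have hcont := ENNReal.continuous_rpow_const (y := 1 / p)
    have ha := (hcont.tendsto m).comp hgI
    have he := (hcont.tendsto 0).comp hh0
    rw [ENNReal.zero_rpow_of_pos (by positivity)] at he
    have key : (∫⁻ x, ρ x ^ p ∂μ) ^ (1 / p) = m ^ (1 / p) := by
      apply le_antisymm
      · have hs := ha.add he
        rw [add_zero] at hs
        refine ge_of_tendsto' hs fun k => ?_
        refine le_trans ?_ (ENNReal.lintegral_Lp_add_le (hgm k).aemeasurable
          (hhm k).aemeasurable hp.le)
        gcongr with x
        exact hρ2 k x
      · have hs := he.const_add ((∫⁻ x, ρ x ^ p ∂μ) ^ (1 / p))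
        rw [add_zero] at hs
        refine le_of_tendsto_of_tendsto' ha hs fun k => ?_
        refine le_trans ?_ (ENNReal.lintegral_Lp_add_le hρm.aemeasurable
          (hhm k).aemeasurable hp.le)
        simp only [Function.comp]
        gcongr with x
        exact hρ1 k x
    exact ENNReal.rpow_left_injective (by positivity : (1 / p) ≠ 0) key
  have hh0fin : ∫⁻ x, h 0 x ^ p ∂μ < ⊤ := (hhI 0).trans_lt (by simpa using hbs.lt_top)
  let N : Set (Measure X) := {ν ∈ M | ∫⁻ x, (h 0 + ρ) x ∂ν = ⊤}
  have hNM : N ⊆ M := fun ν hν => hν.1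
  have hN0 : modulus μ p N = 0 := by
    refine aux_null μ p hp N (h 0 + ρ) ((hhm 0).add hρm) ?_ (fun ν hν => hν.2)
    exact (ENNReal.lintegral_rpow_add_lt_top_of_lintegral_rpow_lt_top (hhm 0).aemeasurable
      hh0fin (by rw [hρI]; exact hM.lt_top) hp.le).ne
  have hlim : ∀ ν ∈ M \ N, (∫⁻ x, ρ x ∂ν) ≠ ⊤ ∧
      Tendsto (fun i => ∫⁻ x, g i x ∂ν) atTop (𝓝 (∫⁻ x, ρ x ∂ν)) := by
    rintro ν ⟨hνM, hνN⟩
    have hne : ∫⁻ x, (h 0 + ρ) x ∂ν ≠ ⊤ := fun hh => hνN ⟨hνM, hh⟩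
    simp only [Pi.add_apply] at hne
    rw [lintegral_add_left (hhm 0)] at hne
    obtain ⟨hne1, hne2⟩ := ENNReal.add_ne_top.1 hne
    refine ⟨hne2, ?_⟩
    have hhν : ∀ k, ∫⁻ x, h k x ∂ν = ∑' i, ∫⁻ x, d (i + k) x ∂ν := fun k =>
      lintegral_tsum (fun i => (hdm (i + k)).aemeasurable)
    have ht : Tendsto (fun k => ∫⁻ x, h k x ∂ν) atTop (𝓝 0) := by
      simp only [hhν]
      refine ENNReal.tendsto_sum_nat_add (fun n => ∫⁻ x, d n x ∂ν) ?_
      rw [hhν 0] at hne1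
      simpa using hne1
    have hup := ht.const_add (∫⁻ x, ρ x ∂ν)
    have hlo := ENNReal.Tendsto.sub (tendsto_const_nhds (x := ∫⁻ x, ρ x ∂ν) (f := atTop)) ht
      (Or.inl hne2)
    rw [add_zero] at hup
    rw [tsub_zero] at hlo
    refine tendsto_of_tendsto_of_tendsto_of_le_of_le hlo hup (fun k => ?_) (fun k => ?_)
    · simp only
      rw [tsub_le_iff_right, ← lintegral_add_left (hgm k)]
      exact lintegral_mono (hρ2 k)
    · simp only
      rw [← lintegral_add_left hρm]
      exact lintegral_mono (hρ1 k)
  refine ⟨g, ρ, hgA, hρm, ?_, ⟨N, hNM, hN0, hρm, fun ν hν => ?_⟩, ⟨N, hNM, hN0, hlim⟩, hρI⟩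
  · refine tendsto_of_tendsto_of_tendsto_of_le_of_le tendsto_const_nhds hh0
      (fun _ => zero_le) (fun k => ?_)
    refine lintegral_mono fun x => ?_
    refine ENNReal.rpow_le_rpow (max_le ?_ ?_) hp0.le
    · rw [tsub_le_iff_left]; exact hρ1 k x
    · rw [tsub_le_iff_left]; exact hρ2 k x
  · exact ge_of_tendsto' (hlim ν hν).2 fun k => (hgA k).2 ν hν.1
end
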